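/- Let F be a field other than the two-element field (i.e. F contains an element x with x ≠ 0 and x ≠ 1), let V be a finite-dimensional F-vector space and V₀ ≤ V a subspace. Let A(V,V₀) be the subgroup of GL(V) consisting of automorphisms g with g(v) = v for all v ∈ V₀, and let A(V ⊕ F, V₀) be the analogous subgroup of GL(V ⊕ F), where V₀ is viewed inside V ⊕ F via the first summand. Then the homomorphism A(V,V₀) → A(V ⊕ F, V₀) extending an automorphism by the identity on the added F-summand induces an isomorphism on H_d(−; ℤ) for all d ≤ dim V − dim V₀ − 1 and a surjection for d = dim V − dim V₀. -/

import Mathlib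

/-! # Group homology via the inhomogeneous bar complex (trivial coefficients) -/

namespace GroupHomologyBar

variable (G : Type) [Group G] (A : Type) [AddCommGroup A]

/-- Inhomogeneous `n`-chains of `G` with coefficients in `A`. -/
abbrev chains (n : ℕ) : Type := (Fin n → G) →₀ A

/-- The differential of the inhomogeneous bar complex with trivial `G`-action on the
coefficients, sending `[g₁|…|g_{n+1}] ⊗ a` to
`[g₂|…|g_{n+1}] ⊗ a + ∑ⱼ (-1)^{j+1} [g₁|…|gⱼg_{j+1}|…|g_{n+1}] ⊗ a`
(the last summand of the sum being `(-1)^{n+1} [g₁|…|g_n] ⊗ a`). -/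
noncomputable def d (n : ℕ) : chains G A (n + 1) →ₗ[ℤ] chains G A n :=
  Finsupp.lsum ℤ fun g =>
    (Finsupp.lsingle (Fin.tail g) : A →ₗ[ℤ] chains G A n)
      + ∑ j : Fin (n + 1),
          ((-1 : ℤ) ^ ((j : ℕ) + 1)) • Finsupp.lsingle (Fin.contractNth j (· * ·) g)

/-- The `n`-cycles. -/
noncomputable def cycles : (n : ℕ) → Submodule ℤ (chains G A n)
  | 0 => ⊤
  | (n + 1) => LinearMap.ker (d G A n)

/-- The `n`-boundaries, viewed as a submodule of the `n`-cycles. -/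
noncomputable def boundaries (n : ℕ) : Submodule ℤ (cycles G A n) :=
  Submodule.comap (cycles G A n).subtype (LinearMap.range (d G A n))

/-- The group homology `H_n(G; A)` of `G` with trivial coefficients in `A`. -/
abbrev Homology (n : ℕ) : Type := cycles G A n ⧸ boundaries G A n

variable {G}
variable {G' : Type} [Group G']

/-- The map on chains induced by a group homomorphism. -/
noncomputable def chainsMap (φ : G →* G') (n : ℕ) : chains G A n →ₗ[ℤ] chains G' A n :=
  Finsupp.lmapDomain A ℤ fun v => φ ∘ v

lemma chainsMap_single (φ : G →* G') {n : ℕ} (v : Fin n → G) (a : A) :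
    chainsMap A φ n (Finsupp.single v a) = Finsupp.single (φ ∘ v) a := by
  simp [chainsMap, Finsupp.mapDomain_single]

lemma d_single {n : ℕ} (g : Fin (n + 1) → G) (a : A) :
    d G A n (Finsupp.single g a)
      = Finsupp.single (Fin.tail g) a
        + ∑ j : Fin (n + 1),
            ((-1 : ℤ) ^ ((j : ℕ) + 1)) • Finsupp.single (Fin.contractNth j (· * ·) g) a := by
  simp [d, Finsupp.lsum_single]

lemma d_chainsMap (φ : G →* G') (n : ℕ) :
    (d G' A n).comp (chainsMap A φ (n + 1)) = (chainsMap A φ n).comp (d G A n) := by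
  apply Finsupp.lhom_ext
  intro g a
  have hc : ∀ j : Fin (n + 1),
      φ ∘ Fin.contractNth j (· * ·) g = Fin.contractNth j (· * ·) (φ ∘ g) := by
    intro j
    funext k
    simp only [Function.comp_apply, Fin.contractNth]
    split_ifs <;> simp
  simp only [LinearMap.comp_apply, chainsMap_single, d_single, map_add, map_sum, map_smul,
    chainsMap_single, Fin.comp_tail, hc]

lemma chainsMap_mem_cycles (φ : G →* G') (n : ℕ) :
    ∀ x ∈ cycles G A n, chainsMap A φ n x ∈ cycles G' A n := by
  intro x hx
  cases n with
  | zero => trivial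
  | succ n =>
    simp only [cycles, LinearMap.mem_ker] at hx ⊢
    have := congrArg (fun L : chains G A (n + 1) →ₗ[ℤ] chains G' A n => L x) (d_chainsMap A φ n)
    simp only [LinearMap.comp_apply] at this
    rw [this, hx, map_zero]

/-- The map on cycles induced by a group homomorphism. -/
noncomputable def cyclesMap (φ : G →* G') (n : ℕ) : cycles G A n →ₗ[ℤ] cycles G' A n :=
  (chainsMap A φ n).restrict (chainsMap_mem_cycles A φ n)

/-- The map `H_n(G; A) → H_n(G'; A)` on group homology induced by a group
homomorphism `φ : G →* G'`. -/
noncomputable def inducedMap (φ : G →* G') (n : ℕ) :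
    Homology G A n →ₗ[ℤ] Homology G' A n :=
  Submodule.mapQ _ _ (cyclesMap A φ n) (by
    rintro ⟨x, hx⟩ hmem
    simp only [boundaries, Submodule.mem_comap, Submodule.subtype_apply,
      LinearMap.mem_range] at hmem ⊢
    obtain ⟨y, hy⟩ := hmem
    refine ⟨chainsMap A φ (n + 1) y, ?_⟩
    have := congrArg (fun L : chains G A (n + 1) →ₗ[ℤ] chains G' A n => L y) (d_chainsMap A φ n)
    simp only [LinearMap.comp_apply] at this
    rw [this, hy]
    rfl)

end GroupHomologyBar

/-- The subgroup `A(V, V₀) ≤ GL(V)` of automorphisms fixing the subspace `V₀` pointwise. -/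
def fixSubgroup (F V : Type) [Field F] [AddCommGroup V] [Module F V] (V₀ : Submodule F V) :
    Subgroup (V ≃ₗ[F] V) where
  carrier := {g | ∀ v ∈ V₀, g v = v}
  one_mem' := fun _ _ => rfl
  mul_mem' := fun {a b} ha hb v hv => by
    rw [show (a * b) v = a (b v) from rfl, hb v hv, ha v hv]
  inv_mem' := fun {a} ha v hv => by
    rw [show (a⁻¹ : V ≃ₗ[F] V) v = a.symm v from rfl]
    conv_lhs => rw [← ha v hv]
    exact a.symm_apply_apply v

/-- The subgroup `A(V ⊕ F, V₀) ≤ GL(V ⊕ F)` of automorphisms fixing pointwise the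
subspace `V₀`, viewed inside `V ⊕ F` via the first summand. -/
def fixSubgroupProd (F V : Type) [Field F] [AddCommGroup V] [Module F V] (V₀ : Submodule F V) :
    Subgroup ((V × F) ≃ₗ[F] (V × F)) where
  carrier := {g | ∀ v ∈ V₀, g (v, 0) = (v, 0)}
  one_mem' := fun _ _ => rfl
  mul_mem' := fun {a b} ha hb v hv => by
    rw [show (a * b) (v, (0 : F)) = a (b (v, 0)) from rfl, hb v hv, ha v hv]
  inv_mem' := fun {a} ha v hv => by
    rw [show (a⁻¹ : (V × F) ≃ₗ[F] (V × F)) (v, (0 : F)) = a.symm (v, 0) from rfl]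
    conv_lhs => rw [← ha v hv]
    exact a.symm_apply_apply (v, 0)

/-- The stabilization homomorphism `A(V, V₀) → A(V ⊕ F, V₀)` extending an automorphism
by the identity on the added summand `F`. -/
def fixStab (F V : Type) [Field F] [AddCommGroup V] [Module F V] (V₀ : Submodule F V) :
    fixSubgroup F V V₀ →* fixSubgroupProd F V V₀ where
  toFun g := ⟨g.1.prodCongr (LinearEquiv.refl F F), fun v hv => by
    rw [LinearEquiv.prodCongr_apply]
    simp [g.2 v hv]⟩
  map_one' := Subtype.ext (LinearEquiv.ext fun x => rfl)
  map_mul' g h := Subtype.ext (LinearEquiv.ext fun x => rfl)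

/-!
Relative homology of a pair of stabilizers `H ≤ K` is computed by the mapping cone of the
complexes of coinvariants of tuples in the ambient group; its vanishing says that `H → K` is an
isomorphism or a surjection on homology in the appropriate degrees.

To make an induction on the degree possible, one fixes vectors *and* linear forms: for a pairing
of `A` with `B`, consider the common stabilizer of `Φ ≤ A` and `Ψ ≤ B`, and the subgroup which
moreover fixes a hyperbolic pair `(e, ε)`. It is obtained by adding first the vector and then the
form, and flipping the pairing exchanges the roles of the two.

The groups act on the vectors of a coset of `Φ` outside `Φ`. The complex of tuples of such vectors
is contractible and its isotropy groups are smaller instances of the same situation, so that every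
relative class comes from an instance with one more vector fixed, once one tuple can be moved to
another: for `w = (1 - t) v₁ + t v₂` with `t ≠ 0, 1`, the boundary of `(v₁, v₂, w, x)` relates
tuples which differ by transvections. Finally, exchanging two hyperbolic pairs is a
product of commutators of elements centralizing the smaller group, again because some `t ≠ 0, 1`
exists, and this makes the classes vanish.
-/

namespace HomologyStability

universe u

open FreeAbelianGroup (of map lift)
open Matrix (vecCons vecHead vecTail)

section FreeAbelianGroup

variable {S T R M : Type*} [AddCommGroup M]

lemma apply_eq_of_eq_on_of {f g : FreeAbelianGroup T →+ M} (h : ∀ x, f (of x) = g (of x))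
    (z : FreeAbelianGroup T) : f z = g z :=
  DFunLike.congr_fun (FreeAbelianGroup.lift_ext f g h) z

lemma freeAbelianGroup_sub_induction {motive : FreeAbelianGroup T → Prop} (zero : motive 0)
    (of : ∀ x, motive (of x)) (sub : ∀ x y, motive x → motive y → motive (x - y))
    (z : FreeAbelianGroup T) : motive z := by
  induction z using FreeAbelianGroup.induction_on with
  | zero => exact zero
  | of x => exact of x
  | neg x hx => simpa using sub 0 _ zero hx
  | add x y hx hy => simpa using sub x (0 - y) hx (sub 0 _ zero hy)

lemma map_map_apply (f : T → S) (g : S → R) (z : FreeAbelianGroup T) :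
    map g (map f z) = map (fun x => g (f x)) z :=
  (FreeAbelianGroup.map_comp_apply z).symm

lemma map_eq_self {f : T → T} (hf : ∀ x, f x = x) (z : FreeAbelianGroup T) : map f z = z := by
  rw [show f = id from funext hf, FreeAbelianGroup.map_id_apply]

end FreeAbelianGroup

section Tuples

variable {E E' : Type*} {n : ℕ}

lemma comp_vecCons (f : E → E') (e : E) (x : Fin n → E) :
    f ∘ vecCons e x = vecCons (f e) (f ∘ x) :=
  Fin.comp_cons f e x

lemma exists_eq_vecCons (x : Fin (n + 1) → E) : ∃ e y, x = vecCons e y :=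
  ⟨vecHead x, vecTail x, (Matrix.cons_head_tail x).symm⟩

lemma forall_vecCons {p : E → Prop} {e : E} {x : Fin n → E} :
    (∀ i, p (vecCons e x i)) ↔ p e ∧ ∀ i, p (x i) := by
  simp [Fin.forall_fin_succ]

lemma comp_smul {S S' : Type*} [SMul S E] [SMul S' E'] {f : E → E'} {s : S} {s' : S'}
    (h : ∀ e, f (s • e) = s' • f e) (x : Fin n → E) : f ∘ (s • x) = s' • (f ∘ x) :=
  funext fun i => h (x i)

/-- The map on chains of tuples which inserts the entry `e` in front: the cone with apex `e`. -/
abbrev consChain (e : E) : FreeAbelianGroup (Fin n → E) →+ FreeAbelianGroup (Fin (n + 1) → E) :=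
  map (vecCons e)

/-- The alternating sum of the faces of a tuple, written recursively; a `1`-tuple is sent to the
empty tuple, so that this is the boundary of the augmented simplicial complex. -/
def tupleBoundary : ∀ n : ℕ, (Fin (n + 1) → E) → FreeAbelianGroup (Fin n → E)
  | 0, _ => of ![]
  | n + 1, x => of (vecTail x) - consChain (vecHead x) (tupleBoundary n (vecTail x))

/-- The linear extension of `tupleBoundary`. Degrees are shifted by one: `n`-tuples sit in
degree `n`, and the empty tuple spans degree `0`. -/
def boundary (n : ℕ) : FreeAbelianGroup (Fin (n + 1) → E) →+ FreeAbelianGroup (Fin n → E) :=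
  lift (tupleBoundary n)

@[simp] lemma boundary_zero (x : Fin 1 → E) : boundary 0 (of x) = of ![] := by
  simp [boundary, tupleBoundary]

@[simp] lemma boundary_succ (e : E) (x : Fin (n + 1) → E) :
    boundary (n + 1) (of (vecCons e x)) = of x - consChain e (boundary n (of x)) := by
  simp [boundary, tupleBoundary]

lemma boundary_zero_consChain (e : E) (z : FreeAbelianGroup (Fin 0 → E)) :
    boundary 0 (consChain e z) = z := by
  refine apply_eq_of_eq_on_of (f := (boundary 0).comp (consChain e)) (g := AddMonoidHom.id _)
    (fun x => ?_) z
  simp [Subsingleton.elim x ![]]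

lemma boundary_consChain (e : E) (z : FreeAbelianGroup (Fin (n + 1) → E)) :
    boundary (n + 1) (consChain e z) = z - consChain e (boundary n z) := by
  refine apply_eq_of_eq_on_of (f := (boundary (n + 1)).comp (consChain e))
    (g := AddMonoidHom.id _ - (consChain e).comp (boundary n)) (fun x => ?_) z
  simp

lemma boundary_boundary (z : FreeAbelianGroup (Fin (n + 2) → E)) :
    boundary n (boundary (n + 1) z) = 0 := by
  refine apply_eq_of_eq_on_of (f := (boundary n).comp (boundary (n + 1))) (g := 0)
    (fun x => ?_) z
  simp only [AddMonoidHom.comp_apply, AddMonoidHom.zero_apply]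
  induction n with
  | zero =>
    obtain ⟨e, x, rfl⟩ := exists_eq_vecCons x
    rw [boundary_succ, map_sub, boundary_zero_consChain, sub_self]
  | succ n ih =>
    obtain ⟨e, x, rfl⟩ := exists_eq_vecCons x
    rw [boundary_succ, map_sub, boundary_consChain, ih 0 x, map_zero, sub_zero, sub_self]

lemma map_comp_consChain (f : E → E') (e : E) (z : FreeAbelianGroup (Fin n → E)) :
    map (f ∘ ·) (consChain e z) = consChain (f e) (map (f ∘ ·) z) := by
  simp only [map_map_apply, comp_vecCons]

lemma boundary_map (f : E → E') (z : FreeAbelianGroup (Fin (n + 1) → E)) :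
    boundary n (map (f ∘ ·) z) = map (f ∘ ·) (boundary n z) := by
  refine apply_eq_of_eq_on_of (f := (boundary n).comp (map (f ∘ ·)))
    (g := (map (f ∘ ·)).comp (boundary n)) (fun x => ?_) z
  simp only [AddMonoidHom.comp_apply, FreeAbelianGroup.map_of_apply]
  clear z
  induction n with
  | zero => simp [Subsingleton.elim (f ∘ ![]) ![]]
  | succ n ih =>
    obtain ⟨e, x, rfl⟩ := exists_eq_vecCons x
    simp only [comp_vecCons, boundary_succ, map_sub, map_comp_consChain, ih,
      FreeAbelianGroup.map_of_apply]

lemma boundary_smul {S : Type*} [SMul S E] (s : S) (z : FreeAbelianGroup (Fin (n + 1) → E)) :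
    boundary n (map (s • ·) z) = map (s • ·) (boundary n z) :=
  boundary_map (s • ·) z

lemma boundary_mem_closure {p : E → Prop} {x : Fin (n + 1) → E} (hx : ∀ i, p (x i)) :
    boundary n (of x) ∈ AddSubgroup.closure (of '' {y : Fin n → E | ∀ i, p (y i)}) := by
  induction n with
  | zero =>
    rw [boundary_zero]
    exact AddSubgroup.subset_closure ⟨_, fun i => i.elim0, rfl⟩
  | succ n ih =>
    obtain ⟨e, x, rfl⟩ := exists_eq_vecCons x
    obtain ⟨he, hx⟩ := forall_vecCons.1 hx
    rw [boundary_succ]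
    refine sub_mem (AddSubgroup.subset_closure ⟨_, hx, rfl⟩) ?_
    have h := AddSubgroup.mem_map_of_mem (consChain e) (ih hx)
    rw [AddMonoidHom.map_closure] at h
    refine AddSubgroup.closure_mono ?_ h
    rintro _ ⟨_, ⟨y, hy, rfl⟩, rfl⟩
    exact ⟨vecCons e y, forall_vecCons.2 ⟨he, hy⟩, by simp⟩

/-- The decomposition of the prism over a tuple into simplices, the bottom face being moved by
`f` and the top face by `g`. -/
def tuplePrism (f g : E → E') : ∀ n : ℕ, (Fin n → E) → FreeAbelianGroup (Fin (n + 1) → E')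
  | 0, _ => 0
  | n + 1, x => of (vecCons (f (vecHead x)) (g ∘ x))
      - consChain (f (vecHead x)) (tuplePrism f g n (vecTail x))

/-- The chain homotopy between the maps induced by `f` and `g`, see `boundary_prism`. -/
def prism (f g : E → E') (n : ℕ) :
    FreeAbelianGroup (Fin n → E) →+ FreeAbelianGroup (Fin (n + 1) → E') :=
  lift (tuplePrism f g n)

@[simp] lemma prism_zero (f g : E → E') (z : FreeAbelianGroup (Fin 0 → E)) :
    prism f g 0 z = 0 := by
  refine apply_eq_of_eq_on_of (f := prism f g 0) (g := 0) (fun x => ?_) z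
  simp [prism, tuplePrism]

@[simp] lemma prism_succ (f g : E → E') (e : E) (x : Fin n → E) :
    prism f g (n + 1) (of (vecCons e x)) =
      of (vecCons (f e) (vecCons (g e) (g ∘ x))) - consChain (f e) (prism f g n (of x)) := by
  simp [prism, tuplePrism, comp_vecCons]

lemma prism_consChain (f g : E → E') (e : E) (z : FreeAbelianGroup (Fin n → E)) :
    prism f g (n + 1) (consChain e z) =
      consChain (f e) (consChain (g e) (map (g ∘ ·) z)) - consChain (f e) (prism f g n z) := by
  refine apply_eq_of_eq_on_of (f := (prism f g (n + 1)).comp (consChain e))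
    (g := (consChain (f e)).comp ((consChain (g e)).comp (map (g ∘ ·)))
      - (consChain (f e)).comp (prism f g n)) (fun x => ?_) z
  simp

lemma boundary_prism (f g : E → E') (z : FreeAbelianGroup (Fin (n + 1) → E)) :
    boundary (n + 1) (prism f g (n + 1) z) + prism f g n (boundary n z)
      = map (g ∘ ·) z - map (f ∘ ·) z := by
  refine apply_eq_of_eq_on_of
    (f := (boundary (n + 1)).comp (prism f g (n + 1)) + (prism f g n).comp (boundary n))
    (g := map (g ∘ ·) - map (f ∘ ·)) (fun x => ?_) z
  simp only [AddMonoidHom.comp_apply, AddMonoidHom.add_apply, AddMonoidHom.sub_apply,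
    FreeAbelianGroup.map_of_apply]
  clear z
  induction n with
  | zero =>
    obtain ⟨e, x, rfl⟩ := exists_eq_vecCons x
    simp [comp_vecCons, Subsingleton.elim (f ∘ x) ![], Subsingleton.elim (g ∘ x) ![]]
  | succ n ih =>
    obtain ⟨e, x, rfl⟩ := exists_eq_vecCons x
    have hg : boundary n (of (g ∘ x)) = map (g ∘ ·) (boundary n (of x)) := by
      rw [← boundary_map, FreeAbelianGroup.map_of_apply]
    have hx := eq_sub_of_add_eq (ih x)
    simp only [prism_succ, boundary_succ, map_sub, boundary_consChain, hx, prism_consChain,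
      comp_vecCons, hg, FreeAbelianGroup.map_of_apply]
    abel

lemma prism_smul {S S' : Type*} [SMul S E] [SMul S' E'] {f g : E → E'} {s : S} {s' : S'}
    (hf : ∀ e, f (s • e) = s' • f e) (hg : ∀ e, g (s • e) = s' • g e) (x : Fin n → E) :
    prism f g n (of (s • x)) = map (s' • ·) (prism f g n (of x)) := by
  induction n with
  | zero => simp
  | succ n ih =>
    obtain ⟨e, x, rfl⟩ := exists_eq_vecCons x
    simp only [Matrix.smul_cons, prism_succ, map_sub, hf, hg, ih, comp_smul hg,
      map_map_apply, FreeAbelianGroup.map_of_apply]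

lemma prism_comp_left {E'' : Type*} (f g : E → E') (k : E' → E'') (x : Fin n → E) :
    prism (k ∘ f) (k ∘ g) n (of x) = map (k ∘ ·) (prism f g n (of x)) := by
  induction n with
  | zero => simp
  | succ n ih =>
    obtain ⟨e, x, rfl⟩ := exists_eq_vecCons x
    simp only [prism_succ, map_sub, ih, FreeAbelianGroup.map_of_apply, map_comp_consChain,
      comp_vecCons, Function.comp_apply, Function.comp_assoc]

end Tuples

section Complexes

/-- Chain complexes of abelian groups in degrees `≥ 0`. Only cycles, boundaries and mapping cones
are needed, and elementwise. -/
structure ChainCx where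
  X : ℕ → Type u
  [addCommGroup : ∀ n, AddCommGroup (X n)]
  d : ∀ n, X (n + 1) →+ X n
  d_d : ∀ n x, d n (d (n + 1) x) = 0

attribute [instance] ChainCx.addCommGroup

/-- Chain maps. -/
structure ChainMap (A B : ChainCx.{u}) where
  f : ∀ n, A.X n →+ B.X n
  comm : ∀ n x, B.d n (f (n + 1) x) = f n (A.d n x)

namespace ChainCx

/-- The cycles of a complex; in degree `0` every chain is a cycle. -/
def cycles (C : ChainCx.{u}) : ∀ n, AddSubgroup (C.X n)
  | 0 => ⊤
  | n + 1 => (C.d n).ker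

/-- The boundaries of a complex. -/
def boundaries (C : ChainCx.{u}) (n : ℕ) : AddSubgroup (C.X n) := (C.d n).range

variable {C : ChainCx.{u}} {n : ℕ}

lemma mem_cycles_zero (x : C.X 0) : x ∈ C.cycles 0 := AddSubgroup.mem_top x

lemma mem_cycles_succ {x : C.X (n + 1)} : x ∈ C.cycles (n + 1) ↔ C.d n x = 0 := Iff.rfl

lemma d_mem_cycles (x : C.X (n + 1)) : C.d n x ∈ C.cycles n := by
  cases n with
  | zero => exact mem_cycles_zero _
  | succ n => exact C.d_d n x

end ChainCx

namespace ChainMap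

variable {A B : ChainCx.{u}} {n : ℕ}

/-- The identity of a complex. -/
protected def id (A : ChainCx.{u}) : ChainMap A A where
  f _ := AddMonoidHom.id _
  comm _ _ := rfl

/-- Composition of chain maps. -/
def comp {C : ChainCx.{u}} (ψ : ChainMap B C) (φ : ChainMap A B) : ChainMap A C where
  f n := (ψ.f n).comp (φ.f n)
  comm n x := (ψ.comm n (φ.f (n + 1) x)).trans (congrArg _ (φ.comm n x))

lemma mem_cycles (φ : ChainMap A B) {x : A.X n} (hx : x ∈ A.cycles n) : φ.f n x ∈ B.cycles n := by
  cases n with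
  | zero => exact ChainCx.mem_cycles_zero _
  | succ n => rw [ChainCx.mem_cycles_succ] at *; rw [φ.comm, hx, map_zero]

lemma mem_boundaries (φ : ChainMap A B) {x : A.X n} (hx : x ∈ A.boundaries n) :
    φ.f n x ∈ B.boundaries n := by
  obtain ⟨y, rfl⟩ := hx
  exact ⟨φ.f _ y, φ.comm n y⟩

/-- The chains homologous to the image of a cycle. -/
def homologyRange (φ : ChainMap A B) (n : ℕ) : AddSubgroup (B.X n) :=
  B.boundaries n ⊔ (A.cycles n).map (φ.f n)

lemma mem_homologyRange {φ : ChainMap A B} {y : B.X n} :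
    y ∈ φ.homologyRange n ↔ ∃ x ∈ A.cycles n, y - φ.f n x ∈ B.boundaries n := by
  rw [homologyRange, AddSubgroup.mem_sup]
  constructor
  · rintro ⟨b, hb, _, ⟨x, hx, rfl⟩, rfl⟩
    exact ⟨x, hx, by rwa [add_sub_cancel_right]⟩
  · rintro ⟨x, hx, hb⟩
    exact ⟨_, hb, _, ⟨x, hx, rfl⟩, sub_add_cancel _ _⟩

lemma map_mem_homologyRange (φ : ChainMap A B) {x : A.X n} (hx : x ∈ A.cycles n) :
    φ.f n x ∈ φ.homologyRange n :=
  AddSubgroup.mem_sup_right ⟨x, hx, rfl⟩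

lemma boundaries_le_homologyRange (φ : ChainMap A B) : B.boundaries n ≤ φ.homologyRange n :=
  le_sup_left

end ChainMap

/-- The groups of the mapping cone of a chain map `A → B`. -/
def ConeX (A B : ChainCx.{u}) : ℕ → Type u
  | 0 => B.X 0
  | n + 1 => B.X (n + 1) × A.X n

instance (A B : ChainCx.{u}) : ∀ n, AddCommGroup (ConeX A B n)
  | 0 => inferInstanceAs (AddCommGroup (B.X 0))
  | n + 1 => inferInstanceAs (AddCommGroup (B.X (n + 1) × A.X n))

section MappingCone

variable {A B A' B' : ChainCx.{u}} (φ : ChainMap A B) {φ' : ChainMap A' B'} {n : ℕ}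

/-- The differential `(b, a) ↦ (d b - φ a, - d a)` of the mapping cone. -/
def coneD : ∀ n, ConeX A B (n + 1) →+ ConeX A B n
  | 0 => ((B.d 0).comp (AddMonoidHom.fst (B.X 1) (A.X 0)) -
      (φ.f 0).comp (AddMonoidHom.snd (B.X 1) (A.X 0)) : B.X 1 × A.X 0 →+ B.X 0)
  | n + 1 => (((B.d (n + 1)).comp (AddMonoidHom.fst (B.X (n + 2)) (A.X (n + 1))) -
      (φ.f (n + 1)).comp (AddMonoidHom.snd (B.X (n + 2)) (A.X (n + 1)))).prod
      (-(A.d n).comp (AddMonoidHom.snd (B.X (n + 2)) (A.X (n + 1)))) :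
        B.X (n + 2) × A.X (n + 1) →+ B.X (n + 1) × A.X n)

/-- The mapping cone of a chain map, whose homology is the relative homology of the map. -/
def mappingCone : ChainCx.{u} where
  X := ConeX A B
  d := coneD φ
  d_d n x := by
    cases n with
    | zero =>
      change B.d 0 (B.d 1 x.1 - φ.f 1 x.2) - φ.f 0 (-(A.d 0 x.2)) = 0
      rw [map_sub, B.d_d, φ.comm, map_neg]; abel
    | succ n =>
      change (B.d (n + 1) (B.d (n + 2) x.1 - φ.f (n + 2) x.2) - φ.f (n + 1) (-(A.d (n + 1) x.2)),
        -(A.d n (-(A.d (n + 1) x.2)))) = ((0 : B.X (n + 1)), (0 : A.X n))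
      rw [map_sub, B.d_d, φ.comm, map_neg, map_neg, A.d_d]
      simp

/-- The element of the mapping cone in degree `0` given by a chain of the target. -/
def coneMk₀ (b : B.X 0) : (mappingCone φ).X 0 := b

/-- The element of the mapping cone in positive degree with the given components. -/
def coneMk (b : B.X (n + 1)) (a : A.X n) : (mappingCone φ).X (n + 1) := (b, a)

variable {φ} in
lemma exists_eq_coneMk (x : (mappingCone φ).X (n + 1)) : ∃ b a, x = coneMk φ b a :=
  ⟨x.1, x.2, rfl⟩

variable {φ} in
lemma coneMk_inj {b b' : B.X (n + 1)} {a a' : A.X n} :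
    coneMk φ b a = coneMk φ b' a' ↔ b = b' ∧ a = a' := Prod.mk_inj

lemma coneMk_sub (b b' : B.X (n + 1)) (a a' : A.X n) :
    coneMk φ b a - coneMk φ b' a' = coneMk φ (b - b') (a - a') := rfl

lemma coneMk_zero : coneMk φ (0 : B.X (n + 1)) (0 : A.X n) = 0 := rfl

lemma mappingCone_d_zero (b : B.X 1) (a : A.X 0) :
    (mappingCone φ).d 0 (coneMk φ b a) = coneMk₀ φ (B.d 0 b - φ.f 0 a) := rfl

lemma mappingCone_d_succ (b : B.X (n + 2)) (a : A.X (n + 1)) :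
    (mappingCone φ).d (n + 1) (coneMk φ b a) =
      coneMk φ (B.d (n + 1) b - φ.f (n + 1) a) (-A.d n a) := rfl

lemma coneMk_mem_cycles {b : B.X (n + 1)} {a : A.X n} :
    coneMk φ b a ∈ (mappingCone φ).cycles (n + 1) ↔ B.d n b = φ.f n a ∧ a ∈ A.cycles n := by
  rw [ChainCx.mem_cycles_succ]
  cases n with
  | zero => exact sub_eq_zero.trans (and_iff_left (ChainCx.mem_cycles_zero a)).symm
  | succ n =>
    rw [mappingCone_d_succ, ← coneMk_zero, coneMk_inj, sub_eq_zero, neg_eq_zero]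
    rfl

variable {φ} in
/-- The chain map of mapping cones induced by a commutative square. -/
def coneMap (fa : ChainMap A A') (fb : ChainMap B B')
    (comm : ∀ n x, fb.f n (φ.f n x) = φ'.f n (fa.f n x)) :
    ChainMap (mappingCone φ) (mappingCone φ') where
  f
    | 0 => fb.f 0
    | n + 1 => (AddMonoidHom.prodMap (fb.f (n + 1)) (fa.f n) :
        B.X (n + 1) × A.X n →+ B'.X (n + 1) × A'.X n)
  comm n x := by
    cases n with
    | zero =>
      change B'.d 0 (fb.f 1 x.1) - φ'.f 0 (fa.f 0 x.2) = fb.f 0 (B.d 0 x.1 - φ.f 0 x.2)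
      rw [map_sub, fb.comm, comm]
    | succ n =>
      change (B'.d (n + 1) (fb.f (n + 2) x.1) - φ'.f (n + 1) (fa.f (n + 1) x.2),
        -(A'.d n (fa.f (n + 1) x.2))) = (fb.f (n + 1) (B.d (n + 1) x.1 - φ.f (n + 1) x.2),
          fa.f n (-(A.d n x.2)))
      rw [map_sub, fb.comm, comm, map_neg, fa.comm]

variable {φ} {fa : ChainMap A A'} {fb : ChainMap B B'}

lemma coneMap_coneMk (comm : ∀ n x, fb.f n (φ.f n x) = φ'.f n (fa.f n x)) (b : B.X (n + 1))
    (a : A.X n) :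
    (coneMap fa fb comm).f (n + 1) (coneMk φ b a) = coneMk φ' (fb.f (n + 1) b) (fa.f n a) := rfl

variable {ga : ChainMap A A'} {gb : ChainMap B B'}
  {hf : ∀ n x, fb.f n (φ.f n x) = φ'.f n (fa.f n x)}
  {hg : ∀ n x, gb.f n (φ.f n x) = φ'.f n (ga.f n x)}

lemma coneMap_congr (hA : ∀ n x, fa.f n x = ga.f n x) (hB : ∀ n x, fb.f n x = gb.f n x)
    (z : (mappingCone φ).X n) : (coneMap fa fb hf).f n z = (coneMap ga gb hg).f n z := by
  cases n with
  | zero => exact hB 0 z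
  | succ n => exact coneMk_inj.2 ⟨hB _ z.1, hA _ z.2⟩

lemma coneMap_eq_self {fa : ChainMap A A} {fb : ChainMap B B}
    {hf : ∀ n x, fb.f n (φ.f n x) = φ.f n (fa.f n x)} (hA : ∀ n x, fa.f n x = x)
    (hB : ∀ n x, fb.f n x = x) (z : (mappingCone φ).X n) : (coneMap fa fb hf).f n z = z := by
  cases n with
  | zero => exact hB 0 z
  | succ n => exact coneMk_inj.2 ⟨hB _ z.1, hA _ z.2⟩

lemma coneMap_sub {ka : ChainMap A A'} {kb : ChainMap B B'}
    {hk : ∀ n x, kb.f n (φ.f n x) = φ'.f n (ka.f n x)}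
    (hA : ∀ n x, fa.f n x - ga.f n x = ka.f n x) (hB : ∀ n x, fb.f n x - gb.f n x = kb.f n x)
    (z : (mappingCone φ).X n) :
    (coneMap fa fb hf).f n z - (coneMap ga gb hg).f n z = (coneMap ka kb hk).f n z := by
  cases n with
  | zero => exact hB 0 z
  | succ n => exact coneMk_inj.2 ⟨hB _ z.1, hA _ z.2⟩

lemma coneMap_surjective (hA : ∀ n, Function.Surjective (fa.f n))
    (hB : ∀ n, Function.Surjective (fb.f n)) (n : ℕ) :
    Function.Surjective ((coneMap fa fb hf).f n) := by
  cases n with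
  | zero => exact hB 0
  | succ n => exact (hB (n + 1)).prodMap (hA n)

lemma coneMap_exact {A'' B'' : ChainCx.{u}} {φ'' : ChainMap A'' B''} {ka : ChainMap A' A''}
    {kb : ChainMap B' B''} {hk : ∀ n x, kb.f n (φ'.f n x) = φ''.f n (ka.f n x)}
    (hA : ∀ n x, ka.f n x = 0 → ∃ y, fa.f n y = x) (hB : ∀ n x, kb.f n x = 0 → ∃ y, fb.f n y = x)
    {z : (mappingCone φ').X n} (hz : (coneMap ka kb hk).f n z = 0) :
    ∃ y, (coneMap fa fb hf).f n y = z := by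
  cases n with
  | zero => exact hB 0 z hz
  | succ n =>
    obtain ⟨b, a, rfl⟩ := exists_eq_coneMk z
    rw [coneMap_coneMk, ← coneMk_zero, coneMk_inj] at hz
    obtain ⟨b', rfl⟩ := hB _ _ hz.1
    obtain ⟨a', rfl⟩ := hA _ _ hz.2
    exact ⟨coneMk φ b' a', rfl⟩

end MappingCone

/-- Chain homotopies from `f` to `g`. -/
structure ChainHomotopy {A B : ChainCx.{u}} (f g : ChainMap A B) where
  h : ∀ n, A.X n →+ B.X (n + 1)
  d_h_zero : ∀ x, B.d 0 (h 0 x) = g.f 0 x - f.f 0 x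
  d_h_succ : ∀ n x, B.d (n + 1) (h (n + 1) x) + h n (A.d n x) = g.f (n + 1) x - f.f (n + 1) x

lemma ChainHomotopy.sub_eq_d {A B : ChainCx.{u}} {f g : ChainMap A B} (H : ChainHomotopy f g)
    {n : ℕ} {x : A.X n} (hx : x ∈ A.cycles n) : g.f n x - f.f n x = B.d n (H.h n x) := by
  cases n with
  | zero => rw [H.d_h_zero]
  | succ n => rw [← H.d_h_succ, ChainCx.mem_cycles_succ.1 hx, map_zero, add_zero]

lemma coneMap_sub_coneMap_mem_boundaries {A B A' B' : ChainCx.{u}} {φ : ChainMap A B}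
    {φ' : ChainMap A' B'} {fa ga : ChainMap A A'} {fb gb : ChainMap B B'}
    (hf : ∀ n x, fb.f n (φ.f n x) = φ'.f n (fa.f n x))
    (hg : ∀ n x, gb.f n (φ.f n x) = φ'.f n (ga.f n x))
    (HA : ChainHomotopy fa ga) (HB : ChainHomotopy fb gb)
    (hH : ∀ n x, HB.h n (φ.f n x) = φ'.f (n + 1) (HA.h n x)) {n : ℕ} {x : (mappingCone φ).X n}
    (hx : x ∈ (mappingCone φ).cycles n) :
    (coneMap ga gb hg).f n x - (coneMap fa fb hf).f n x ∈ (mappingCone φ').boundaries n := by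
  cases n with
  | zero =>
    refine ⟨coneMk φ' (HB.h 0 x) 0, ?_⟩
    rw [mappingCone_d_zero, map_zero, sub_zero]
    exact HB.d_h_zero x
  | succ n =>
    obtain ⟨b, a, rfl⟩ := exists_eq_coneMk x
    rw [coneMk_mem_cycles] at hx
    refine ⟨coneMk φ' (HB.h (n + 1) b) (-HA.h n a), ?_⟩
    rw [mappingCone_d_succ, coneMap_coneMk, coneMap_coneMk, coneMk_sub, coneMk_inj]
    constructor
    · rw [← HB.d_h_succ, hx.1, hH, map_neg]; abel
    · rw [HA.sub_eq_d hx.2, map_neg, neg_neg]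

lemma coneMap_sub_add_mem_boundaries {A B A' B' : ChainCx.{u}} {φ : ChainMap A B}
    {φ' : ChainMap A' B'} {fa ga : ChainMap A A'} {fb gb : ChainMap B B'}
    (hf : ∀ n x, fb.f n (φ.f n x) = φ'.f n (fa.f n x))
    (hg : ∀ n x, gb.f n (φ.f n x) = φ'.f n (ga.f n x))
    (HA : ChainHomotopy fa ga) (hB : ∀ n x, fb.f n x = gb.f n x) {n : ℕ} {b : B.X (n + 1)}
    {a : A.X n} (ha : a ∈ A.cycles n) :
    (coneMap ga gb hg).f (n + 1) (coneMk φ b a) - (coneMap fa fb hf).f (n + 1) (coneMk φ b a)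
      + coneMk φ' (φ'.f (n + 1) (HA.h n a)) 0 ∈ (mappingCone φ').boundaries (n + 1) := by
  refine ⟨coneMk φ' 0 (-HA.h n a), ?_⟩
  rw [mappingCone_d_succ, coneMap_coneMk, coneMap_coneMk, coneMk_sub, HA.sub_eq_d ha, hB, sub_self,
    map_neg, map_neg, map_zero]
  exact coneMk_inj.2 ⟨(zero_sub _).trans ((neg_neg _).trans (zero_add _).symm),
    (neg_neg _).trans (add_zero _).symm⟩

section DoubleComplex

variable {M : ℕ → ChainCx.{u}} {δ : ∀ p, ChainMap (M (p + 1)) (M p)}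

lemma exists_cycle_lift_of_exact_rows (δ_δ : ∀ p q x, (δ p).f q ((δ (p + 1)).f q x) = 0)
    (exact : ∀ p q x, (δ p).f q x = 0 → ∃ y, (δ (p + 1)).f q y = x) {n : ℕ}
    (hcycles : ∀ p q, p + q + 1 = n → (M (p + 2)).cycles q ≤ (δ (p + 2)).homologyRange q)
    {p q : ℕ} (hpq : p + q = n) {x : (M (p + 1)).X q} (hx : (δ p).f q x ∈ (M p).cycles q) :
    ∃ x' ∈ (M (p + 1)).cycles q, (δ p).f q x' = (δ p).f q x := by
  induction q generalizing p with
  | zero => exact ⟨x, ChainCx.mem_cycles_zero x, rfl⟩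
  | succ q ih =>
    rw [ChainCx.mem_cycles_succ, (δ p).comm] at hx
    obtain ⟨w, hw⟩ := exact _ _ _ hx
    obtain ⟨w', hw'c, hw'⟩ := ih (p := p + 1) (by lia) (x := w) (hw ▸ ChainCx.d_mem_cycles x)
    obtain ⟨e, _, b, hb⟩ := ChainMap.mem_homologyRange.1 (hcycles p q (by lia) hw'c)
    refine ⟨x - (δ (p + 1)).f _ b, ?_, by rw [map_sub, δ_δ, sub_zero]⟩
    rw [ChainCx.mem_cycles_succ, map_sub, (δ (p + 1)).comm, ← hw, ← hw', hb, map_sub, δ_δ,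
      sub_zero, sub_self]

lemma cycles_le_map_cycles_of_exact_rows (δ_δ : ∀ p q x, (δ p).f q ((δ (p + 1)).f q x) = 0)
    (surj : ∀ q x, ∃ y, (δ 0).f q y = x)
    (exact : ∀ p q x, (δ p).f q x = 0 → ∃ y, (δ (p + 1)).f q y = x) {n : ℕ}
    (hcycles : ∀ p q, p + q + 1 = n → (M (p + 2)).cycles q ≤ (δ (p + 2)).homologyRange q) :
    (M 0).cycles n ≤ ((M 1).cycles n).map ((δ 0).f n) := by
  intro x hx
  obtain ⟨y, rfl⟩ := surj n x
  exact exists_cycle_lift_of_exact_rows δ_δ exact hcycles (zero_add n) hx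

end DoubleComplex

end Complexes

section GroupSets

variable {G : Type u} [Group G]

lemma apply₂_eq_of_eq_on_of {T U M : Type*} [AddCommGroup M]
    {f g : FreeAbelianGroup T →+ FreeAbelianGroup U →+ M}
    (h : ∀ x y, f (of x) (of y) = g (of x) (of y)) (z : FreeAbelianGroup T)
    (w : FreeAbelianGroup U) : f z w = g z w :=
  DFunLike.congr_fun
    (apply_eq_of_eq_on_of (fun x => FreeAbelianGroup.lift_ext _ _ (h x)) z) w

variable (G) in
/-- A subgroup `H` of an ambient group together with an `H`-set `Y`. It stands for the group `H`
with coefficients in the permutation module `ℤ[Y]`. -/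
structure GroupSet where
  H : Subgroup G
  Y : Type u
  [action : MulAction H Y]

attribute [instance] GroupSet.action

namespace GroupSet

variable {S T : GroupSet G} {n m : ℕ} {M : Type*} [AddCommGroup M]

/-- The `H`-orbits of pairs consisting of an `n`-tuple of elements of the ambient group and an
element of `Y`. They form a basis of the coinvariants of `ℤ[Gⁿ] ⊗ ℤ[Y]`. -/
def Orbits (S : GroupSet G) (n : ℕ) : Type u :=
  MulAction.orbitRel.Quotient S.H ((Fin n → G) × S.Y)

/-- The orbit of a pair. -/
def orbit (S : GroupSet G) (t : Fin n → G) (y : S.Y) : S.Orbits n :=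
  Quotient.mk (MulAction.orbitRel S.H ((Fin n → G) × S.Y)) (t, y)

lemma orbit_smul (h : S.H) (t : Fin n → G) (y : S.Y) : S.orbit (h • t) (h • y) = S.orbit t y :=
  Quotient.sound ⟨h, rfl⟩

lemma exists_eq_orbit (q : S.Orbits n) : ∃ t y, q = S.orbit t y := by
  induction q using Quotient.ind with
  | _ a => exact ⟨a.1, a.2, rfl⟩

/-- The bilinear map `ℤ[Gⁿ] × ℤ[Y] → (ℤ[Gⁿ] ⊗ ℤ[Y])_H`. -/
def tensor (S : GroupSet G) :
    FreeAbelianGroup (Fin n → G) →+ FreeAbelianGroup S.Y →+ FreeAbelianGroup (S.Orbits n) :=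
  lift fun t => lift fun y => of (S.orbit t y)

@[simp] lemma tensor_of (t : Fin n → G) (y : S.Y) :
    S.tensor (of t) (of y) = of (S.orbit t y) := by
  simp [tensor]

lemma tensor_smul (h : S.H) (u : FreeAbelianGroup (Fin n → G)) (w : FreeAbelianGroup S.Y) :
    S.tensor (map (h • ·) u) (map (h • ·) w) = S.tensor u w := by
  refine apply₂_eq_of_eq_on_of (g := S.tensor (n := n))
    (f := (S.tensor.comp (map (h • ·))).compl₂ (map (h • ·))) (fun t y => ?_) u w
  simp [AddMonoidHom.compl₂_apply, orbit_smul]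

lemma apply_eq_of_eq_on_tensor {f g : FreeAbelianGroup (S.Orbits n) →+ M}
    (h : ∀ t y, f (S.tensor (of t) (of y)) = g (S.tensor (of t) (of y)))
    (x : FreeAbelianGroup (S.Orbits n)) : f x = g x := by
  refine apply_eq_of_eq_on_of (fun q => ?_) x
  obtain ⟨t, y, rfl⟩ := exists_eq_orbit q
  simpa using h t y

/-- The homomorphism out of the coinvariants given by an invariant function. -/
def descend (S : GroupSet G) (φ : (Fin n → G) → S.Y → M)
    (hφ : ∀ (h : S.H) t y, φ (h • t) (h • y) = φ t y) : FreeAbelianGroup (S.Orbits n) →+ M :=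
  lift (Quotient.lift (fun p => φ p.1 p.2) (by rintro _ b ⟨h, rfl⟩; exact hφ h b.1 b.2))

@[simp] lemma descend_of (φ : (Fin n → G) → S.Y → M)
    (hφ : ∀ (h : S.H) t y, φ (h • t) (h • y) = φ t y) (t : Fin n → G) (y : S.Y) :
    S.descend φ hφ (of (S.orbit t y)) = φ t y :=
  FreeAbelianGroup.lift_apply_of _ _

/-- The homomorphism `Θ ⊗ Ω` on coinvariants, for `Θ` and `Ω` equivariant along `θ`. -/
def tensorMap (θ : S.H → T.H) (Θ : FreeAbelianGroup (Fin n → G) →+ FreeAbelianGroup (Fin m → G))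
    (Ω : FreeAbelianGroup S.Y →+ FreeAbelianGroup T.Y)
    (hΘ : ∀ h t, Θ (of (h • t)) = map (θ h • ·) (Θ (of t)))
    (hΩ : ∀ h y, Ω (of (h • y)) = map (θ h • ·) (Ω (of y))) :
    FreeAbelianGroup (S.Orbits n) →+ FreeAbelianGroup (T.Orbits m) :=
  S.descend (fun t y => T.tensor (Θ (of t)) (Ω (of y))) fun h t y => by rw [hΘ, hΩ, tensor_smul]

lemma tensorMap_tensor (θ : S.H → T.H)
    (Θ : FreeAbelianGroup (Fin n → G) →+ FreeAbelianGroup (Fin m → G))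
    (Ω : FreeAbelianGroup S.Y →+ FreeAbelianGroup T.Y)
    (hΘ : ∀ h t, Θ (of (h • t)) = map (θ h • ·) (Θ (of t)))
    (hΩ : ∀ h y, Ω (of (h • y)) = map (θ h • ·) (Ω (of y)))
    (u : FreeAbelianGroup (Fin n → G)) (w : FreeAbelianGroup S.Y) :
    tensorMap θ Θ Ω hΘ hΩ (S.tensor u w) = T.tensor (Θ u) (Ω w) := by
  refine apply₂_eq_of_eq_on_of (f := AddMonoidHom.compr₂ S.tensor (tensorMap θ Θ Ω hΘ hΩ))
    (g := AddMonoidHom.compl₂ (T.tensor.comp Θ) Ω) (fun t y => ?_) u w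
  simp [AddMonoidHom.compl₂_apply, tensorMap]

/-- The differential `∂ ⊗ 1` on coinvariants. -/
def differential (S : GroupSet G) (n : ℕ) :
    FreeAbelianGroup (S.Orbits (n + 1)) →+ FreeAbelianGroup (S.Orbits n) :=
  tensorMap id (boundary n) (AddMonoidHom.id _)
    (fun h t => by rw [← FreeAbelianGroup.map_of_apply, boundary_smul]; rfl) (fun h y => by simp)

@[simp] lemma differential_tensor (u : FreeAbelianGroup (Fin (n + 1) → G))
    (w : FreeAbelianGroup S.Y) :
    S.differential n (S.tensor u w) = S.tensor (boundary n u) w :=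
  tensorMap_tensor _ _ _ _ _ _ _

/-- The complex computing the homology of `H` with coefficients in `ℤ[Y]`, from the free resolution
of `ℤ` by tuples in the ambient group. -/
abbrev complex (S : GroupSet G) : ChainCx.{u} where
  X n := FreeAbelianGroup (S.Orbits (n + 1))
  d n := S.differential (n + 1)
  d_d n x := by
    refine apply_eq_of_eq_on_tensor (f := (S.differential (n + 1)).comp (S.differential (n + 2)))
      (g := 0) (fun t y => ?_) x
    rw [AddMonoidHom.comp_apply, differential_tensor, differential_tensor, boundary_boundary,
      map_zero]
    rfl

lemma exists_eq_tensor_of {y : S.Y} (hy : ∀ y', y' = y) (x : FreeAbelianGroup (S.Orbits n)) :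
    ∃ u, x = S.tensor u (of y) := by
  induction x using freeAbelianGroup_sub_induction with
  | zero => exact ⟨0, by simp⟩
  | of s =>
    obtain ⟨t, y', rfl⟩ := exists_eq_orbit s
    exact ⟨of t, by simp [hy y']⟩
  | sub a b ha hb =>
    obtain ⟨u, rfl⟩ := ha
    obtain ⟨v, rfl⟩ := hb
    exact ⟨u - v, by simp⟩

/-- A subgroup acting on a point, which stands for trivial coefficients. -/
abbrev point (H : Subgroup G) : GroupSet G := ⟨H, PUnit⟩

/-- The same group with coefficients in the tuples of elements of `Y`. -/
abbrev power (S : GroupSet G) (p : ℕ) : GroupSet G := ⟨S.H, Fin p → S.Y⟩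

end GroupSet

/-- A morphism of groups with coefficients: conjugation by an element `g` of the ambient group,
and a map of permutation modules equivariant along this conjugation. -/
structure GroupSetHom (S T : GroupSet G) where
  g : G
  conj_mem : ∀ h ∈ S.H, g * h * g⁻¹ ∈ T.H
  Ω : FreeAbelianGroup S.Y →+ FreeAbelianGroup T.Y
  Ω_smul : ∀ (h : S.H) (k : T.H), (k : G) = g * h * g⁻¹ →
    ∀ y, Ω (of (h • y)) = map (k • ·) (Ω (of y))

namespace GroupSetHom

variable {S T U : GroupSet G} {n : ℕ}

/-- The conjugation underlying a morphism. -/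
def conj (φ : GroupSetHom S T) (h : S.H) : T.H := ⟨φ.g * h * φ.g⁻¹, φ.conj_mem h h.2⟩

lemma smul_smul_tuple (φ : GroupSetHom S T) (h : S.H) (t : Fin n → G) :
    φ.g • (h • t) = φ.conj h • (φ.g • t) := by
  change φ.g • ((h : G) • t) = (φ.g * (h : G) * φ.g⁻¹) • (φ.g • t)
  rw [smul_smul, smul_smul, inv_mul_cancel_right]

lemma Ω_map_smul (φ : GroupSetHom S T) (h : S.H) (k : T.H) (hk : (k : G) = φ.g * h * φ.g⁻¹)
    (w : FreeAbelianGroup S.Y) : φ.Ω (map (h • ·) w) = map (k • ·) (φ.Ω w) :=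
  apply_eq_of_eq_on_of (f := φ.Ω.comp (map (h • ·))) (g := (map (k • ·)).comp φ.Ω)
    (fun y => by simpa using φ.Ω_smul h k hk y) w

/-- The map induced on coinvariants. -/
def coinvariantsMap (φ : GroupSetHom S T) (n : ℕ) :
    FreeAbelianGroup (S.Orbits n) →+ FreeAbelianGroup (T.Orbits n) :=
  GroupSet.tensorMap φ.conj (map (φ.g • ·)) φ.Ω
    (fun h t => by simp [φ.smul_smul_tuple]) (fun h => φ.Ω_smul h _ rfl)

@[simp] lemma coinvariantsMap_tensor (φ : GroupSetHom S T) (u : FreeAbelianGroup (Fin n → G))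
    (w : FreeAbelianGroup S.Y) :
    φ.coinvariantsMap n (S.tensor u w) = T.tensor (map (φ.g • ·) u) (φ.Ω w) :=
  GroupSet.tensorMap_tensor _ _ _ _ _ _ _

/-- The induced chain map. -/
def chainMap (φ : GroupSetHom S T) : ChainMap S.complex T.complex where
  f n := φ.coinvariantsMap (n + 1)
  comm n x := by
    refine GroupSet.apply_eq_of_eq_on_tensor
      (f := (T.differential (n + 1)).comp (φ.coinvariantsMap (n + 2)))
      (g := (φ.coinvariantsMap (n + 1)).comp (S.differential (n + 1))) (fun t y => ?_) x
    simp only [AddMonoidHom.comp_apply, GroupSet.differential_tensor, coinvariantsMap_tensor,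
      boundary_smul]

lemma chainMap_tensor (φ : GroupSetHom S T) (u : FreeAbelianGroup (Fin (n + 1) → G))
    (w : FreeAbelianGroup S.Y) :
    φ.chainMap.f n (S.tensor u w) = T.tensor (map (φ.g • ·) u) (φ.Ω w) :=
  φ.coinvariantsMap_tensor _ _

/-- Composition of morphisms. -/
@[simps]
def comp (ψ : GroupSetHom T U) (φ : GroupSetHom S T) : GroupSetHom S U where
  g := ψ.g * φ.g
  conj_mem h hh := by
    simpa [mul_assoc] using ψ.conj_mem _ (φ.conj_mem h hh)
  Ω := ψ.Ω.comp φ.Ω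
  Ω_smul h k hk y := by
    rw [AddMonoidHom.comp_apply, φ.Ω_smul h (φ.conj h) rfl,
      ψ.Ω_map_smul (φ.conj h) k (by simp [hk, conj, mul_assoc])]
    rfl

lemma map_smul_map_smul (g k : G) (u : FreeAbelianGroup (Fin n → G)) :
    map (g • ·) (map (k • ·) u) = map ((g * k) • ·) u := by
  rw [map_map_apply]; simp only [smul_smul]

lemma map_one_smul (u : FreeAbelianGroup (Fin n → G)) : map ((1 : G) • ·) u = u :=
  map_eq_self (fun x => one_smul G x) u

lemma chainMap_comp (ψ : GroupSetHom T U) (φ : GroupSetHom S T) (x : S.complex.X n) :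
    (ψ.comp φ).chainMap.f n x = ψ.chainMap.f n (φ.chainMap.f n x) := by
  refine GroupSet.apply_eq_of_eq_on_tensor (f := (ψ.comp φ).chainMap.f n)
    (g := (ψ.chainMap.f n).comp (φ.chainMap.f n)) (fun t y => ?_) x
  rw [AddMonoidHom.comp_apply, chainMap_tensor, chainMap_tensor, chainMap_tensor,
    map_smul_map_smul]
  rfl

/- The two maps differ by an inner conjugation of the target. -/
lemma chainMap_congr {φ ψ : GroupSetHom S T} (k : T.H) (hg : ψ.g = k * φ.g)
    (hΩ : ∀ y, ψ.Ω (of y) = map (k • ·) (φ.Ω (of y))) (x : S.complex.X n) :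
    ψ.chainMap.f n x = φ.chainMap.f n x := by
  refine GroupSet.apply_eq_of_eq_on_tensor (f := ψ.chainMap.f n) (g := φ.chainMap.f n)
    (fun t y => ?_) x
  rw [chainMap_tensor, chainMap_tensor, hΩ, hg, ← map_smul_map_smul]
  exact GroupSet.tensor_smul k _ _

variable {φ ψ : GroupSetHom S T} (hconj : ∀ h ∈ S.H, φ.g * h * φ.g⁻¹ = ψ.g * h * ψ.g⁻¹)

include hconj in
lemma prism_smul_tuple (h : S.H) (t : Fin n → G) :
    HomologyStability.prism (φ.g * ·) (ψ.g * ·) n (of (h • t))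
      = map (φ.conj h • ·) (HomologyStability.prism (φ.g * ·) (ψ.g * ·) n (of t)) := by
  refine prism_smul (fun e => ?_) (fun e => ?_) t
  · change φ.g * (h * e) = (φ.g * h * φ.g⁻¹) * (φ.g * e)
    group
  · change ψ.g * (h * e) = (φ.g * h * φ.g⁻¹) * (ψ.g * e)
    rw [hconj h h.2]; group

/-- The prism operator on coinvariants, for morphisms with the same underlying conjugation. -/
def prism (φ ψ : GroupSetHom S T) (hconj : ∀ h ∈ S.H, φ.g * h * φ.g⁻¹ = ψ.g * h * ψ.g⁻¹) (n : ℕ) :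
    FreeAbelianGroup (S.Orbits n) →+ FreeAbelianGroup (T.Orbits (n + 1)) :=
  GroupSet.tensorMap φ.conj (HomologyStability.prism (φ.g * ·) (ψ.g * ·) n) φ.Ω
    (prism_smul_tuple hconj) (fun h => φ.Ω_smul h _ rfl)

@[simp] lemma prism_tensor (u : FreeAbelianGroup (Fin n → G)) (w : FreeAbelianGroup S.Y) :
    prism φ ψ hconj n (S.tensor u w)
      = T.tensor (HomologyStability.prism (φ.g * ·) (ψ.g * ·) n u) (φ.Ω w) :=
  GroupSet.tensorMap_tensor _ _ _ _ _ _ _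

/-- The prism homotopy between two morphisms with the same underlying conjugation. -/
def homotopy (hΩ : ∀ y, φ.Ω (of y) = ψ.Ω (of y)) : ChainHomotopy φ.chainMap ψ.chainMap where
  h n := prism φ ψ hconj (n + 1)
  d_h_zero x := by
    refine GroupSet.apply_eq_of_eq_on_tensor (f := (T.differential 1).comp (prism φ ψ hconj 1))
      (g := ψ.coinvariantsMap 1 - φ.coinvariantsMap 1) (fun t y => ?_) x
    have h := boundary_prism (φ.g * ·) (ψ.g * ·) (of t)
    rw [prism_zero, add_zero] at h
    simp only [AddMonoidHom.comp_apply, AddMonoidHom.sub_apply, coinvariantsMap_tensor,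
      prism_tensor, GroupSet.differential_tensor, ← hΩ, h]
    rw [map_sub]
    rfl
  d_h_succ n x := by
    refine GroupSet.apply_eq_of_eq_on_tensor
      (f := (T.differential (n + 2)).comp (prism φ ψ hconj (n + 2))
        + (prism φ ψ hconj (n + 1)).comp (S.differential (n + 1)))
      (g := ψ.coinvariantsMap (n + 2) - φ.coinvariantsMap (n + 2)) (fun t y => ?_) x
    have h := boundary_prism (φ.g * ·) (ψ.g * ·) (of t)
    simp only [AddMonoidHom.comp_apply, AddMonoidHom.sub_apply, AddMonoidHom.add_apply,
      coinvariantsMap_tensor, prism_tensor, GroupSet.differential_tensor, ← hΩ]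
    rw [← AddMonoidHom.add_apply, ← map_add, h, map_sub]
    rfl

end GroupSetHom

lemma exists_equivariant_retraction (H : Subgroup G) :
    ∃ ρ : G → H, (∀ (h : H) s, ρ (h * s) = h * ρ s) ∧ ∀ h : H, ρ h = h := by
  obtain ⟨T, hT, one_mem⟩ := H.exists_isComplement_right 1
  refine ⟨fun s => (hT.equiv s).1, fun h s => congrArg Prod.fst (hT.equiv_mul_left h s),
    fun h => ?_⟩
  exact hT.equiv_fst_eq_self_of_mem_of_one_mem one_mem h.2

namespace GroupSet

section Faces

variable {S : GroupSet G} {n : ℕ}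

/-- The simplicial boundary of tuples of decorations, as a morphism of coefficients. -/
def face (S : GroupSet G) (p : ℕ) :
    GroupSetHom (S.power (p + 1)) (S.power p) where
  g := 1
  conj_mem h hh := by simpa using hh
  Ω := boundary p
  Ω_smul h k hk y := by
    obtain rfl : k = h := Subtype.ext (by simpa using hk)
    rw [← FreeAbelianGroup.map_of_apply]
    exact boundary_smul (S := S.H) k (of y)

@[simp] lemma face_tensor (p : ℕ) (u : FreeAbelianGroup (Fin (n + 1) → G))
    (w : FreeAbelianGroup (Fin (p + 1) → S.Y)) :
    (face S p).chainMap.f n ((S.power (p + 1)).tensor u w) =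
      (S.power p).tensor u (boundary p w) := by
  rw [GroupSetHom.chainMap_tensor]
  exact congrArg (fun u' => (S.power p).tensor u' (boundary p w))
    (GroupSetHom.map_one_smul u)

lemma face_face (p : ℕ) (x : (S.power (p + 2)).complex.X n) :
    (face S p).chainMap.f n ((face S (p + 1)).chainMap.f n x) = 0 := by
  refine GroupSet.apply_eq_of_eq_on_tensor
    (f := ((face S p).chainMap.f n).comp ((face S (p + 1)).chainMap.f n)) (g := 0)
    (fun t y => ?_) x
  rw [AddMonoidHom.comp_apply, face_tensor, face_tensor, boundary_boundary, map_zero,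
    AddMonoidHom.zero_apply]

variable {ξ : G → S.Y} (hξ : ∀ (h : S.H) s, ξ (h * s) = h • ξ s)

/-- The contraction of the rows: the first group element supplies the apex of a cone. -/
def contraction (p n : ℕ) : (S.power p).complex.X n →+
    (S.power (p + 1)).complex.X n :=
  (S.power p).descend
    (fun t y => of ((S.power (p + 1)).orbit t (vecCons (ξ (vecHead t)) y))) (by
      intro (h : S.H) t y
      have cons_smul : vecCons (ξ (vecHead (h • t))) (h • y) = h • vecCons (ξ (vecHead t)) y := by
        rw [Matrix.smul_cons, ← hξ]
        rfl
      rw [← (S.power (p + 1)).orbit_smul h t]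
      exact congrArg (fun x => of ((S.power (p + 1)).orbit (h • t) x)) cons_smul)

lemma contraction_tensor (p : ℕ) (t : Fin (n + 1) → G) (w : FreeAbelianGroup (Fin p → S.Y)) :
    contraction hξ p n ((S.power p).tensor (of t) w) =
      (S.power (p + 1)).tensor (of t) (consChain (ξ (vecHead t)) w) := by
  refine apply_eq_of_eq_on_of
    (f := (contraction hξ p n).comp ((S.power p).tensor (of t)))
    (g := ((S.power (p + 1)).tensor (of t)).comp (consChain (ξ (vecHead t))))
    (fun y => ?_) w
  rw [AddMonoidHom.comp_apply, GroupSet.tensor_of, contraction, GroupSet.descend_of,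
    AddMonoidHom.comp_apply, FreeAbelianGroup.map_of_apply, GroupSet.tensor_of]

include hξ in
lemma face_zero_surjective (x : (S.power 0).complex.X n) :
    ∃ y, (face S 0).chainMap.f n y = x := by
  refine ⟨contraction hξ 0 n x, ?_⟩
  refine GroupSet.apply_eq_of_eq_on_tensor
    (f := ((face S 0).chainMap.f n).comp (contraction hξ 0 n)) (g := AddMonoidHom.id _)
    (fun t y => ?_) x
  rw [AddMonoidHom.comp_apply, contraction_tensor, face_tensor, boundary_zero_consChain,
    AddMonoidHom.id_apply]

include hξ in
lemma face_exact (p : ℕ) {x : (S.power (p + 1)).complex.X n}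
    (hx : (face S p).chainMap.f n x = 0) : ∃ y, (face S (p + 1)).chainMap.f n y = x := by
  have key : (face S (p + 1)).chainMap.f n (contraction hξ (p + 1) n x)
      = x - contraction hξ p n ((face S p).chainMap.f n x) := by
    refine GroupSet.apply_eq_of_eq_on_tensor
      (f := ((face S (p + 1)).chainMap.f n).comp (contraction hξ (p + 1) n))
      (g := AddMonoidHom.id _ - (contraction hξ p n).comp ((face S p).chainMap.f n))
      (fun t y => ?_) x
    rw [AddMonoidHom.comp_apply, contraction_tensor, face_tensor, boundary_consChain, map_sub,
      AddMonoidHom.sub_apply, AddMonoidHom.id_apply, AddMonoidHom.comp_apply, face_tensor,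
      contraction_tensor]
  exact ⟨_, by rw [key, hx, map_zero, sub_zero]⟩

end Faces

end GroupSet

end GroupSets

section GroupPairs

variable {G : Type u} [Group G]

/-- The morphism of coefficients given by conjugation by `g` and an equivariant map of sets. -/
abbrev GroupSetHom.ofMap {S T : GroupSet G} (g : G) (hg : ∀ h ∈ S.H, g * h * g⁻¹ ∈ T.H)
    (f : S.Y → T.Y)
    (hf : ∀ (h : S.H) (k : T.H), (k : G) = g * h * g⁻¹ → ∀ y, f (h • y) = k • f y) :
    GroupSetHom S T where
  g := g
  conj_mem := hg
  Ω := map f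
  Ω_smul h k hk y := by simp [hf h k hk]

/-- The morphism of coefficients given by an inclusion of groups and an equivariant map of sets. -/
abbrev GroupSetHom.ofInclusion {S T : GroupSet G} (le : S.H ≤ T.H) (f : S.Y → T.Y)
    (hf : ∀ (h : S.H) y, f (h • y) = Subgroup.inclusion le h • f y) : GroupSetHom S T :=
  ofMap 1 (fun h hh => by simpa using le hh) f fun h k hk y => by
    obtain rfl : k = Subgroup.inclusion le h := Subtype.ext (by simpa using hk)
    exact hf h y

variable (G) in
/-- An inclusion of subgroups of an ambient group, with an equivariant map of coefficients. -/
structure GroupPair where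
  S : GroupSet G
  T : GroupSet G
  le : S.H ≤ T.H
  ι : S.Y → T.Y
  ι_smul : ∀ (h : S.H) y, ι (h • y) = Subgroup.inclusion le h • ι y

namespace GroupPair

/-- The map of coefficients from the subgroup to the group. -/
abbrev hom (P : GroupPair G) : GroupSetHom P.S P.T := .ofInclusion P.le P.ι P.ι_smul

/-- The mapping cone of the inclusion, which computes relative homology. -/
abbrev relComplex (P : GroupPair G) : ChainCx.{u} := mappingCone P.hom.chainMap

/-- An inclusion of subgroups with trivial coefficients. -/
abbrev point {H H' : Subgroup G} (le : H ≤ H') : GroupPair G where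
  S := .point H
  T := .point H'
  le := le
  ι := id
  ι_smul _ _ := rfl

/-- The same pair of groups, with tuples as coefficients. -/
abbrev power (P : GroupPair G) (p : ℕ) : GroupPair G where
  S := P.S.power p
  T := P.T.power p
  le := P.le
  ι y := P.ι ∘ y
  ι_smul h y := funext fun i => P.ι_smul h (y i)

end GroupPair

/-- Morphisms of pairs; both components conjugate by the same element of the ambient group. -/
structure GroupPairHom (P Q : GroupPair G) where
  a : GroupSetHom P.S Q.S
  b : GroupSetHom P.T Q.T
  g_eq : b.g = a.g
  comm : ∀ y, b.Ω (of (P.ι y)) = map Q.ι (a.Ω (of y))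

lemma GroupSetHom.chainMap_comm {S T S' T' : GroupSet G} {φ : GroupSetHom S T}
    {ψ : GroupSetHom S' T'} {a : GroupSetHom S S'} {b : GroupSetHom T T'}
    (hg : b.g * φ.g = ψ.g * a.g) (hΩ : ∀ y, b.Ω (φ.Ω (of y)) = ψ.Ω (a.Ω (of y))) (n : ℕ)
    (x : S.complex.X n) :
    b.chainMap.f n (φ.chainMap.f n x) = ψ.chainMap.f n (a.chainMap.f n x) := by
  rw [← chainMap_comp, ← chainMap_comp]
  refine (chainMap_congr 1 (by simpa [comp] using hg) fun y => ?_) x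
  rw [map_eq_self (one_smul _)]
  exact hΩ y

lemma GroupSetHom.chainMap_sub {S T : GroupSet G} {φ ψ χ : GroupSetHom S T} (hφ : φ.g = χ.g)
    (hψ : ψ.g = χ.g) (hΩ : ∀ y, φ.Ω (of y) - ψ.Ω (of y) = χ.Ω (of y)) (n : ℕ)
    (x : S.complex.X n) : φ.chainMap.f n x - ψ.chainMap.f n x = χ.chainMap.f n x := by
  refine GroupSet.apply_eq_of_eq_on_tensor (f := φ.chainMap.f n - ψ.chainMap.f n)
    (g := χ.chainMap.f n) (fun t y => ?_) x
  rw [AddMonoidHom.sub_apply, chainMap_tensor, chainMap_tensor, chainMap_tensor, hφ, hψ, ← hΩ,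
    map_sub]

lemma GroupSetHom.chainMap_eq_self {S : GroupSet G} {φ : GroupSetHom S S} (hg : φ.g = 1)
    (hΩ : ∀ y, φ.Ω (of y) = of y) (n : ℕ) (x : S.complex.X n) : φ.chainMap.f n x = x := by
  refine GroupSet.apply_eq_of_eq_on_tensor (f := φ.chainMap.f n) (g := AddMonoidHom.id _)
    (fun t y => ?_) x
  rw [chainMap_tensor, hg, hΩ, map_one_smul, AddMonoidHom.id_apply]

namespace GroupPairHom

variable {P Q R : GroupPair G} {n : ℕ}

lemma chainMap_comm (f : GroupPairHom P Q) (n : ℕ) (x : P.S.complex.X n) :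
    f.b.chainMap.f n (P.hom.chainMap.f n x) = Q.hom.chainMap.f n (f.a.chainMap.f n x) :=
  GroupSetHom.chainMap_comm (by simp [f.g_eq]) (fun y => by simpa using f.comm y) n x

/-- The induced map of relative complexes. -/
def relMap (f : GroupPairHom P Q) : ChainMap P.relComplex Q.relComplex :=
  coneMap f.a.chainMap f.b.chainMap f.chainMap_comm

/-- Composition of morphisms of pairs. -/
@[simps]
def comp (f' : GroupPairHom Q R) (f : GroupPairHom P Q) : GroupPairHom P R where
  a := f'.a.comp f.a
  b := f'.b.comp f.b
  g_eq := by simp only [GroupSetHom.comp, f'.g_eq, f.g_eq]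
  comm y := by
    simp only [GroupSetHom.comp, AddMonoidHom.comp_apply, f.comm]
    exact apply_eq_of_eq_on_of (f := f'.b.Ω.comp (map Q.ι)) (g := (map R.ι).comp f'.a.Ω)
      (fun y => by simpa using f'.comm y) _

lemma relMap_comp (f' : GroupPairHom Q R) (f : GroupPairHom P Q) (x : P.relComplex.X n) :
    (f'.comp f).relMap.f n x = f'.relMap.f n (f.relMap.f n x) := by
  cases n with
  | zero => exact f'.b.chainMap_comp f.b x
  | succ n => exact coneMk_inj.2 ⟨f'.b.chainMap_comp f.b x.1, f'.a.chainMap_comp f.a x.2⟩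

lemma relMap_congr {f f' : GroupPairHom P Q} (k : Q.S.H) (hg : f'.a.g = k * f.a.g)
    (ha : ∀ y, f'.a.Ω (of y) = map (k • ·) (f.a.Ω (of y)))
    (hb : ∀ y, f'.b.Ω (of y) = map (Subgroup.inclusion Q.le k • ·) (f.b.Ω (of y)))
    (x : P.relComplex.X n) : f'.relMap.f n x = f.relMap.f n x :=
  coneMap_congr (fun _ => GroupSetHom.chainMap_congr k hg ha)
    (fun _ => GroupSetHom.chainMap_congr (Subgroup.inclusion Q.le k)
      (by rw [f.g_eq, f'.g_eq, hg]; rfl) hb) x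

lemma relMap_ext {f f' : GroupPairHom P Q} (hg : f'.a.g = f.a.g)
    (ha : ∀ y, f'.a.Ω (of y) = f.a.Ω (of y)) (hb : ∀ y, f'.b.Ω (of y) = f.b.Ω (of y))
    (x : P.relComplex.X n) : f'.relMap.f n x = f.relMap.f n x :=
  relMap_congr 1 (by simpa using hg)
    (fun y => (ha y).trans (map_eq_self (one_smul _) _).symm)
    (fun y => (hb y).trans (map_eq_self (fun z => one_smul Q.T.H z) _).symm) x

lemma relMap_eq_self {f : GroupPairHom P P} (hg : f.a.g = 1) (ha : ∀ y, f.a.Ω (of y) = of y)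
    (hb : ∀ y, f.b.Ω (of y) = of y) (x : P.relComplex.X n) : f.relMap.f n x = x :=
  coneMap_eq_self (GroupSetHom.chainMap_eq_self hg ha)
    (GroupSetHom.chainMap_eq_self (f.g_eq.trans hg) hb) x

lemma relMap_sub {f f' f'' : GroupPairHom P Q} (hg : f.a.g = f''.a.g) (hg' : f'.a.g = f''.a.g)
    (ha : ∀ y, f.a.Ω (of y) - f'.a.Ω (of y) = f''.a.Ω (of y))
    (hb : ∀ y, f.b.Ω (of y) - f'.b.Ω (of y) = f''.b.Ω (of y)) (x : P.relComplex.X n) :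
    f.relMap.f n x - f'.relMap.f n x = f''.relMap.f n x :=
  coneMap_sub (GroupSetHom.chainMap_sub hg hg' ha)
    (GroupSetHom.chainMap_sub (by rw [f.g_eq, f''.g_eq, hg]) (by rw [f'.g_eq, f''.g_eq, hg']) hb) x

lemma relMap_sub_relMap_mem_boundaries {f f' : GroupPairHom P Q}
    (hconj : ∀ h ∈ P.T.H, f.a.g * h * (f.a.g)⁻¹ = f'.a.g * h * (f'.a.g)⁻¹)
    (ha : ∀ y, f.a.Ω (of y) = f'.a.Ω (of y)) (hb : ∀ y, f.b.Ω (of y) = f'.b.Ω (of y))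
    {x : P.relComplex.X n} (hx : x ∈ P.relComplex.cycles n) :
    f'.relMap.f n x - f.relMap.f n x ∈ Q.relComplex.boundaries n := by
  have hconj_a : ∀ h ∈ P.S.H, f.a.g * h * (f.a.g)⁻¹ = f'.a.g * h * (f'.a.g)⁻¹ :=
    fun h hh => hconj h (P.le hh)
  have hconj_b : ∀ h ∈ P.T.H, f.b.g * h * (f.b.g)⁻¹ = f'.b.g * h * (f'.b.g)⁻¹ := by
    rwa [f.g_eq, f'.g_eq]
  refine coneMap_sub_coneMap_mem_boundaries f.chainMap_comm f'.chainMap_comm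
    (GroupSetHom.homotopy hconj_a ha) (GroupSetHom.homotopy hconj_b hb) (fun n x => ?_) hx
  refine GroupSet.apply_eq_of_eq_on_tensor
    (f := (GroupSetHom.prism f.b f'.b hconj_b (n + 1)).comp (P.hom.chainMap.f n))
    (g := (Q.hom.chainMap.f (n + 1)).comp (GroupSetHom.prism f.a f'.a hconj_a (n + 1)))
    (fun t y => ?_) x
  rw [AddMonoidHom.comp_apply, AddMonoidHom.comp_apply, GroupSetHom.chainMap_tensor,
    GroupSetHom.prism_tensor, GroupSetHom.prism_tensor, GroupSetHom.chainMap_tensor,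
    GroupSetHom.map_one_smul]
  simp only [FreeAbelianGroup.map_of_apply, f.comm, f.g_eq, f'.g_eq, one_smul]
  rw [map_eq_self fun _ => rfl]

section TrivialCoefficients

variable {H H' K K' : Subgroup G}

/-- Conjugation, as a morphism of pairs with trivial coefficients. -/
abbrev conj (le : H ≤ H') (le' : K ≤ K') (g : G) (hg : ∀ h ∈ H, g * h * g⁻¹ ∈ K)
    (hg' : ∀ h ∈ H', g * h * g⁻¹ ∈ K') : GroupPairHom (.point le) (.point le') where
  a := .ofMap g hg id fun _ _ _ _ => rfl
  b := .ofMap g hg' id fun _ _ _ _ => rfl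
  g_eq := rfl
  comm _ := by simp

/-- An inclusion of pairs of groups, with trivial coefficients. -/
abbrev incl (le : H ≤ H') (le' : K ≤ K') (l : H ≤ K) (l' : H' ≤ K') :
    GroupPairHom (.point le) (.point le') :=
  conj le le' 1 (fun h hh => by simpa using l hh) (fun h hh => by simpa using l' hh)

end TrivialCoefficients

end GroupPairHom

/-- Vanishing of the `n`-th relative homology of an inclusion of groups. -/
def RelVanishes {H H' : Subgroup G} (le : H ≤ H') (n : ℕ) : Prop :=
  (GroupPair.point le).relComplex.cycles n ≤ (GroupPair.point le).relComplex.boundaries n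

/-- Surjectivity on `n`-th relative homology of a morphism of pairs. -/
def RelSurjective {P Q : GroupPair G} (f : GroupPairHom P Q) (n : ℕ) : Prop :=
  Q.relComplex.cycles n ≤ f.relMap.homologyRange n

end GroupPairs

section IsotropyDecomposition

variable {G : Type u} [Group G]

namespace GroupSet

variable {S : GroupSet G} {n : ℕ}

/-- The stabilizer of an element of the permutation module, as a subgroup of the ambient group. -/
def stabilizer (S : GroupSet G) (w : FreeAbelianGroup S.Y) : Subgroup G where
  carrier := {h | ∃ hh : h ∈ S.H, map ((⟨h, hh⟩ : S.H) • ·) w = w}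
  one_mem' := ⟨S.H.one_mem, map_eq_self (one_smul S.H) w⟩
  mul_mem' := by
    rintro h k ⟨hh, hw⟩ ⟨hk, kw⟩
    refine ⟨S.H.mul_mem hh hk, ?_⟩
    conv_rhs => rw [← hw, ← kw, map_map_apply]
    simp only [smul_smul, MulMemClass.mk_mul_mk]
  inv_mem' := by
    rintro h ⟨hh, hw⟩
    refine ⟨S.H.inv_mem hh, ?_⟩
    conv_lhs => rw [← hw, map_map_apply]
    refine map_eq_self (fun y => ?_) w
    rw [smul_smul]
    exact (congrArg (· • y) (inv_mul_cancel (⟨h, hh⟩ : S.H))).trans (one_smul S.H y)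

lemma mem_stabilizer {w : FreeAbelianGroup S.Y} {h : G} :
    h ∈ S.stabilizer w ↔ ∃ hh : h ∈ S.H, map ((⟨h, hh⟩ : S.H) • ·) w = w := Iff.rfl

lemma mem_stabilizer_of {y : S.Y} {h : G} :
    h ∈ S.stabilizer (of y) ↔ ∃ hh : h ∈ S.H, (⟨h, hh⟩ : S.H) • y = y := by
  simp only [mem_stabilizer, FreeAbelianGroup.map_of_apply, FreeAbelianGroup.of_injective.eq_iff]

lemma stabilizer_inf_le_sub (w w' : FreeAbelianGroup S.Y) :
    S.stabilizer w ⊓ S.stabilizer w' ≤ S.stabilizer (w - w') := by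
  rintro h ⟨⟨hh, hw⟩, _, hw'⟩
  exact ⟨hh, by rw [map_sub, hw, hw']⟩

lemma stabilizer_le_stabilizer_boundary {p : ℕ} (w : FreeAbelianGroup (Fin (p + 1) → S.Y)) :
    (S.power (p + 1)).stabilizer w ≤ (S.power p).stabilizer (boundary p w) := by
  rintro h ⟨hh, hw⟩
  exact ⟨hh, (boundary_smul (⟨h, hh⟩ : S.H) w).symm.trans (congrArg _ hw)⟩

lemma le_stabilizer_zero : S.H ≤ S.stabilizer 0 := fun _ hh => ⟨hh, map_zero _⟩

/-- The inclusion of the orbits of the stabilizer of `y` on tuples into the orbits on pairs. -/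
def stabilizerOrbit (S : GroupSet G) (y : S.Y) (n : ℕ) :
    (point (S.stabilizer (of y))).Orbits n → S.Orbits n :=
  Quotient.lift (fun p => S.orbit p.1 y) (by
    rintro _ ⟨t, -⟩ ⟨⟨h, hh⟩, rfl⟩
    obtain ⟨hS, hy⟩ := mem_stabilizer_of.1 hh
    rw [← S.orbit_smul ⟨h, hS⟩ t y, hy]
    rfl)

lemma stabilizerOrbit_orbit (y : S.Y) (t : Fin n → G) :
    S.stabilizerOrbit y n ((point _).orbit t PUnit.unit) = S.orbit t y := rfl

lemma stabilizerOrbit_injective (y : S.Y) : Function.Injective (S.stabilizerOrbit y n) := by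
  intro q q' h
  obtain ⟨t, ⟨⟩, rfl⟩ := exists_eq_orbit q
  obtain ⟨t', ⟨⟩, rfl⟩ := exists_eq_orbit q'
  rw [stabilizerOrbit_orbit, stabilizerOrbit_orbit] at h
  obtain ⟨k, hk⟩ := MulAction.orbitRel_apply.1 (Quotient.exact h)
  obtain ⟨ht, hy⟩ := Prod.ext_iff.1 hk
  exact Quotient.sound ⟨⟨k, mem_stabilizer_of.2 ⟨k.2, hy⟩⟩, Prod.ext ht rfl⟩

open Classical in
/-- The projection of the coinvariants onto the summand of the orbit of `y`. -/
noncomputable def stabilizerRetraction (S : GroupSet G) (y : S.Y) (n : ℕ) :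
    FreeAbelianGroup (S.Orbits n) →+
      FreeAbelianGroup ((point (S.stabilizer (of y))).Orbits n) :=
  lift (Function.extend (S.stabilizerOrbit y n) of 0)

lemma stabilizerRetraction_tensor_self (y : S.Y) (u : FreeAbelianGroup (Fin n → G)) :
    S.stabilizerRetraction y n (S.tensor u (of y)) = (point _).tensor u (of PUnit.unit) := by
  refine apply_eq_of_eq_on_of
    (f := (S.stabilizerRetraction y n).comp ((AddMonoidHom.flip S.tensor) (of y)))
    (g := (AddMonoidHom.flip (point _).tensor) (of PUnit.unit)) (fun t => ?_) u
  rw [AddMonoidHom.comp_apply, AddMonoidHom.flip_apply, AddMonoidHom.flip_apply, tensor_of,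
    tensor_of, ← stabilizerOrbit_orbit, stabilizerRetraction, FreeAbelianGroup.lift_apply_of]
  exact (stabilizerOrbit_injective y).extend_apply _ _ _

lemma stabilizerRetraction_tensor_of_notMem {y y' : S.Y} (hy : y' ∉ MulAction.orbit S.H y)
    (u : FreeAbelianGroup (Fin n → G)) :
    S.stabilizerRetraction y n (S.tensor u (of y')) = 0 := by
  refine apply_eq_of_eq_on_of
    (f := (S.stabilizerRetraction y n).comp ((AddMonoidHom.flip S.tensor) (of y'))) (g := 0)
    (fun t => ?_) u
  simp only [AddMonoidHom.comp_apply, AddMonoidHom.flip_apply, tensor_of, stabilizerRetraction,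
    FreeAbelianGroup.lift_apply_of, AddMonoidHom.zero_apply]
  refine Function.extend_apply' _ _ _ ?_
  rintro ⟨q, hq⟩
  obtain ⟨t', ⟨⟩, rfl⟩ := exists_eq_orbit q
  obtain ⟨k, hk⟩ := MulAction.orbitRel_apply.1 (Quotient.exact hq.symm)
  exact hy ⟨k, congrArg Prod.snd hk⟩

lemma apply_eq_of_eq_on_tensor_orbit {M : Type*} [AddCommGroup M] (y : S.Y)
    {f g : FreeAbelianGroup (S.Orbits n) →+ M}
    (mem : ∀ t, f (S.tensor (of t) (of y)) = g (S.tensor (of t) (of y)))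
    (notMem : ∀ t, ∀ y' ∉ MulAction.orbit S.H y,
      f (S.tensor (of t) (of y')) = g (S.tensor (of t) (of y')))
    (x : FreeAbelianGroup (S.Orbits n)) : f x = g x := by
  refine apply_eq_of_eq_on_tensor (fun t y' => ?_) x
  by_cases hy : y' ∈ MulAction.orbit S.H y
  · obtain ⟨h, rfl⟩ := hy
    simpa [← S.orbit_smul h (h⁻¹ • t) y] using mem (h⁻¹ • t)
  · exact notMem t y' hy

/-- The projection onto the summand of the orbit of `y`, as a chain map. -/
noncomputable def stabilizerRetractionMap (S : GroupSet G) (y : S.Y) :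
    ChainMap S.complex (point (S.stabilizer (of y))).complex where
  f n := S.stabilizerRetraction y (n + 1)
  comm n x := by
    refine apply_eq_of_eq_on_tensor_orbit y
      (f := ((point _).differential (n + 1)).comp (S.stabilizerRetraction y (n + 2)))
      (g := (S.stabilizerRetraction y (n + 1)).comp (S.differential (n + 1)))
      (fun t => ?_) (fun t y' hy => ?_) x
    · rw [AddMonoidHom.comp_apply, AddMonoidHom.comp_apply, stabilizerRetraction_tensor_self,
        differential_tensor, differential_tensor, stabilizerRetraction_tensor_self]
    · rw [AddMonoidHom.comp_apply, AddMonoidHom.comp_apply,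
        stabilizerRetraction_tensor_of_notMem hy, differential_tensor,
        stabilizerRetraction_tensor_of_notMem hy, map_zero]

open Filter in
lemma eventually_sum_stabilizerRetraction_eq {I : Type*} {y : I → S.Y}
    (hy : Function.Bijective fun i => (⟦y i⟧ : MulAction.orbitRel.Quotient S.H S.Y))
    {φ : ∀ i, GroupSetHom (point (S.stabilizer (of (y i)))) S} (hg : ∀ i, (φ i).g = 1)
    (hΩ : ∀ i, (φ i).Ω (of PUnit.unit) = of (y i)) (n : ℕ) (c : S.complex.X n) :
    ∀ᶠ s : Finset I in atTop,
      ∑ i ∈ s, (φ i).chainMap.f n ((S.stabilizerRetractionMap (y i)).f n c) = c := by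
  change FreeAbelianGroup (S.Orbits (n + 1)) at c
  induction c using freeAbelianGroup_sub_induction with
  | zero => simp
  | sub a b ha hb =>
    filter_upwards [ha, hb] with s hsa hsb
    simp only [map_sub, Finset.sum_sub_distrib]
    rw [hsa, hsb]
  | of q =>
    obtain ⟨t, y', rfl⟩ := exists_eq_orbit q
    obtain ⟨i, hi⟩ := hy.2 ⟦y'⟧
    obtain ⟨h, rfl⟩ := MulAction.orbitRel_apply.1 (Quotient.exact hi.symm)
    filter_upwards [eventually_ge_atTop {i}] with s hs
    rw [Finset.sum_eq_single_of_mem i (by simpa using hs)]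
    · have e : of (S.orbit t (h • y i)) = S.tensor (of (h⁻¹ • t)) (of (y i)) := by
        simp [← S.orbit_smul h (h⁻¹ • t) (y i)]
      change (φ i).chainMap.f n
        (S.stabilizerRetraction (y i) (n + 1) (of (S.orbit t (h • y i)))) = _
      rw [e, stabilizerRetraction_tensor_self, GroupSetHom.chainMap_tensor, hg, hΩ,
        GroupSetHom.map_one_smul]
    · intro j _ hj
      change (φ j).chainMap.f n
        (S.stabilizerRetraction (y j) (n + 1) (of (S.orbit t (h • y i)))) = 0
      rw [← tensor_of, stabilizerRetraction_tensor_of_notMem, map_zero]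
      intro hmem
      exact hj (hy.1 ((Quotient.sound (MulAction.orbitRel_apply.2 hmem)).symm.trans hi.symm))

end GroupSet

namespace GroupPair

variable {P : GroupPair G} {K K' : Subgroup G} {n : ℕ}

/-- The map induced by a pair on the orbits of its coefficients. -/
def orbitMap (P : GroupPair G) :
    MulAction.orbitRel.Quotient P.S.H P.S.Y → MulAction.orbitRel.Quotient P.T.H P.T.Y :=
  Quotient.map' P.ι (by
    rintro _ y ⟨h, rfl⟩
    exact ⟨Subgroup.inclusion P.le h, (P.ι_smul h y).symm⟩)

lemma bijective_orbitMap
    (hinj : ∀ x y (h : P.T.H), h • P.ι y = P.ι x → ∃ k : P.S.H, k • y = x)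
    (hsurj : ∀ x, ∃ (g : P.T.H) (y : P.S.Y), g • P.ι y = x) : Function.Bijective P.orbitMap := by
  constructor
  · intro x y hxy
    induction x, y using Quotient.inductionOn₂ with
    | _ x y =>
      obtain ⟨h, hh⟩ := MulAction.orbitRel_apply.1 (Quotient.exact hxy)
      exact Quotient.sound (MulAction.orbitRel_apply.2 (hinj x y h hh))
  · intro x
    induction x using Quotient.inductionOn with
    | _ x =>
      obtain ⟨g, y, rfl⟩ := hsurj x
      exact ⟨⟦y⟧, Quotient.sound (MulAction.orbitRel_apply.2 (MulAction.mem_orbit_symm.1 ⟨g, rfl⟩))⟩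

lemma stabilizer_le_stabilizer (P : GroupPair G) (w : FreeAbelianGroup P.S.Y) :
    P.S.stabilizer w ≤ P.T.stabilizer (map P.ι w) := by
  rintro h ⟨hh, hw⟩
  refine ⟨P.le hh, ?_⟩
  conv_rhs => rw [← hw, map_map_apply]
  rw [map_map_apply]
  exact congrArg (fun f => map f w) (funext fun y => (P.ι_smul ⟨h, hh⟩ y).symm)

/-- The morphism of pairs which inserts an invariant weight, an element of the permutation
module. -/
@[simps]
def insertWeight (P : GroupPair G) (k : K ≤ K') (w : FreeAbelianGroup P.S.Y)
    (hK : K ≤ P.S.stabilizer w) (hK' : K' ≤ P.T.stabilizer (map P.ι w)) :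
    GroupPairHom (point k) P where
  a :=
    { g := 1
      conj_mem := fun h hh => by simpa using (hK hh).1
      Ω := lift fun _ => w
      Ω_smul := fun h l hl _ => by
        obtain rfl : l = ⟨h, (hK h.2).1⟩ := Subtype.ext (by simpa using hl)
        simpa using (hK h.2).2.symm }
  b :=
    { g := 1
      conj_mem := fun h hh => by simpa using (hK' hh).1
      Ω := lift fun _ => map P.ι w
      Ω_smul := fun h l hl _ => by
        obtain rfl : l = ⟨h, (hK' h.2).1⟩ := Subtype.ext (by simpa using hl)
        simpa using (hK' h.2).2.symm }
  g_eq := rfl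
  comm y := by simp

/-- The projections onto the summands of the orbits of `y` and `P.ι y`, as a map of relative
complexes. -/
noncomputable def relRetraction (hP : Function.Injective P.orbitMap) (y : P.S.Y) :
    ChainMap P.relComplex (point (P.stabilizer_le_stabilizer (of y))).relComplex :=
  coneMap (P.S.stabilizerRetractionMap y) (P.T.stabilizerRetractionMap (P.ι y)) fun n x => by
    refine GroupSet.apply_eq_of_eq_on_tensor_orbit y
      (f := (P.T.stabilizerRetraction (P.ι y) (n + 1)).comp (P.hom.chainMap.f n))
      (g := ((point (P.stabilizer_le_stabilizer (of y))).hom.chainMap.f n).comp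
        (P.S.stabilizerRetraction y (n + 1))) (fun t => ?_) (fun t y' hy => ?_) x
    · change P.T.stabilizerRetraction (P.ι y) (n + 1) (P.hom.chainMap.f n _) =
        (point (P.stabilizer_le_stabilizer (of y))).hom.chainMap.f n
          (P.S.stabilizerRetraction y _ _)
      rw [GroupSetHom.chainMap_tensor, GroupSet.stabilizerRetraction_tensor_self,
        GroupSetHom.chainMap_tensor]
      exact GroupSet.stabilizerRetraction_tensor_self _ _
    · change P.T.stabilizerRetraction (P.ι y) (n + 1) (P.hom.chainMap.f n _) =
        (point (P.stabilizer_le_stabilizer (of y))).hom.chainMap.f n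
          (P.S.stabilizerRetraction y _ _)
      rw [GroupSetHom.chainMap_tensor, GroupSet.stabilizerRetraction_tensor_of_notMem hy, map_zero]
      refine GroupSet.stabilizerRetraction_tensor_of_notMem (fun hy' => hy ?_) _
      have hq : P.orbitMap ⟦y'⟧ = P.orbitMap ⟦y⟧ := Quotient.sound hy'
      exact Quotient.exact (hP hq)

lemma mem_closure_insertWeight (hP : Function.Bijective P.orbitMap) {z : P.relComplex.X n}
    (hz : z ∈ P.relComplex.cycles n) :
    z ∈ AddSubgroup.closure {x | ∃ y,
      ∃ w ∈ (point (P.stabilizer_le_stabilizer (of y))).relComplex.cycles n,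
        (P.insertWeight (P.stabilizer_le_stabilizer (of y)) (of y) le_rfl le_rfl).relMap.f n w
          = x} := by
  let rep : MulAction.orbitRel.Quotient P.S.H P.S.Y → P.S.Y := Quotient.out
  have hrep : Function.Bijective fun i => (⟦rep i⟧ : MulAction.orbitRel.Quotient P.S.H P.S.Y) := by
    convert Function.bijective_id using 1
    exact funext Quotient.out_eq
  let incl := fun i => P.insertWeight (P.stabilizer_le_stabilizer (of (rep i))) (of (rep i)) le_rfl
    le_rfl
  let retr := fun i => relRetraction hP.injective (rep i)
  obtain ⟨s, hs⟩ : ∃ s : Finset _, ∑ i ∈ s, (incl i).relMap.f n ((retr i).f n z) = z := by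
    have hA := fun n x => GroupSet.eventually_sum_stabilizerRetraction_eq (φ := fun i => (incl i).a)
      hrep (fun _ => rfl) (fun _ => by simp [incl, insertWeight]) n x
    have hB := fun n x => GroupSet.eventually_sum_stabilizerRetraction_eq (S := P.T)
      (φ := fun i => (incl i).b) (hP.comp hrep) (fun _ => rfl)
      (fun _ => by simp [incl, insertWeight]) n x
    cases n with
    | zero => exact (hB 0 z).exists
    | succ n =>
      obtain ⟨s, hb, ha⟩ := ((hB (n + 1) z.1).and (hA n z.2)).exists
      exact ⟨s, Prod.ext (Prod.fst_sum.trans hb) (Prod.snd_sum.trans ha)⟩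
  rw [← hs]
  exact sum_mem fun i _ =>
    AddSubgroup.subset_closure ⟨rep i, (retr i).f n z, (retr i).mem_cycles hz, rfl⟩

end GroupPair

end IsotropyDecomposition

section WeightArgument

variable {G : Type u} [Group G] {n : ℕ}

namespace GroupPair

variable {P : GroupPair G} {K K' L L' K₀ K₀' : Subgroup G}

lemma relMap_insertWeight_sub (k : K ≤ K') {w w' : FreeAbelianGroup P.S.Y}
    (hw : K ≤ P.S.stabilizer w) (hT : K' ≤ P.T.stabilizer (map P.ι w))
    (hw' : K ≤ P.S.stabilizer w') (hT' : K' ≤ P.T.stabilizer (map P.ι w'))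
    (hsub : K ≤ P.S.stabilizer (w - w')) (hsubT : K' ≤ P.T.stabilizer (map P.ι (w - w')))
    (z : (point k).relComplex.X n) :
    (P.insertWeight k w hw hT).relMap.f n z - (P.insertWeight k w' hw' hT').relMap.f n z =
      (P.insertWeight k (w - w') hsub hsubT).relMap.f n z :=
  GroupPairHom.relMap_sub (f := P.insertWeight k w hw hT) (f' := P.insertWeight k w' hw' hT')
    (f'' := P.insertWeight k (w - w') hsub hsubT) rfl rfl (fun _ => by simp) (fun _ => by simp) z

/-- The invariant weights which, inserted into the relative chain `z` of `K ≤ K'`, give an element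
of `R`. -/
def weightsInto (P : GroupPair G) (k : K ≤ K') (lK : K ≤ P.S.H) (lK' : K' ≤ P.T.H)
    (z : (point k).relComplex.X n) (R : AddSubgroup (P.relComplex.X n)) :
    AddSubgroup (FreeAbelianGroup P.S.Y) :=
  have sub_mem : ∀ w w' hw hw' hT hT', (P.insertWeight k w hw hT).relMap.f n z ∈ R →
      (P.insertWeight k w' hw' hT').relMap.f n z ∈ R →
      ∃ hK hK', (P.insertWeight k (w - w') hK hK').relMap.f n z ∈ R := by
    intro w w' hw hw' hT hT' h h'
    refine ⟨(le_inf hw hw').trans (GroupSet.stabilizer_inf_le_sub w w'), ?_, ?_⟩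
    · rw [map_sub]
      exact (le_inf hT hT').trans (GroupSet.stabilizer_inf_le_sub _ _)
    · rw [← P.relMap_insertWeight_sub k hw hT hw' hT']
      exact R.sub_mem h h'
  have zero_le : K ≤ P.S.stabilizer 0 := lK.trans GroupSet.le_stabilizer_zero
  have zero_le' : K' ≤ P.T.stabilizer (map P.ι 0) := by
    rw [map_zero]
    exact lK'.trans GroupSet.le_stabilizer_zero
  AddSubgroup.ofSub {w | ∃ hK hK', (P.insertWeight k w hK hK').relMap.f n z ∈ R}
    ⟨0, zero_le, zero_le', by
      have h := P.relMap_insertWeight_sub k (w := 0) (w' := 0) zero_le zero_le' zero_le zero_le'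
        (by rwa [sub_zero]) (by rwa [sub_zero]) z
      simp only [sub_self] at h
      exact h ▸ R.zero_mem⟩
    (by
      rintro w ⟨hw, hT, h⟩ w' ⟨hw', hT', h'⟩
      rw [← sub_eq_add_neg]
      exact sub_mem w w' hw hw' hT hT' h h')

lemma mem_weightsInto {k : K ≤ K'} {lK : K ≤ P.S.H} {lK' : K' ≤ P.T.H}
    {z : (point k).relComplex.X n} {R : AddSubgroup (P.relComplex.X n)}
    {w : FreeAbelianGroup P.S.Y} : w ∈ P.weightsInto k lK lK' z R ↔
      ∃ hK hK', (P.insertWeight k w hK hK').relMap.f n z ∈ R := Iff.rfl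

variable (k : K ≤ K') (lK : K ≤ P.S.H) (lK' : K' ≤ P.T.H) {z : (point k).relComplex.X n}
  {R : AddSubgroup (P.relComplex.X n)}

lemma mem_weightsInto_of_relVanishes (l : L ≤ L') (m : K ≤ L) (m' : K' ≤ L')
    (hz : z ∈ (point k).relComplex.cycles n) (hR : P.relComplex.boundaries n ≤ R)
    {w : FreeAbelianGroup P.S.Y} (hL : L ≤ P.S.stabilizer w)
    (hL' : L' ≤ P.T.stabilizer (map P.ι w)) (hvan : RelVanishes l n) :
    w ∈ P.weightsInto k lK lK' z R := by
  refine mem_weightsInto.2 ⟨m.trans hL, m'.trans hL', hR ?_⟩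
  have factor : (P.insertWeight k w (m.trans hL) (m'.trans hL')).relMap.f n z =
      (P.insertWeight l w hL hL').relMap.f n ((GroupPairHom.incl k l m m').relMap.f n z) := by
    rw [← GroupPairHom.relMap_comp]
    exact GroupPairHom.relMap_ext (by simp) (fun _ => by simp) (fun _ => by simp) z
  rw [factor]
  exact ChainMap.mem_boundaries _ (hvan (ChainMap.mem_cycles _ hz))

lemma smul_sub_mem_weightsInto (k₀ : K₀ ≤ K₀') (m : K₀ ≤ K) (m' : K₀' ≤ K')
    (hz : z ∈ (GroupPairHom.incl k₀ k m m').relMap.homologyRange n)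
    (hR : P.relComplex.boundaries n ≤ R) (g : P.S.H) (hg : ∀ h ∈ K₀', (g : G) * h * (g : G)⁻¹ = h)
    {w : FreeAbelianGroup P.S.Y} (hw : K ≤ P.S.stabilizer w)
    (hT : K' ≤ P.T.stabilizer (map P.ι w)) (hgw : K ≤ P.S.stabilizer (map (g • ·) w))
    (hgT : K' ≤ P.T.stabilizer (map P.ι (map (g • ·) w))) :
    map (g • ·) w - w ∈ P.weightsInto k lK lK' z R := by
  obtain ⟨z₀, hz₀, hzz₀⟩ := ChainMap.mem_homologyRange.1 hz
  refine mem_weightsInto.2 ⟨(le_inf hgw hw).trans (GroupSet.stabilizer_inf_le_sub _ _), ?_, hR ?_⟩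
  · rw [map_sub]
    exact (le_inf hgT hT).trans (GroupSet.stabilizer_inf_le_sub _ _)
  rw [← P.relMap_insertWeight_sub k hgw hgT hw hT]
  let conj := GroupPairHom.conj k₀ k (g : G) (fun h hh => (hg h (k₀ hh)).symm ▸ m hh)
    (fun h hh => (hg h hh).symm ▸ m' hh)
  have e₁ := (P.insertWeight k _ hgw hgT).relMap.mem_boundaries hzz₀
  have e₂ := (P.insertWeight k _ hw hT).relMap.mem_boundaries hzz₀
  have e₃ := (P.insertWeight k _ hgw hgT).relMap.mem_boundaries
    (GroupPairHom.relMap_sub_relMap_mem_boundaries (f := GroupPairHom.incl k₀ k m m') (f' := conj)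
      (fun h hh => by simp [conj, hg h hh]) (fun _ => rfl) (fun _ => rfl) hz₀)
  have conj_eq : (P.insertWeight k _ hgw hgT).relMap.f n (conj.relMap.f n z₀) =
      (P.insertWeight k _ hw hT).relMap.f n ((GroupPairHom.incl k₀ k m m').relMap.f n z₀) := by
    rw [← GroupPairHom.relMap_comp, ← GroupPairHom.relMap_comp]
    refine GroupPairHom.relMap_congr g (by simp [conj]) (fun _ => by simp [conj]) (fun _ => ?_) z₀
    simp [conj, map_map_apply, P.ι_smul]
  rw [map_sub] at e₁ e₂ e₃
  rw [conj_eq] at e₃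
  convert sub_mem (sub_mem e₁ e₃) e₂ using 1
  abel

omit k lK lK' z R in
/-- The simplicial boundary of tuples of coefficients, as a morphism of pairs. -/
@[simps]
def face (P : GroupPair G) (p : ℕ) : GroupPairHom (P.power (p + 1)) (P.power p) where
  a := P.S.face p
  b := P.T.face p
  g_eq := rfl
  comm y := by
    rw [← FreeAbelianGroup.map_of_apply]
    exact boundary_map P.ι (of y)

lemma boundary_mem_weightsInto {p : ℕ} (lK : K ≤ P.S.H) (lK' : K' ≤ P.T.H)
    (hz : z ∈ (point k).relComplex.cycles n) {w : FreeAbelianGroup (Fin (p + 1) → P.S.Y)}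
    (hw : K ≤ (P.power (p + 1)).S.stabilizer w)
    (hT : K' ≤ (P.power (p + 1)).T.stabilizer (map (P.ι ∘ ·) w)) :
    boundary p w ∈ (P.power p).weightsInto k lK lK' z ((P.face p).relMap.homologyRange n) := by
  have hbT : K' ≤ (P.power p).T.stabilizer (map (P.ι ∘ ·) (boundary p w)) := by
    rw [← boundary_map]
    exact hT.trans (P.T.stabilizer_le_stabilizer_boundary _)
  have hbS := hw.trans (P.S.stabilizer_le_stabilizer_boundary w)
  have factor : ((P.power p).insertWeight k (boundary p w) hbS hbT).relMap.f n z =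
      (P.face p).relMap.f n (((P.power (p + 1)).insertWeight k w hw hT).relMap.f n z) := by
    rw [← GroupPairHom.relMap_comp]
    refine GroupPairHom.relMap_ext ?_ (fun _ => ?_) (fun _ => ?_) z
    · simp [GroupSet.face]
    · simp [GroupSet.face]
    · simp [GroupSet.face, ← boundary_map]
  refine mem_weightsInto.2 ⟨hbS, hbT, ?_⟩
  rw [factor]
  exact ChainMap.map_mem_homologyRange _ (ChainMap.mem_cycles _ hz)

lemma face_face (p : ℕ) (x : (P.power (p + 2)).relComplex.X n) :
    (P.face p).relMap.f n ((P.face (p + 1)).relMap.f n x) = 0 := by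
  cases n with
  | zero => exact P.T.face_face p x
  | succ n => exact coneMk_inj.2 ⟨P.T.face_face p x.1, P.S.face_face p x.2⟩

lemma face_zero_surjective (y₀ : P.S.Y) (x : (P.power 0).relComplex.X n) :
    ∃ y, (P.face 0).relMap.f n y = x := by
  obtain ⟨ρ, hρ, -⟩ := exists_equivariant_retraction P.S.H
  obtain ⟨ρ', hρ', -⟩ := exists_equivariant_retraction P.T.H
  exact coneMap_surjective
    (fun _ => GroupSet.face_zero_surjective (ξ := fun s => ρ s • y₀) fun h s => by
      rw [hρ, mul_smul])
    (fun _ => GroupSet.face_zero_surjective (ξ := fun s => ρ' s • P.ι y₀) fun h s => by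
      rw [hρ', mul_smul]) n x

lemma face_exact (y₀ : P.S.Y) (p : ℕ) {x : (P.power (p + 1)).relComplex.X n}
    (hx : (P.face p).relMap.f n x = 0) : ∃ y, (P.face (p + 1)).relMap.f n y = x := by
  obtain ⟨ρ, hρ, -⟩ := exists_equivariant_retraction P.S.H
  obtain ⟨ρ', hρ', -⟩ := exists_equivariant_retraction P.T.H
  exact coneMap_exact
    (fun _ _ => GroupSet.face_exact (ξ := fun s => ρ s • y₀) (fun h s => by rw [hρ, mul_smul]) p)
    (fun _ _ => GroupSet.face_exact (ξ := fun s => ρ' s • P.ι y₀) (fun h s => by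
      rw [hρ', mul_smul]) p) hx

/-- The morphism forgetting the coefficients. -/
@[simps]
def toPoint (P : GroupPair G) : GroupPairHom P (point P.le) where
  a := .ofInclusion le_rfl (fun _ => PUnit.unit) fun _ _ => rfl
  b := .ofInclusion le_rfl (fun _ => PUnit.unit) fun _ _ => rfl
  g_eq := rfl
  comm _ := by simp

/-- Trivial coefficients, seen as empty tuples of coefficients. -/
@[simps]
def ofPoint (P : GroupPair G) : GroupPairHom (point P.le) (P.power 0) where
  a := .ofInclusion le_rfl (fun _ => ![]) fun _ _ => Subsingleton.elim _ _
  b := .ofInclusion le_rfl (fun _ => ![]) fun _ _ => Subsingleton.elim _ _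
  g_eq := rfl
  comm _ := by simp [Subsingleton.elim (P.ι ∘ ![]) ![]]

lemma relSurjective_toPoint (y₀ : P.S.Y)
    (hcycles : ∀ p q, p + q + 1 = n →
      (P.power (p + 2)).relComplex.cycles q ≤ (P.face (p + 2)).relMap.homologyRange q) :
    RelSurjective (P.power 1).toPoint n := by
  intro z hz
  obtain ⟨e, he, hez⟩ := cycles_le_map_cycles_of_exact_rows (M := fun p => (P.power p).relComplex)
    (δ := fun p => (P.face p).relMap) (fun p _ => P.face_face p)
    (fun _ => P.face_zero_surjective y₀)
    (fun p _ _ => P.face_exact y₀ p) hcycles (P.ofPoint.relMap.mem_cycles hz)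
  have toPoint_face : (P.power 1).toPoint.relMap.f n e =
      (P.power 0).toPoint.relMap.f n ((P.face 0).relMap.f n e) := by
    rw [← GroupPairHom.relMap_comp]
    exact GroupPairHom.relMap_ext (by simp [GroupSet.face]) (fun _ => by simp [GroupSet.face])
      (fun _ => by simp [GroupSet.face]) e
  have toPoint_ofPoint : (P.power 0).toPoint.relMap.f n (P.ofPoint.relMap.f n z) = z := by
    rw [← GroupPairHom.relMap_comp]
    exact GroupPairHom.relMap_eq_self (by simp) (fun _ => by simp) (fun _ => by simp) z
  rw [← toPoint_ofPoint, ← hez, ← toPoint_face]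
  exact ChainMap.map_mem_homologyRange _ he

end GroupPair

lemma of_vecCons_vecCons_mem {E : Type*} {p : ℕ} {q : E → Prop} {v₁ v₂ v : E} {x : Fin p → E}
    (hv : q v) (hx : ∀ i, q (x i)) {S : AddSubgroup (FreeAbelianGroup (Fin (p + 2) → E))}
    (hboundary : boundary (p + 2) (of (vecCons v₁ (vecCons v₂ (vecCons v x)))) ∈ S)
    (hleft : of (vecCons v₂ (vecCons v x)) - of (vecCons v₁ (vecCons v₂ x)) ∈ S)
    (hright : of (vecCons v₁ (vecCons v x)) - of (vecCons v₁ (vecCons v₂ x)) ∈ S)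
    (hmem : ∀ y : Fin p → E, v ∈ Set.range y → (∀ i, q (y i)) →
      of (vecCons v₁ (vecCons v₂ y)) ∈ S) :
    of (vecCons v₁ (vecCons v₂ x)) ∈ S := by
  have hface : consChain v₁ (consChain v₂ (boundary p (of (vecCons v x)) - of x)) ∈ S := by
    cases p with
    | zero => simp [Subsingleton.elim x ![]]
    | succ p =>
      rw [boundary_succ, sub_sub_cancel_left, map_neg, map_neg]
      refine neg_mem ?_
      suffices AddSubgroup.closure (of '' {y : Fin p → E | ∀ i, q (y i)}) ≤
          S.comap ((consChain v₁).comp ((consChain v₂).comp (consChain v))) from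
        this (boundary_mem_closure hx)
      rw [AddSubgroup.closure_le]
      rintro _ ⟨y, hy, rfl⟩
      simpa using hmem (vecCons v y) ⟨0, rfl⟩ (forall_vecCons.2 ⟨hv, hy⟩)
  rw [boundary_succ, boundary_succ] at hboundary
  simp only [map_sub, FreeAbelianGroup.map_of_apply] at hboundary hface
  convert sub_mem (add_mem (sub_mem hboundary hleft) hright) hface using 1
  abel

end WeightArgument

/-! ### Pairings with many transvections -/

section Pairing

variable {F A B : Type u} [Field F] [AddCommGroup A] [Module F A] [AddCommGroup B] [Module F B]

lemma mem_sup_span_singleton {Φ : Submodule F A} {v a : A} :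
    a ∈ Φ ⊔ F ∙ v ↔ ∃ c : F, a - c • v ∈ Φ := by
  simp_rw [Submodule.mem_sup, Submodule.mem_span_singleton]
  constructor
  · rintro ⟨x, hx, _, ⟨c, rfl⟩, rfl⟩
    exact ⟨c, by simpa using hx⟩
  · rintro ⟨c, hc⟩
    exact ⟨_, hc, _, ⟨c, rfl⟩, sub_add_cancel _ _⟩

/-- The subspace spanned by `Φ` and the entries of the tuple `x`. -/
def adjoin (Φ : Submodule F A) {p : ℕ} (x : Fin p → A) : Submodule F A :=
  Φ ⊔ Submodule.span F (Set.range x)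

lemma le_adjoin (Φ : Submodule F A) {p : ℕ} (x : Fin p → A) : Φ ≤ adjoin Φ x :=
  le_sup_left

lemma mem_adjoin (Φ : Submodule F A) {p : ℕ} (x : Fin p → A) (i : Fin p) : x i ∈ adjoin Φ x :=
  Submodule.mem_sup_right (Submodule.subset_span ⟨i, rfl⟩)

lemma adjoin_le {Φ Θ : Submodule F A} {p : ℕ} {x : Fin p → A} :
    adjoin Φ x ≤ Θ ↔ Φ ≤ Θ ∧ ∀ i, x i ∈ Θ := by
  simp [adjoin, Submodule.span_le, Set.range_subset_iff]

@[simp]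
lemma adjoin_zero (Φ : Submodule F A) (x : Fin 0 → A) : adjoin Φ x = Φ := by
  simp [adjoin]

lemma adjoin_vecCons (Φ : Submodule F A) (a : A) {p : ℕ} (x : Fin p → A) :
    adjoin Φ (vecCons a x) = adjoin Φ x ⊔ F ∙ a := by
  rw [adjoin, adjoin, Matrix.range_cons, Submodule.span_union, sup_assoc,
    sup_comm (Submodule.span F _)]

lemma adjoin_fin_one (Φ : Submodule F A) (x : Fin 1 → A) : adjoin Φ x = Φ ⊔ F ∙ x 0 := by
  rw [adjoin, Set.range_unique]
  rfl

lemma adjoin_comp_succAbove {Φ : Submodule F A} {p : ℕ} {a : Fin (p + 1) → A} {i : Fin (p + 1)}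
    (hi : a i ∈ adjoin Φ (a ∘ i.succAbove)) : adjoin Φ (a ∘ i.succAbove) = adjoin Φ a := by
  refine le_antisymm (adjoin_le.2 ⟨le_adjoin _ _, fun j => mem_adjoin Φ a _⟩)
    (adjoin_le.2 ⟨le_adjoin _ _, fun j => ?_⟩)
  induction j using i.succAboveCases with
  | x => exact hi
  | p j => exact mem_adjoin Φ (a ∘ i.succAbove) j

variable (pr : A →ₗ[F] B →ₗ[F] F)

/-- The left annihilator `{a | ∀ b ∈ Ψ, pr a b = 0}` of `Ψ` under the pairing `pr`. -/
def annihL (Ψ : Submodule F B) : Submodule F A :=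
  Ψ.dualAnnihilator.comap pr

/-- The right annihilator `{b | ∀ a ∈ Φ, pr a b = 0}` of `Φ` under the pairing `pr`. -/
def annihR (Φ : Submodule F A) : Submodule F B :=
  annihL pr.flip Φ

variable {pr}

lemma mem_annihL {Ψ : Submodule F B} {a : A} : a ∈ annihL pr Ψ ↔ ∀ b ∈ Ψ, pr a b = 0 := by
  simp [annihL, Submodule.mem_dualAnnihilator]

lemma mem_annihR {Φ : Submodule F A} {b : B} : b ∈ annihR pr Φ ↔ ∀ a ∈ Φ, pr a b = 0 :=
  mem_annihL

lemma mem_annihR_iff_le {Φ : Submodule F A} {b : B} :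
    b ∈ annihR pr Φ ↔ Φ ≤ LinearMap.ker (pr.flip b) :=
  mem_annihR

lemma annihR_anti {Φ Φ' : Submodule F A} (h : Φ ≤ Φ') : annihR pr Φ' ≤ annihR pr Φ :=
  fun _ hb => mem_annihR.2 fun a ha => mem_annihR.1 hb a (h ha)

lemma mem_annihR_adjoin {Φ : Submodule F A} {p : ℕ} {x : Fin p → A} {b : B} :
    b ∈ annihR pr (adjoin Φ x) ↔ b ∈ annihR pr Φ ∧ ∀ i, pr (x i) b = 0 :=
  (mem_annihR_iff_le (Φ := adjoin Φ x)).trans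
    (adjoin_le.trans (and_congr_left' mem_annihR_iff_le.symm))

lemma mem_annihR_sup_span {Φ : Submodule F A} {v : A} {b : B} :
    b ∈ annihR pr (Φ ⊔ F ∙ v) ↔ b ∈ annihR pr Φ ∧ pr v b = 0 := by
  simp_rw [mem_annihR_iff_le, sup_le_iff, Submodule.span_singleton_le_iff_mem]
  rfl

lemma mem_annihL_sup_span {Ψ : Submodule F B} {w : B} {a : A} :
    a ∈ annihL pr (Ψ ⊔ F ∙ w) ↔ a ∈ annihL pr Ψ ∧ pr a w = 0 :=
  mem_annihR_sup_span (pr := pr.flip)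

end Pairing

section Fixer

variable {F A B 𝔾 : Type u} [Field F] [AddCommGroup A] [Module F A] [AddCommGroup B] [Module F B]
  [Group 𝔾] [DistribMulAction 𝔾 A] [DistribMulAction 𝔾 B]

variable (𝔾) in
/-- The subgroup of `𝔾` fixing `Φ` and `Ψ` pointwise. -/
def fixer (Φ : Submodule F A) (Ψ : Submodule F B) : Subgroup 𝔾 :=
  fixingSubgroup 𝔾 (Φ : Set A) ⊓ fixingSubgroup 𝔾 (Ψ : Set B)

variable {Φ Φ' : Submodule F A} {Ψ Ψ' : Submodule F B} {g : 𝔾}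

lemma mem_fixer : g ∈ fixer 𝔾 Φ Ψ ↔ (∀ a ∈ Φ, g • a = a) ∧ ∀ b ∈ Ψ, g • b = b :=
  and_congr (mem_fixingSubgroup_iff 𝔾) (mem_fixingSubgroup_iff 𝔾)

lemma fixer_flip (Φ : Submodule F A) (Ψ : Submodule F B) : fixer 𝔾 Ψ Φ = fixer 𝔾 Φ Ψ :=
  inf_comm _ _

lemma fixer_mono (hΦ : Φ ≤ Φ') (hΨ : Ψ ≤ Ψ') : fixer 𝔾 Φ' Ψ' ≤ fixer 𝔾 Φ Ψ :=
  inf_le_inf (fixingSubgroup_antitone 𝔾 A hΦ) (fixingSubgroup_antitone 𝔾 B hΨ)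

lemma smul_notMem_of_mem_fixer (hg : g ∈ fixer 𝔾 Φ Ψ) {a : A} (ha : a ∉ Φ) : g • a ∉ Φ := by
  intro h
  have := (mem_fixer.1 (inv_mem hg)).1 _ h
  rw [inv_smul_smul] at this
  exact ha (this ▸ h)

variable [SMulCommClass 𝔾 F A]

lemma mem_fixer_adjoin {p : ℕ} {x : Fin p → A} :
    g ∈ fixer 𝔾 (adjoin Φ x) Ψ ↔ g ∈ fixer 𝔾 Φ Ψ ∧ g • x = x := by
  have h : (∀ a ∈ adjoin Φ x, g • a = a) ↔ (∀ a ∈ Φ, g • a = a) ∧ ∀ i, g • x i = x i :=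
    adjoin_le (Θ := LinearMap.eqLocus (DistribSMul.toLinearMap F A g) LinearMap.id)
  rw [mem_fixer, mem_fixer, h, funext_iff]
  simp only [Pi.smul_apply, and_right_comm]

lemma mem_fixer_sup_span {v : A} :
    g ∈ fixer 𝔾 (Φ ⊔ F ∙ v) Ψ ↔ g ∈ fixer 𝔾 Φ Ψ ∧ g • v = v := by
  have h := mem_fixer_adjoin (g := g) (Φ := Φ) (Ψ := Ψ) (x := fun _ : Fin 1 => v)
  rwa [adjoin_fin_one, funext_iff, Fin.forall_fin_one] at h

lemma mul_mul_inv_mem_fixer (hg : g ∈ fixer 𝔾 Φ Ψ) {h : 𝔾} {v : A}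
    (hh : h ∈ fixer 𝔾 (Φ ⊔ F ∙ v) Ψ) : g * h * g⁻¹ ∈ fixer 𝔾 (Φ ⊔ F ∙ (g • v)) Ψ := by
  obtain ⟨hh, hhv⟩ := mem_fixer_sup_span.1 hh
  refine mem_fixer_sup_span.2 ⟨mul_mem (mul_mem hg hh) (inv_mem hg), ?_⟩
  rw [mul_smul, inv_smul_smul, mul_smul, hhv]

lemma smul_mem_adjoin_smul (hg : g ∈ fixer 𝔾 Φ Ψ) {p : ℕ} {x : Fin p → A} {a : A}
    (ha : a ∈ adjoin Φ x) : g • a ∈ adjoin Φ (g • x) := by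
  suffices h : adjoin Φ x ≤ (adjoin Φ (g • x)).comap (DistribSMul.toLinearMap F A g) from h ha
  refine adjoin_le.2 ⟨fun a ha => ?_, fun i => mem_adjoin Φ (g • x) i⟩
  exact le_adjoin _ _ (((mem_fixer.1 hg).1 a ha).symm ▸ ha : g • a ∈ Φ)

end Fixer

section TransvectionPairing

variable {F A B 𝔾 : Type u} [Field F] [AddCommGroup A] [Module F A] [AddCommGroup B] [Module F B]
  [Group 𝔾] [DistribMulAction 𝔾 A] [DistribMulAction 𝔾 B] {pr : A →ₗ[F] B →ₗ[F] F}

variable (𝔾 pr) in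
/-- A pairing of `A` with `B`, invariant under a group `𝔾` acting faithfully on `A`, which separates
vectors from subspaces on both sides and for which every invertible rank one perturbation
`a ↦ a + pr a ξ • u` of the identity of `A` is the action of an element of `𝔾`. -/
structure IsTransvectionPairing : Prop where
  pr_smul_smul (g : 𝔾) (a : A) (b : B) : pr (g • a) (g • b) = pr a b
  exists_annihR_ne_zero (Φ : Submodule F A) (v : A) (hv : v ∉ Φ) :
    ∃ b ∈ annihR pr Φ, pr v b ≠ 0
  exists_annihL_ne_zero (Ψ : Submodule F B) (w : B) (hw : w ∉ Ψ) :
    ∃ a ∈ annihL pr Ψ, pr a w ≠ 0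
  exists_transvection (u : A) (ξ : B) (h : 1 + pr u ξ ≠ 0) :
    ∃ g : 𝔾, ∀ a : A, g • a = a + pr a ξ • u
  eq_one_of_smul_eq (g : 𝔾) (hg : ∀ a : A, g • a = a) : g = 1

namespace IsTransvectionPairing

variable (hpr : IsTransvectionPairing 𝔾 pr)

include hpr

lemma ext_right {b b' : B} (h : ∀ a, pr a b = pr a b') : b = b' := by
  rw [← sub_eq_zero]
  by_contra hb
  obtain ⟨a, -, ha⟩ := hpr.exists_annihL_ne_zero ⊥ _ ((Submodule.mem_bot F).not.2 hb)
  exact ha (by rw [map_sub, h, sub_self])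

lemma ext_left {a a' : A} (h : ∀ b, pr a b = pr a' b) : a = a' := by
  rw [← sub_eq_zero]
  by_contra ha
  obtain ⟨b, -, hb⟩ := hpr.exists_annihR_ne_zero ⊥ _ ((Submodule.mem_bot F).not.2 ha)
  exact hb (by rw [map_sub, LinearMap.sub_apply, h, sub_self])

lemma pr_smul_right (g : 𝔾) (a : A) (b : B) : pr a (g • b) = pr (g⁻¹ • a) b := by
  rw [← hpr.pr_smul_smul g (g⁻¹ • a), smul_inv_smul]

lemma smul_right_eq_iff {g : 𝔾} {b : B} : g • b = b ↔ ∀ a, pr (g • a) b = pr a b := by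
  constructor
  · intro h a
    conv_lhs => rw [← h, hpr.pr_smul_smul]
  · intro h
    refine hpr.ext_right fun a => ?_
    rw [hpr.pr_smul_right, ← h, smul_inv_smul]

lemma flip : IsTransvectionPairing 𝔾 pr.flip where
  pr_smul_smul g b a := hpr.pr_smul_smul g a b
  exists_annihR_ne_zero := hpr.exists_annihL_ne_zero
  exists_annihL_ne_zero := hpr.exists_annihR_ne_zero
  exists_transvection ξ u h := by
    simp only [LinearMap.flip_apply] at h ⊢
    have hinv : 1 + pr (-(1 + pr u ξ)⁻¹ • u) ξ = (1 + pr u ξ)⁻¹ := by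
      rw [map_smul, LinearMap.smul_apply, smul_eq_mul]
      field_simp
      ring
    obtain ⟨g, hg⟩ := hpr.exists_transvection (-(1 + pr u ξ)⁻¹ • u) ξ
      (by rw [hinv]; exact inv_ne_zero h)
    have hg_inv (a : A) : g⁻¹ • a = a + pr a ξ • u := by
      rw [inv_smul_eq_iff, hg]
      simp only [map_add, map_smul, LinearMap.add_apply, LinearMap.smul_apply, smul_eq_mul]
      match_scalars <;> field_simp
      ring
    refine ⟨g, fun b => hpr.ext_right fun a => ?_⟩
    rw [hpr.pr_smul_right, hg_inv]
    simp only [map_add, map_smul, LinearMap.add_apply, LinearMap.smul_apply, smul_eq_mul]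
    ring
  eq_one_of_smul_eq g hg := hpr.eq_one_of_smul_eq g fun a => hpr.ext_left fun b => by
    rw [← hpr.pr_smul_smul g a b, hg]

variable {Φ : Submodule F A} {Ψ : Submodule F B}

lemma exists_annihR_eq_one {v : A} (hv : v ∉ Φ) : ∃ ξ ∈ annihR pr Φ, pr v ξ = 1 := by
  obtain ⟨b, hb, hvb⟩ := hpr.exists_annihR_ne_zero Φ v hv
  exact ⟨(pr v b)⁻¹ • b, Submodule.smul_mem _ _ hb, by simp [hvb]⟩

lemma smul_sub_mem_annihL {g : 𝔾} (hg : g ∈ fixer 𝔾 Φ Ψ) (a : A) : g • a - a ∈ annihL pr Ψ :=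
  mem_annihL.2 fun b hb => by
    rw [map_sub, LinearMap.sub_apply, hpr.smul_right_eq_iff.1 ((mem_fixer.1 hg).2 b hb), sub_self]

lemma smul_mem_annihL {g : 𝔾} (hg : g ∈ fixer 𝔾 Φ Ψ) {a : A} (ha : a ∈ annihL pr Ψ) :
    g • a ∈ annihL pr Ψ :=
  (Submodule.sub_mem_iff_left _ ha).1 (hpr.smul_sub_mem_annihL hg a)

lemma exists_transvection_mem_fixer {u : A} {ξ : B} (hu : u ∈ annihL pr Ψ) (hξ : ξ ∈ annihR pr Φ)
    (h : 1 + pr u ξ ≠ 0) : ∃ g ∈ fixer 𝔾 Φ Ψ, ∀ a : A, g • a = a + pr a ξ • u := by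
  obtain ⟨g, hg⟩ := hpr.exists_transvection u ξ h
  refine ⟨g, mem_fixer.2 ⟨fun a ha => ?_, fun b hb => hpr.smul_right_eq_iff.2 fun a => ?_⟩, hg⟩
  · rw [hg, mem_annihR.1 hξ a ha, zero_smul, add_zero]
  · rw [hg, map_add, map_smul, LinearMap.add_apply, LinearMap.smul_apply, mem_annihL.1 hu b hb,
      smul_zero, add_zero]

lemma exists_annihR_pr_ne_zero_of_notMem {v v' : A} (hv : v ∉ Φ) (hv' : v' ∉ Φ) :
    ∃ ξ ∈ annihR pr Φ, pr v ξ ≠ 0 ∧ pr v' ξ ≠ 0 := by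
  obtain ⟨ξ, hξ, hvξ⟩ := hpr.exists_annihR_ne_zero Φ v hv
  obtain ⟨ξ', hξ', hvξ'⟩ := hpr.exists_annihR_ne_zero Φ v' hv'
  by_cases h : pr v' ξ = 0
  · by_cases h' : pr v ξ' = 0
    · exact ⟨ξ + ξ', Submodule.add_mem _ hξ hξ', by simpa [h'] using hvξ, by simpa [h] using hvξ'⟩
    · exact ⟨ξ', hξ', h', hvξ'⟩
  · exact ⟨ξ, hξ, hvξ, h⟩

lemma exists_fixer_smul_eq {v v' : A} (hv : v ∉ Φ) (hv' : v' ∉ Φ) (h : v' - v ∈ annihL pr Ψ) :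
    ∃ g ∈ fixer 𝔾 Φ Ψ, g • v = v' := by
  obtain ⟨ξ, hξ, hvξ, hvξ'⟩ := hpr.exists_annihR_pr_ne_zero_of_notMem hv hv'
  obtain ⟨g, hg, hga⟩ := hpr.exists_transvection_mem_fixer (u := v' - v) (ξ := (pr v ξ)⁻¹ • ξ) h
    (Submodule.smul_mem _ _ hξ) (by simp [mul_sub, hvξ, hvξ'])
  exact ⟨g, hg, by simp [hga, hvξ]⟩

lemma annihL_le_adjoin_of_smul [SMulCommClass 𝔾 F A] {g : 𝔾} (hg : g ∈ fixer 𝔾 Φ Ψ)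
    {p : ℕ} {x : Fin p → A}
    (h : annihL pr Ψ ≤ adjoin Φ (g • x)) : annihL pr Ψ ≤ adjoin Φ x := by
  intro a ha
  have := smul_mem_adjoin_smul (inv_mem hg) (h (hpr.smul_mem_annihL hg ha))
  rwa [inv_smul_smul, inv_smul_smul] at this

end IsTransvectionPairing

end TransvectionPairing

section RankGE

variable {F A B : Type u} [Field F] [AddCommGroup A] [Module F A] [AddCommGroup B] [Module F B]

/-- The pairing between the annihilator of `Ψ` and the annihilator of `Φ` has rank at least `n`,
witnessed by dual families of length `n`. -/
def RankGE (pr : A →ₗ[F] B →ₗ[F] F) (Φ : Submodule F A) (Ψ : Submodule F B) (n : ℕ) : Prop :=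
  ∃ (f : Fin n → A) (ξ : Fin n → B), (∀ i, f i ∈ annihL pr Ψ) ∧ (∀ i, ξ i ∈ annihR pr Φ) ∧
    ∀ i j, pr (f i) (ξ j) = if i = j then 1 else 0

namespace RankGE

variable {pr : A →ₗ[F] B →ₗ[F] F} {Φ : Submodule F A} {Ψ : Submodule F B} {m n : ℕ}

lemma flip (h : RankGE pr Φ Ψ n) : RankGE pr.flip Ψ Φ n := by
  obtain ⟨f, ξ, hf, hξ, hfξ⟩ := h
  exact ⟨ξ, f, hξ, hf, fun i j => (hfξ j i).trans (by simp only [eq_comm])⟩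

lemma mono (h : RankGE pr Φ Ψ n) (hmn : m ≤ n) : RankGE pr Φ Ψ m := by
  obtain ⟨f, ξ, hf, hξ, hfξ⟩ := h
  exact ⟨f ∘ Fin.castLE hmn, ξ ∘ Fin.castLE hmn, fun _ => hf _, fun _ => hξ _, fun i j => by
    simp [hfξ]⟩

lemma sup_span (h : RankGE pr Φ Ψ (n + 1)) (v : A) : RankGE pr (Φ ⊔ F ∙ v) Ψ n := by
  obtain ⟨f, ξ, hf, hξ, hfξ⟩ := h
  by_cases hv : ∀ j, pr v (ξ j) = 0
  · exact ⟨f ∘ Fin.succ, ξ ∘ Fin.succ, fun _ => hf _,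
      fun _ => mem_annihR_sup_span.2 ⟨hξ _, hv _⟩, fun i j => by simp [hfξ]⟩
  · push Not at hv
    obtain ⟨k, hk⟩ := hv
    refine ⟨f ∘ k.succAbove,
    fun i => ξ (k.succAbove i) - (pr v (ξ (k.succAbove i)) / pr v (ξ k)) • ξ k,
      fun _ => hf _, fun i => mem_annihR_sup_span.2
        ⟨Submodule.sub_mem _ (hξ _) (Submodule.smul_mem _ _ (hξ _)), ?_⟩, fun i j => ?_⟩
    · simp [div_mul_cancel₀ _ hk]
    · simp [hfξ, Fin.succAbove_ne]

lemma not_annihL_le (h : RankGE pr Φ Ψ 1) : ¬ annihL pr Ψ ≤ Φ := by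
  obtain ⟨f, ξ, hf, hξ, hfξ⟩ := h
  intro hle
  simpa [hfξ] using mem_annihR.1 (hξ 0) _ (hle (hf 0))

lemma exists_notMem (h : RankGE pr Φ Ψ 2) (ε : B) : ∃ v ∈ annihL pr Ψ, pr v ε = 0 ∧ v ∉ Φ := by
  obtain ⟨v, hv, hvΦ⟩ := Set.not_subset.1 (h.flip.sup_span ε).flip.not_annihL_le
  exact ⟨v, (mem_annihL_sup_span.1 hv).1, (mem_annihL_sup_span.1 hv).2, hvΦ⟩

end RankGE

lemma IsTransvectionPairing.rankGE_sup_span {𝔾 : Type u} [Group 𝔾] [DistribMulAction 𝔾 A]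
    [DistribMulAction 𝔾 B] {pr : A →ₗ[F] B →ₗ[F] F} (hpr : IsTransvectionPairing 𝔾 pr)
    {Φ : Submodule F A} {Ψ : Submodule F B} {n : ℕ} (h : RankGE pr Φ Ψ n) {v : A}
    (hv : v ∉ Φ ⊔ annihL pr Ψ) : RankGE pr (Φ ⊔ F ∙ v) Ψ n := by
  obtain ⟨f, ξ, hf, hξ, hfξ⟩ := h
  obtain ⟨η, hη, hvη⟩ := hpr.exists_annihR_eq_one hv
  refine ⟨f, fun i => ξ i - pr v (ξ i) • η, hf, fun i => mem_annihR_sup_span.2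
    ⟨Submodule.sub_mem _ (hξ i) (Submodule.smul_mem _ _ (annihR_anti le_sup_left hη)), ?_⟩,
    fun i j => ?_⟩
  · simp [hvη]
  · simp [hfξ, mem_annihR.1 hη _ (Submodule.mem_sup_right (hf i))]

end RankGE

section HyperbolicDatum

variable {F A B 𝔾 : Type u} [Field F] [AddCommGroup A] [Module F A] [AddCommGroup B] [Module F B]
  [Group 𝔾] [DistribMulAction 𝔾 A] [DistribMulAction 𝔾 B] {pr : A →ₗ[F] B →ₗ[F] F}

variable (pr) in
/-- Subspaces `Φ` and `Ψ` on the two sides of a pairing, together with a hyperbolic pair `e`, `ε` in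
their annihilators. It stands for the inclusion of the pointwise stabilizer of `Φ`, `Ψ`, `e` and `ε`
into that of `Φ` and `Ψ`. -/
structure HyperbolicDatum where
  Φ : Submodule F A
  Ψ : Submodule F B
  e : A
  ε : B
  e_mem : e ∈ annihL pr Ψ
  ε_mem : ε ∈ annihR pr Φ
  pr_eq_one : pr e ε = 1

namespace HyperbolicDatum

variable (D : HyperbolicDatum pr)

variable (𝔾) in
/-- The pointwise stabilizer of `Φ` and `Ψ`. -/
abbrev outer : Subgroup 𝔾 := fixer 𝔾 D.Φ D.Ψ

variable (𝔾) in
/-- The pointwise stabilizer of `Φ`, `Ψ` and the hyperbolic pair. -/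
abbrev inner : Subgroup 𝔾 := fixer 𝔾 (D.Φ ⊔ F ∙ D.e) (D.Ψ ⊔ F ∙ D.ε)

variable (𝔾) in
lemma inner_le_outer : D.inner 𝔾 ≤ D.outer 𝔾 := fixer_mono le_sup_left le_sup_left

/-- The same datum for the pairing with its sides exchanged. -/
abbrev flip : HyperbolicDatum pr.flip where
  Φ := D.Ψ
  Ψ := D.Φ
  e := D.ε
  ε := D.e
  e_mem := D.ε_mem
  ε_mem := D.e_mem
  pr_eq_one := D.pr_eq_one

/-- The datum with `Φ` replaced by `Θ`. -/
abbrev withLeft (Θ : Submodule F A) (hΘ : D.ε ∈ annihR pr Θ) : HyperbolicDatum pr :=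
  { D with Φ := Θ, ε_mem := hΘ }

variable {D}

lemma notMem_sup_e {a : A} (ha : a ∉ D.Φ) (haε : pr a D.ε = 0) : a ∉ D.Φ ⊔ F ∙ D.e := by
  intro h
  obtain ⟨c, hc⟩ := mem_sup_span_singleton.1 h
  have hc0 : c = 0 := by simpa [haε, D.pr_eq_one] using mem_annihR.1 D.ε_mem _ hc
  exact ha (by simpa [hc0] using hc)

lemma mem_of_mem_sup_e {a : A} (ha : a ∈ D.Φ ⊔ F ∙ D.e) (haε : pr a D.ε = 0) : a ∈ D.Φ := by
  by_contra h
  exact notMem_sup_e h haε ha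

lemma pr_smul_ε (hpr : IsTransvectionPairing 𝔾 pr) {k : 𝔾} (hk : k ∈ D.inner 𝔾) (a : A) :
    pr (k • a) D.ε = pr a D.ε :=
  hpr.smul_right_eq_iff.1 ((mem_fixer.1 hk).2 _
    (Submodule.mem_sup_right (Submodule.mem_span_singleton_self _))) a

lemma exists_sub_mem_annihL_notMem {a : A} (ha : a ∉ D.Φ) (h : ¬ annihL pr D.Ψ ≤ D.Φ ⊔ F ∙ a) :
    ∃ a' ∉ D.Φ, a' - a ∈ annihL pr D.Ψ ∧ pr a' D.ε = 0 := by
  by_cases ha' : a - pr a D.ε • D.e ∈ D.Φ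
  · obtain ⟨w, hw, hwa⟩ := Set.not_subset.1 h
    have haε : pr a D.ε ≠ 0 := fun h0 => ha (by simpa [h0] using ha')
    have he : D.e ∈ D.Φ ⊔ F ∙ a := by
      refine mem_sup_span_singleton.2 ⟨(pr a D.ε)⁻¹, ?_⟩
      convert Submodule.smul_mem _ (-(pr a D.ε)⁻¹) ha' using 1
      match_scalars <;> simp [haε]
    refine ⟨a - pr a D.ε • D.e + (w - pr w D.ε • D.e), fun hmem => hwa ?_, ?_, ?_⟩
    · have := Submodule.mem_sup_left (T := F ∙ a) ((Submodule.add_mem_iff_right _ ha').1 hmem)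
      exact (Submodule.sub_mem_iff_left _ (Submodule.smul_mem _ _ he)).1 this
    · have hew (c : F) : c • D.e ∈ annihL pr D.Ψ := Submodule.smul_mem _ _ D.e_mem
      convert Submodule.sub_mem _ (Submodule.sub_mem _ hw (hew (pr a D.ε))) (hew (pr w D.ε)) using 1
      abel
    · simp [D.pr_eq_one]
  · refine ⟨_, ha', ?_, by simp [D.pr_eq_one]⟩
    rw [sub_sub_cancel_left]
    exact Submodule.neg_mem _ (Submodule.smul_mem _ _ D.e_mem)

lemma exists_outer_pr_smul_eq_zero (hpr : IsTransvectionPairing 𝔾 pr) {a : A}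
    (h : ¬ annihL pr D.Ψ ≤ D.Φ ⊔ F ∙ a) : ∃ g ∈ D.outer 𝔾, pr (g • a) D.ε = 0 := by
  by_cases ha : a ∈ D.Φ
  · exact ⟨1, one_mem _, by rw [one_smul, mem_annihR.1 D.ε_mem a ha]⟩
  · obtain ⟨a', ha', hsub, haε⟩ := exists_sub_mem_annihL_notMem ha h
    obtain ⟨g, hg, rfl⟩ := hpr.exists_fixer_smul_eq ha ha' hsub
    exact ⟨g, hg, haε⟩

variable [SMulCommClass 𝔾 F A]

lemma exists_outer_forall_pr_smul_eq_zero (hpr : IsTransvectionPairing 𝔾 pr) {p : ℕ}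
    {x : Fin p → A} (h : ¬ annihL pr D.Ψ ≤ adjoin D.Φ x) :
    ∃ g ∈ D.outer 𝔾, ∀ i, pr ((g • x) i) D.ε = 0 := by
  induction p with
  | zero => exact ⟨1, one_mem _, fun i => i.elim0⟩
  | succ p ih =>
    obtain ⟨a, x, rfl⟩ := exists_eq_vecCons x
    obtain ⟨g, hg, hgx⟩ := ih fun h' => h (h'.trans (adjoin_vecCons D.Φ a x ▸ le_sup_left))
    let D' := D.withLeft (adjoin D.Φ (g • x)) (mem_annihR_adjoin.2 ⟨D.ε_mem, hgx⟩)
    have hD' : ¬ annihL pr D'.Ψ ≤ D'.Φ ⊔ F ∙ (g • a) := by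
      rw [← adjoin_vecCons, ← Matrix.smul_cons]
      exact fun h' => h (hpr.annihL_le_adjoin_of_smul hg h')
    obtain ⟨k, hk, hka⟩ := exists_outer_pr_smul_eq_zero hpr hD'
    obtain ⟨hkD, hkx⟩ := mem_fixer_adjoin.1 hk
    refine ⟨k * g, mul_mem hkD hg, ?_⟩
    rw [mul_smul, Matrix.smul_cons, Matrix.smul_cons, hkx]
    exact (forall_vecCons (p := (pr · D.ε = 0))).2 ⟨hka, hgx⟩

lemma exists_inner_smul_eq (hpr : IsTransvectionPairing 𝔾 pr) {p : ℕ} {x : Fin p → A} {h : 𝔾}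
    (hh : h ∈ D.outer 𝔾) (hx : ∀ i, pr (x i) D.ε = 0) (hhx : ∀ i, pr ((h • x) i) D.ε = 0) :
    ∃ k ∈ D.inner 𝔾, k • x = h • x := by
  induction p generalizing D h with
  | zero => exact ⟨1, one_mem _, Subsingleton.elim _ _⟩
  | succ p ih =>
    obtain ⟨a, x, rfl⟩ := exists_eq_vecCons x
    rw [Matrix.smul_cons] at hhx
    simp only [Matrix.smul_cons]
    replace hx := (forall_vecCons (p := (pr · D.ε = 0))).1 hx
    replace hhx := (forall_vecCons (p := (pr · D.ε = 0))).1 hhx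
    by_cases ha : a ∈ D.Φ
    · obtain ⟨k, hk, hkx⟩ := ih hh hx.2 hhx.2
      refine ⟨k, hk, ?_⟩
      rw [hkx, (mem_fixer.1 hh).1 a ha, (mem_fixer.1 hk).1 a (Submodule.mem_sup_left ha)]
    · obtain ⟨k, hk, hka⟩ := hpr.exists_fixer_smul_eq (Ψ := D.Ψ ⊔ F ∙ D.ε) (notMem_sup_e ha hx.1)
        (notMem_sup_e (smul_notMem_of_mem_fixer hh ha) hhx.1)
        (mem_annihL_sup_span.2 ⟨hpr.smul_sub_mem_annihL hh a, by simp [hx.1, hhx.1]⟩)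
      let D' := D.withLeft (D.Φ ⊔ F ∙ (h • a)) (mem_annihR_sup_span.2 ⟨D.ε_mem, hhx.1⟩)
      have hD' : h * k⁻¹ ∈ D'.outer 𝔾 := mem_fixer_sup_span.2
        ⟨mul_mem hh (inv_mem (D.inner_le_outer 𝔾 hk)), by rw [← hka, mul_smul, inv_smul_smul, hka]⟩
      obtain ⟨k', hk', hk'x⟩ := ih (D := D') (x := k • x) hD'
        (fun i => (pr_smul_ε hpr hk _).trans (hx.2 i)) (by simpa [mul_smul] using hhx.2)
      have hk'a : k' • h • a = h • a := (mem_fixer.1 hk').1 _ (Submodule.mem_sup_left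
        (Submodule.mem_sup_right (Submodule.mem_span_singleton_self _)))
      refine ⟨k' * k, mul_mem (fixer_mono (sup_le_sup_right le_sup_left _) le_rfl hk') hk, ?_⟩
      rw [mul_smul, mul_smul, hka, hk'a, hk'x, ← mul_smul, inv_mul_cancel_right]

end HyperbolicDatum

end HyperbolicDatum

section Coset

variable {F A B 𝔾 : Type u} [Field F] [AddCommGroup A] [Module F A] [AddCommGroup B] [Module F B]
  [Group 𝔾] [DistribMulAction 𝔾 A] [DistribMulAction 𝔾 B] {pr : A →ₗ[F] B →ₗ[F] F}

variable (pr) in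
/-- The vectors of the coset of `c` modulo the annihilator of `Ψ` which lie outside of `Φ`. -/
def cosetOutside (Φ : Submodule F A) (Ψ : Submodule F B) (c : A) : Set A :=
  {v | v - c ∈ annihL pr Ψ ∧ v ∉ Φ}

namespace IsTransvectionPairing

variable {Φ : Submodule F A} {Ψ : Submodule F B} {c : A} {p : ℕ}
  (hpr : IsTransvectionPairing 𝔾 pr)

variable (Φ Ψ c) in
/-- The pointwise stabilizer of `Φ` and `Ψ`, acting on `cosetOutside pr Φ Ψ c`. -/
def cosetSet : GroupSet 𝔾 where
  H := fixer 𝔾 Φ Ψ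
  Y := cosetOutside pr Φ Ψ c
  action :=
    { smul g v := ⟨(g : 𝔾) • (v : A), by
        rw [← sub_add_sub_cancel _ (v : A)]
        exact Submodule.add_mem _ (hpr.smul_sub_mem_annihL g.2 v) v.2.1,
        smul_notMem_of_mem_fixer g.2 v.2.2⟩
      one_smul v := Subtype.ext (one_smul 𝔾 (v : A))
      mul_smul g h v := Subtype.ext (mul_smul (g : 𝔾) (h : 𝔾) (v : A)) }

/-- The vector underlying an element of the coset. -/
def cosetVal : (hpr.cosetSet Φ Ψ c).Y → A := Subtype.val

lemma cosetVal_injective :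
    Function.Injective (hpr.cosetVal (Φ := Φ) (Ψ := Ψ) (c := c)) :=
  Subtype.val_injective

lemma cosetVal_comp_injective : Function.Injective
    fun x : Fin p → (hpr.cosetSet Φ Ψ c).Y => hpr.cosetVal ∘ x :=
  hpr.cosetVal_injective.comp_left

lemma cosetVal_mem (v : (hpr.cosetSet Φ Ψ c).Y) : hpr.cosetVal v ∈ cosetOutside pr Φ Ψ c := v.2

lemma exists_cosetVal_eq {v : A} (hv : v ∈ cosetOutside pr Φ Ψ c) :
    ∃ w : (hpr.cosetSet Φ Ψ c).Y, hpr.cosetVal w = v :=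
  ⟨⟨v, hv⟩, rfl⟩

lemma cosetVal_sub_mem_annihL (v w : (hpr.cosetSet Φ Ψ c).Y) :
    hpr.cosetVal v - hpr.cosetVal w ∈ annihL pr Ψ := by
  rw [← sub_sub_sub_cancel_right _ _ c]
  exact Submodule.sub_mem _ (hpr.cosetVal_mem v).1 (hpr.cosetVal_mem w).1

variable [SMulCommClass 𝔾 F A]

lemma stabilizer_cosetSet_power (x : Fin p → (hpr.cosetSet Φ Ψ c).Y) :
    ((hpr.cosetSet Φ Ψ c).power p).stabilizer (of x) =
      fixer 𝔾 (adjoin Φ (hpr.cosetVal ∘ x)) Ψ := by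
  ext g
  rw [GroupSet.mem_stabilizer_of, mem_fixer_adjoin, ← exists_prop]
  exact exists_congr fun hg => hpr.cosetVal_comp_injective.eq_iff.symm

end IsTransvectionPairing

namespace HyperbolicDatum

variable {D : HyperbolicDatum pr} {c : A} {p : ℕ}

lemma mem_cosetOutside_inner_iff (hc : pr c D.ε = 0) {v : A} :
    v ∈ cosetOutside pr (D.Φ ⊔ F ∙ D.e) (D.Ψ ⊔ F ∙ D.ε) c ↔
      v ∈ cosetOutside pr D.Φ D.Ψ c ∧ pr v D.ε = 0 := by
  simp only [cosetOutside, Set.mem_ofPred_eq, mem_annihL_sup_span, map_sub, LinearMap.sub_apply,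
    hc, sub_zero]
  constructor
  · rintro ⟨⟨hv, hvε⟩, hΦ⟩
    exact ⟨⟨hv, fun h => hΦ (Submodule.mem_sup_left h)⟩, hvε⟩
  · rintro ⟨⟨hv, hΦ⟩, hvε⟩
    exact ⟨⟨hv, hvε⟩, notMem_sup_e hΦ hvε⟩

variable (hpr : IsTransvectionPairing 𝔾 pr) (hc : pr c D.ε = 0)

/-- The inner group of a datum acting on the vectors of a coset which are orthogonal to the
hyperbolic pair, inside the outer group acting on all the vectors of the coset. -/
abbrev cosetPair : GroupPair 𝔾 where
  S := hpr.cosetSet (D.Φ ⊔ F ∙ D.e) (D.Ψ ⊔ F ∙ D.ε) c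
  T := hpr.cosetSet D.Φ D.Ψ c
  le := D.inner_le_outer 𝔾
  ι := Set.inclusion fun _ hv => ((mem_cosetOutside_inner_iff hc).1 hv).1
  ι_smul _ _ := rfl

lemma pr_cosetVal_ε (x : (cosetPair hpr hc).S.Y) : pr (hpr.cosetVal x) D.ε = 0 :=
  ((mem_cosetOutside_inner_iff hc).1 (hpr.cosetVal_mem x)).2

lemma exists_ι_comp_eq {x : Fin p → (cosetPair hpr hc).T.Y}
    (hx : ∀ i, pr (hpr.cosetVal (x i)) D.ε = 0) : ∃ y, (cosetPair hpr hc).ι ∘ y = x :=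
  ⟨fun i => ⟨(x i).1, (mem_cosetOutside_inner_iff hc).2 ⟨(x i).2, hx i⟩⟩, rfl⟩

lemma ε_mem_annihR_adjoin (x : Fin p → (cosetPair hpr hc).S.Y) :
    D.ε ∈ annihR pr (adjoin D.Φ (hpr.cosetVal ∘ x)) :=
  mem_annihR_adjoin.2 ⟨D.ε_mem, fun i => pr_cosetVal_ε hpr hc (x i)⟩

/-- The datum whose inner and outer groups are the stabilizers of a tuple of the coset. -/
abbrev adjoinTuple (x : Fin p → (cosetPair hpr hc).S.Y) : HyperbolicDatum pr :=
  D.withLeft (adjoin D.Φ (hpr.cosetVal ∘ x)) (ε_mem_annihR_adjoin hpr hc x)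

variable [SMulCommClass 𝔾 F A]

lemma exists_smul_ι_comp_eq (x : Fin p → (cosetPair hpr hc).T.Y)
    (hx : ¬ annihL pr D.Ψ ≤ adjoin D.Φ (hpr.cosetVal ∘ x)) :
    ∃ (g : (cosetPair hpr hc).T.H) (y : Fin p → (cosetPair hpr hc).S.Y),
      g • ((cosetPair hpr hc).ι ∘ y) = x := by
  obtain ⟨g, hg, hgx⟩ := exists_outer_forall_pr_smul_eq_zero hpr hx
  lift g to (cosetPair hpr hc).T.H using hg
  obtain ⟨y, hy⟩ := exists_ι_comp_eq hpr hc (x := g • x) hgx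
  exact ⟨g⁻¹, y, by rw [hy, inv_smul_smul]⟩

lemma bijective_orbitMap_cosetPair_power (hx : ∀ x : Fin p → (cosetPair hpr hc).T.Y,
    ¬ annihL pr D.Ψ ≤ adjoin D.Φ (hpr.cosetVal ∘ x)) :
    Function.Bijective ((cosetPair hpr hc).power p).orbitMap := by
  refine GroupPair.bijective_orbitMap (fun x y h hh => ?_)
    fun x => exists_smul_ι_comp_eq hpr hc x (hx x)
  have hyx : (h : 𝔾) • (hpr.cosetVal ∘ y) = hpr.cosetVal ∘ x := congrArg (hpr.cosetVal ∘ ·) hh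
  obtain ⟨k, hk, hky⟩ := exists_inner_smul_eq hpr (x := hpr.cosetVal ∘ y) h.2
    (fun i => pr_cosetVal_ε hpr hc (y i)) (hyx ▸ fun i => pr_cosetVal_ε hpr hc (x i))
  exact ⟨⟨k, hk⟩, hpr.cosetVal_comp_injective (hky.trans hyx)⟩

lemma stabilizer_eq_inner (x : Fin p → (cosetPair hpr hc).S.Y) :
    ((cosetPair hpr hc).power p).S.stabilizer (of x) = (adjoinTuple hpr hc x).inner 𝔾 :=
  (hpr.stabilizer_cosetSet_power x).trans (by rw [adjoin, sup_right_comm]; rfl)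

lemma stabilizer_eq_outer (x : Fin p → (cosetPair hpr hc).S.Y) :
    ((cosetPair hpr hc).power p).T.stabilizer (map ((cosetPair hpr hc).power p).ι (of x)) =
      (adjoinTuple hpr hc x).outer 𝔾 := by
  rw [FreeAbelianGroup.map_of_apply]
  exact hpr.stabilizer_cosetSet_power _

end HyperbolicDatum

end Coset

section Moves

variable {F A B 𝔾 : Type u} [Field F] [AddCommGroup A] [Module F A] [AddCommGroup B] [Module F B]
  [Group 𝔾] [DistribMulAction 𝔾 A] [DistribMulAction 𝔾 B] {pr : A →ₗ[F] B →ₗ[F] F}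

namespace IsTransvectionPairing

variable {Φ Θ : Submodule F A} {Ψ : Submodule F B} {c : A} {p : ℕ}

lemma exists_cosetVal_eq_affine (hpr : IsTransvectionPairing 𝔾 pr) (v₁ v₂ : (hpr.cosetSet Φ Ψ c).Y)
    {η : B} (hη : η ∈ annihR pr Φ) {t : F}
    (h : pr ((1 - t) • hpr.cosetVal v₁ + t • hpr.cosetVal v₂) η ≠ 0) :
    ∃ w : (hpr.cosetSet Φ Ψ c).Y,
      hpr.cosetVal w = (1 - t) • hpr.cosetVal v₁ + t • hpr.cosetVal v₂ := by
  refine hpr.exists_cosetVal_eq ⟨?_, fun hmem => h (mem_annihR.1 hη _ hmem)⟩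
  convert Submodule.add_mem _ (Submodule.smul_mem _ (1 - t) (hpr.cosetVal_mem v₁).1)
    (Submodule.smul_mem _ t (hpr.cosetVal_mem v₂).1) using 1
  module

/-- A subgroup of the chains on `(p + 2)`-tuples of a coset is move closed with respect to a
subspace `Θ` if, for tuples of vectors of `Θ`, it contains all boundaries, all differences of tuples
which are related by a transvection, and all the tuples with an entry which depends on the others
modulo `Φ`. -/
structure MoveClosed (hpr : IsTransvectionPairing 𝔾 pr) (Θ : Submodule F A)
    (S : AddSubgroup (FreeAbelianGroup (Fin (p + 2) → (hpr.cosetSet Φ Ψ c).Y))) : Prop where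
  boundary_mem (y : Fin (p + 3) → (hpr.cosetSet Φ Ψ c).Y) (hy : ∀ i, hpr.cosetVal (y i) ∈ Θ) :
    boundary (p + 2) (of y) ∈ S
  smul_sub_mem (u : A) (η : B) (hu : u ∈ Θ ⊓ annihL pr Ψ) (hη : η ∈ annihR pr Φ)
    (hΘη : ∃ u' ∈ Θ ⊓ annihL pr Ψ, pr u' η ≠ 0) (g : (hpr.cosetSet Φ Ψ c).H)
    (hg : ∀ a : A, (g : 𝔾) • a = a + pr a η • u) (y : Fin (p + 2) → (hpr.cosetSet Φ Ψ c).Y)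
    (hy : ∀ i, hpr.cosetVal (y i) ∈ Θ) : of (g • y) - of y ∈ S
  degenerate_mem (y : Fin (p + 2) → (hpr.cosetSet Φ Ψ c).Y) (hy : ∀ i, hpr.cosetVal (y i) ∈ Θ)
    (i : Fin (p + 2)) (hi : hpr.cosetVal (y i) ∈ adjoin Φ (hpr.cosetVal ∘ y ∘ i.succAbove)) :
    of y ∈ S

namespace MoveClosed

variable {hpr : IsTransvectionPairing 𝔾 pr}
  {S : AddSubgroup (FreeAbelianGroup (Fin (p + 2) → (hpr.cosetSet Φ Ψ c).Y))}
  (hS : hpr.MoveClosed Θ S) {v₁ v₂ w : (hpr.cosetSet Φ Ψ c).Y}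
  {x : Fin p → (hpr.cosetSet Φ Ψ c).Y} {η₁ η₂ : B} {t : F}

include hS

lemma transvection_sub_mem {u : A} {η : B} (hu : u ∈ Θ ⊓ annihL pr Ψ) (hη : η ∈ annihR pr Φ)
    (huη : 1 + pr u η ≠ 0) (hΘη : ∃ u' ∈ Θ ⊓ annihL pr Ψ, pr u' η ≠ 0)
    {y y' : Fin (p + 2) → (hpr.cosetSet Φ Ψ c).Y} (hy : ∀ i, hpr.cosetVal (y i) ∈ Θ)
    (hy' : ∀ i, hpr.cosetVal (y' i) = hpr.cosetVal (y i) + pr (hpr.cosetVal (y i)) η • u) :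
    of y' - of y ∈ S := by
  obtain ⟨g, hg, hga⟩ := hpr.exists_transvection_mem_fixer hu.2 hη huη
  lift g to (hpr.cosetSet Φ Ψ c).H using hg
  obtain rfl : y' = g • y :=
    hpr.cosetVal_comp_injective (funext fun i => (hy' i).trans (hga _).symm)
  exact hS.smul_sub_mem u η hu hη hΘη g hga y hy

/-- The transvection along `(1 - t) • (v₁ - v₂)` and `η₂` fixes `v₁` and `x` and takes `v₂` to
`w`. -/
lemma replace_right_mem (ht₀ : t ≠ 0) (hv₁ : hpr.cosetVal v₁ ∈ Θ) (hv₂ : hpr.cosetVal v₂ ∈ Θ)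
    (hx : ∀ i, hpr.cosetVal (x i) ∈ Θ)
    (hw : hpr.cosetVal w = (1 - t) • hpr.cosetVal v₁ + t • hpr.cosetVal v₂)
    (hη₂ : η₂ ∈ annihR pr Φ) (hv₁η₂ : pr (hpr.cosetVal v₁) η₂ = 0)
    (hv₂η₂ : pr (hpr.cosetVal v₂) η₂ = 1) (hxη₂ : ∀ i, pr (hpr.cosetVal (x i)) η₂ = 0) :
    of (vecCons v₁ (vecCons w x)) - of (vecCons v₁ (vecCons v₂ x)) ∈ S := by
  have hu : hpr.cosetVal v₁ - hpr.cosetVal v₂ ∈ Θ ⊓ annihL pr Ψ :=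
    ⟨Submodule.sub_mem _ hv₁ hv₂, hpr.cosetVal_sub_mem_annihL _ _⟩
  refine hS.transvection_sub_mem (η := η₂) (Submodule.smul_mem _ (1 - t) hu) hη₂
    (by simpa [hv₁η₂, hv₂η₂]) ⟨_, hu, by simp [hv₁η₂, hv₂η₂]⟩ ?_ ?_
  · simp only [Fin.forall_fin_succ (n := p + 1), Fin.forall_fin_succ (n := p)]
    exact ⟨hv₁, hv₂, hx⟩
  · simp only [Fin.forall_fin_succ (n := p + 1), Fin.forall_fin_succ (n := p)]
    refine ⟨by simp [hv₁η₂], ?_, fun i => by simp [hxη₂]⟩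
    simp only [Matrix.cons_val_zero, Matrix.cons_val_succ, hw, hv₂η₂]
    module

/-- The transvection along `v₂ - v₁` and `η₁ - ((1 - t) / t) • η₂` fixes `w` and `x` and takes `v₁`
to `v₂`. -/
lemma replace_left_mem (ht₀ : t ≠ 0) (ht₁ : t ≠ 1) (hv₁ : hpr.cosetVal v₁ ∈ Θ)
    (hv₂ : hpr.cosetVal v₂ ∈ Θ) (hx : ∀ i, hpr.cosetVal (x i) ∈ Θ)
    (hw : hpr.cosetVal w = (1 - t) • hpr.cosetVal v₁ + t • hpr.cosetVal v₂)
    (hη₁ : η₁ ∈ annihR pr Φ) (hv₁η₁ : pr (hpr.cosetVal v₁) η₁ = 1)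
    (hv₂η₁ : pr (hpr.cosetVal v₂) η₁ = 0) (hxη₁ : ∀ i, pr (hpr.cosetVal (x i)) η₁ = 0)
    (hη₂ : η₂ ∈ annihR pr Φ) (hv₁η₂ : pr (hpr.cosetVal v₁) η₂ = 0)
    (hv₂η₂ : pr (hpr.cosetVal v₂) η₂ = 1) (hxη₂ : ∀ i, pr (hpr.cosetVal (x i)) η₂ = 0) :
    of (vecCons v₂ (vecCons w x)) - of (vecCons v₁ (vecCons w x)) ∈ S := by
  have hw_mem : hpr.cosetVal w ∈ Θ :=
    hw ▸ Submodule.add_mem _ (Submodule.smul_mem _ _ hv₁) (Submodule.smul_mem _ _ hv₂)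
  have hu : hpr.cosetVal v₂ - hpr.cosetVal v₁ ∈ Θ ⊓ annihL pr Ψ :=
    ⟨Submodule.sub_mem _ hv₂ hv₁, hpr.cosetVal_sub_mem_annihL _ _⟩
  have huη : pr (hpr.cosetVal v₂ - hpr.cosetVal v₁) (η₁ - ((1 - t) / t) • η₂) = -t⁻¹ := by
    simp only [map_sub, map_smul, LinearMap.sub_apply, hv₁η₁, hv₂η₁, hv₁η₂, hv₂η₂, smul_eq_mul]
    field_simp
    ring
  have hwη : pr (hpr.cosetVal w) (η₁ - ((1 - t) / t) • η₂) = 0 := by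
    simp only [hw, map_sub, map_add, map_smul, LinearMap.add_apply, LinearMap.smul_apply, hv₁η₁,
      hv₂η₁, hv₁η₂, hv₂η₂, smul_eq_mul]
    field_simp
    ring
  refine hS.transvection_sub_mem (η := η₁ - ((1 - t) / t) • η₂) hu
    (Submodule.sub_mem _ hη₁ (Submodule.smul_mem _ _ hη₂)) ?_ ⟨_, hu, by rw [huη]; simpa⟩ ?_ ?_
  · rw [huη, ← sub_eq_add_neg, sub_ne_zero]
    exact fun h => ht₁ (inv_eq_one.1 h.symm)
  · simp only [Fin.forall_fin_succ (n := p + 1), Fin.forall_fin_succ (n := p)]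
    exact ⟨hv₁, hw_mem, hx⟩
  · simp only [Fin.forall_fin_succ (n := p + 1), Fin.forall_fin_succ (n := p)]
    exact ⟨by simp [hv₁η₁, hv₁η₂], by simp [hwη], fun i => by simp [hxη₁, hxη₂]⟩

/-- `w` lies in the span of the two entries in front, so that an entry `w` is redundant. -/
lemma of_vecCons_vecCons_mem_of_mem_range (hv₁ : hpr.cosetVal v₁ ∈ Θ) (hv₂ : hpr.cosetVal v₂ ∈ Θ)
    (hw : hpr.cosetVal w = (1 - t) • hpr.cosetVal v₁ + t • hpr.cosetVal v₂)
    (hwx : w ∈ Set.range x) (hx : ∀ i, hpr.cosetVal (x i) ∈ Θ) :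
    of (vecCons v₁ (vecCons v₂ x)) ∈ S := by
  obtain ⟨i, rfl⟩ := hwx
  cases p with
  | zero => exact i.elim0
  | succ p =>
    refine hS.degenerate_mem _ ?_ i.succ.succ ?_
    · simp only [Fin.forall_fin_succ (n := p + 2), Fin.forall_fin_succ (n := p + 1)]
      exact ⟨hv₁, hv₂, hx⟩
    · change hpr.cosetVal (x i) ∈ _
      rw [hw]
      have hmem := mem_adjoin Φ
        (hpr.cosetVal ∘ vecCons v₁ (vecCons v₂ x) ∘ i.succ.succ.succAbove)
      exact Submodule.add_mem _ (Submodule.smul_mem _ _ (by simpa using hmem 0))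
        (Submodule.smul_mem _ _ (by simpa using hmem 1))

/-- The boundary of `(v₁, v₂, w, x)`, for `w` on the line through `v₁` and `v₂`, expresses
`(v₁, v₂, x)` through tuples which are related by transvections. -/
lemma of_vecCons_vecCons_mem_of_notMem (ht₀ : t ≠ 0) (ht₁ : t ≠ 1) (hv₁ : hpr.cosetVal v₁ ∈ Θ)
    (hv₂ : hpr.cosetVal v₂ ∈ Θ) (hx : ∀ i, hpr.cosetVal (x i) ∈ Θ)
    (h₁ : hpr.cosetVal v₁ ∉ adjoin Φ (hpr.cosetVal ∘ vecCons v₂ x))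
    (h₂ : hpr.cosetVal v₂ ∉ adjoin Φ (hpr.cosetVal ∘ vecCons v₁ x)) :
    of (vecCons v₁ (vecCons v₂ x)) ∈ S := by
  obtain ⟨η₁, hη₁, hv₁η₁⟩ := hpr.exists_annihR_eq_one h₁
  obtain ⟨η₂, hη₂, hv₂η₂⟩ := hpr.exists_annihR_eq_one h₂
  obtain ⟨hη₁, hη₁'⟩ := mem_annihR_adjoin.1 hη₁
  obtain ⟨hη₂, hη₂'⟩ := mem_annihR_adjoin.1 hη₂
  obtain ⟨hv₂η₁, hxη₁⟩ := (forall_vecCons (p := fun z => pr (hpr.cosetVal z) η₁ = 0)).1 hη₁'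
  obtain ⟨hv₁η₂, hxη₂⟩ := (forall_vecCons (p := fun z => pr (hpr.cosetVal z) η₂ = 0)).1 hη₂'
  obtain ⟨w, hw⟩ := hpr.exists_cosetVal_eq_affine v₁ v₂ (t := t) hη₂ (by simpa [hv₁η₂, hv₂η₂])
  have hw_mem : hpr.cosetVal w ∈ Θ :=
    hw ▸ Submodule.add_mem _ (Submodule.smul_mem _ _ hv₁) (Submodule.smul_mem _ _ hv₂)
  have hright := hS.replace_right_mem ht₀ hv₁ hv₂ hx hw hη₂ hv₁η₂ hv₂η₂ hxη₂
  have hleft := hS.replace_left_mem ht₀ ht₁ hv₁ hv₂ hx hw hη₁ hv₁η₁ hv₂η₁ hxη₁ hη₂ hv₁η₂ hv₂η₂ hxη₂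
  refine of_vecCons_vecCons_mem (q := (hpr.cosetVal · ∈ Θ)) hw_mem hx (hS.boundary_mem _ ?_)
    (by simpa only [sub_add_sub_cancel] using S.add_mem hleft hright) hright
    fun z hz hzΘ => hS.of_vecCons_vecCons_mem_of_mem_range hv₁ hv₂ hw hz hzΘ
  simp only [Fin.forall_fin_succ (n := p + 2), Fin.forall_fin_succ (n := p + 1),
    Fin.forall_fin_succ (n := p)]
  exact ⟨hv₁, hv₂, hw_mem, hx⟩

lemma of_mem (ht₀ : t ≠ 0) (ht₁ : t ≠ 1) (y : Fin (p + 2) → (hpr.cosetSet Φ Ψ c).Y)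
    (hy : ∀ i, hpr.cosetVal (y i) ∈ Θ) : of y ∈ S := by
  obtain ⟨v₁, y', rfl⟩ := exists_eq_vecCons y
  obtain ⟨v₂, x, rfl⟩ := exists_eq_vecCons y'
  by_cases h₁ : hpr.cosetVal v₁ ∈ adjoin Φ (hpr.cosetVal ∘ vecCons v₂ x)
  · exact hS.degenerate_mem _ hy 0 h₁
  by_cases h₂ : hpr.cosetVal v₂ ∈ adjoin Φ (hpr.cosetVal ∘ vecCons v₁ x)
  · refine hS.degenerate_mem _ hy 1 ?_
    have hx : vecCons v₁ (vecCons v₂ x) ∘ Fin.succAbove 1 = vecCons v₁ x :=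
      funext (Fin.cases rfl fun _ => rfl)
    rwa [hx]
  obtain ⟨hv₁, hv₂, hx⟩ := by
    simpa only [Fin.forall_fin_succ (n := p + 1), Fin.forall_fin_succ (n := p)] using hy
  exact hS.of_vecCons_vecCons_mem_of_notMem ht₀ ht₁ hv₁ hv₂ hx h₁ h₂

end MoveClosed

end IsTransvectionPairing

end Moves

section CosetTuples

variable {F A B 𝔾 : Type u} [Field F] [AddCommGroup A] [Module F A] [AddCommGroup B] [Module F B]
  [Group 𝔾] [DistribMulAction 𝔾 A] [DistribMulAction 𝔾 B] {pr : A →ₗ[F] B →ₗ[F] F}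

namespace HyperbolicDatum

/-- The datum with a vector added to its left subspace. -/
abbrev addLeft (D : HyperbolicDatum pr) (v : A) (hv : pr v D.ε = 0) : HyperbolicDatum pr :=
  D.withLeft (D.Φ ⊔ F ∙ v) (mem_annihR_sup_span.2 ⟨D.ε_mem, hv⟩)

/-- The datum with a vector added to its right subspace. -/
abbrev addRight (D : HyperbolicDatum pr) (η : B) (hη : pr D.e η = 0) : HyperbolicDatum pr :=
  { D with Ψ := D.Ψ ⊔ F ∙ η, e_mem := mem_annihL_sup_span.2 ⟨D.e_mem, hη⟩ }

variable (𝔾) in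
/-- The pair of stabilizers of a datum, with trivial coefficients. -/
abbrev pair (D : HyperbolicDatum pr) : GroupPair 𝔾 := .point (D.inner_le_outer 𝔾)

variable (𝔾) in
/-- The inclusion of the stabilizers of a datum with a vector added on the left. -/
abbrev addLeftHom (D : HyperbolicDatum pr) (v : A) (hv : pr v D.ε = 0) :
    GroupPairHom ((D.addLeft v hv).pair 𝔾) (D.pair 𝔾) :=
  .incl _ _ (fixer_mono (sup_le_sup_right le_sup_left _) le_rfl) (fixer_mono le_sup_left le_rfl)

variable (𝔾) in
/-- The inclusion of the stabilizers of a datum with a vector added on the right. -/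
abbrev addRightHom (D : HyperbolicDatum pr) (η : B) (hη : pr D.e η = 0) :
    GroupPairHom ((D.addRight η hη).pair 𝔾) (D.pair 𝔾) :=
  .incl _ _ (fixer_mono le_rfl (sup_le_sup_right le_sup_left _)) (fixer_mono le_rfl le_sup_left)

end HyperbolicDatum

variable (𝔾 pr) in
/-- Vanishing of the `n`-th homology of the outer group of each datum of rank more than `n`,
relative to the inner group. -/
def StabilizerVanishing (n : ℕ) : Prop :=
  ∀ D : HyperbolicDatum pr, RankGE pr D.Φ D.Ψ (n + 1) → RelVanishes (D.inner_le_outer 𝔾) n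

variable (𝔾 pr) in
/-- The `n`-th relative homology of each datum of rank at least `n` comes from the datum with a
vector added on the left, if this vector is not orthogonal to the annihilator of `Φ` and `Ψ`. -/
def LeftSurjective (n : ℕ) : Prop :=
  ∀ (D : HyperbolicDatum pr) (v : A) (hv : pr v D.ε = 0), v ∉ D.Φ ⊔ annihL pr D.Ψ →
    RankGE pr D.Φ D.Ψ n → RelSurjective (D.addLeftHom 𝔾 v hv) n

variable (𝔾 pr) in
/-- The analogue of `LeftSurjective` for vectors added on the right. -/
def RightSurjective (n : ℕ) : Prop :=
  ∀ (D : HyperbolicDatum pr) (η : B) (hη : pr D.e η = 0), η ∉ D.Ψ ⊔ annihR pr D.Φ →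
    RankGE pr D.Φ D.Ψ n → RelSurjective (D.addRightHom 𝔾 η hη) n

lemma RelSurjective.incl_congr {K₀ K₀' K K' L₀ L₀' L L' : Subgroup 𝔾} (h₀ : K₀ = L₀)
    (h₀' : K₀' = L₀') (h : K = L) (h' : K' = L') {k₀ : K₀ ≤ K₀'} {k : K ≤ K'} {m : K₀ ≤ K}
    {m' : K₀' ≤ K'} {l₀ : L₀ ≤ L₀'} {l : L ≤ L'} {o : L₀ ≤ L} {o' : L₀' ≤ L'} {n : ℕ}
    (hsurj : RelSurjective (.incl k₀ k m m') n) : RelSurjective (.incl l₀ l o o') n := by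
  subst h₀ h₀' h h'
  exact hsurj

lemma LeftSurjective.flip {n : ℕ} (h : LeftSurjective 𝔾 pr.flip n) : RightSurjective 𝔾 pr n :=
  fun D η hη hηD hrank =>
    (h D.flip η hη hηD hrank.flip).incl_congr (fixer_flip _ _) (fixer_flip _ _)
    (fixer_flip _ _) (fixer_flip _ _)

lemma IsTransvectionPairing.conj_eq_of_transvection (hpr : IsTransvectionPairing 𝔾 pr)
    [SMulCommClass 𝔾 F A] {Φ : Submodule F A} {Ψ : Submodule F B} {u : A} {η : B} {g h : 𝔾}
    (hg : ∀ a : A, g • a = a + pr a η • u) (hh : h ∈ fixer 𝔾 Φ Ψ) (hu : u ∈ Φ) (hη : η ∈ Ψ) :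
    g * h * g⁻¹ = h := by
  rw [mul_inv_eq_iff_eq_mul, ← inv_mul_eq_one]
  refine hpr.eq_one_of_smul_eq _ fun a => ?_
  rw [mul_smul, inv_smul_eq_iff, mul_smul, mul_smul, hg a, smul_add, smul_comm h, hg (h • a),
    (mem_fixer.1 hh).1 u hu, hpr.smul_right_eq_iff.1 ((mem_fixer.1 hh).2 η hη)]

lemma RankGE.adjoin {Φ : Submodule F A} {Ψ : Submodule F B} {X : Set A} {n : ℕ}
    (h : ∀ v ∈ X, RankGE pr (Φ ⊔ F ∙ v) Ψ n) {l : ℕ} {y : Fin (l + 1) → A} (hy : ∀ i, y i ∈ X) :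
    RankGE pr (adjoin Φ y) Ψ (n - l) := by
  induction l with
  | zero =>
    obtain ⟨v, y, rfl⟩ := exists_eq_vecCons y
    rw [adjoin_vecCons, adjoin_zero]
    exact h v (hy 0)
  | succ l ih =>
    obtain ⟨v, y, rfl⟩ := exists_eq_vecCons y
    rw [adjoin_vecCons]
    obtain hn | hn := Nat.eq_zero_or_pos (n - (l + 1))
    · exact hn ▸ ⟨![], ![], nofun, nofun, nofun⟩
    · refine RankGE.sup_span ((ih fun i => hy i.succ).mono ?_) v
      omega

namespace HyperbolicDatum

variable {D : HyperbolicDatum pr} {c : A} {n p : ℕ} {Θ : Submodule F A}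
  (hpr : IsTransvectionPairing 𝔾 pr) (hc : pr c D.ε = 0)

lemma adjoin_cosetVal_comp_succAbove {y : Fin (p + 1) → (cosetPair hpr hc).S.Y} {i : Fin (p + 1)}
    (hi : hpr.cosetVal (y i) ∈ adjoin (D.Φ ⊔ F ∙ D.e) (hpr.cosetVal ∘ y ∘ i.succAbove)) :
    adjoin D.Φ (hpr.cosetVal ∘ y ∘ i.succAbove) = adjoin D.Φ (hpr.cosetVal ∘ y) := by
  rw [adjoin, sup_right_comm] at hi
  exact adjoin_comp_succAbove (a := hpr.cosetVal ∘ y) <|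
    mem_of_mem_sup_e (D := adjoinTuple hpr hc (y ∘ i.succAbove)) hi (pr_cosetVal_ε hpr hc (y i))

variable [SMulCommClass 𝔾 F A]

lemma inner_le_stabilizer (hΘ : D.ε ∈ annihR pr Θ) (hΦ : D.Φ ≤ Θ)
    {y : Fin p → (cosetPair hpr hc).S.Y} (hy : ∀ i, hpr.cosetVal (y i) ∈ Θ) :
    (D.withLeft Θ hΘ).inner 𝔾 ≤ ((cosetPair hpr hc).power p).S.stabilizer (of y) := by
  rw [stabilizer_eq_inner]
  exact fixer_mono (sup_le_sup_right (adjoin_le.2 ⟨hΦ, hy⟩) _) le_rfl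

lemma outer_le_stabilizer (hΘ : D.ε ∈ annihR pr Θ) (hΦ : D.Φ ≤ Θ)
    {y : Fin p → (cosetPair hpr hc).S.Y} (hy : ∀ i, hpr.cosetVal (y i) ∈ Θ) :
    (D.withLeft Θ hΘ).outer 𝔾 ≤
      ((cosetPair hpr hc).power p).T.stabilizer (map ((cosetPair hpr hc).ι ∘ ·) (of y)) := by
  rw [stabilizer_eq_outer]
  exact fixer_mono (adjoin_le.2 ⟨hΦ, hy⟩) le_rfl

lemma moveClosed_weightsInto (hvan : StabilizerVanishing 𝔾 pr n) (hright : RightSurjective 𝔾 pr n)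
    (hΘ : D.ε ∈ annihR pr Θ) (hΦ : D.Φ ≤ Θ) (hrankΘ : RankGE pr Θ D.Ψ n)
    (hrank : ∀ y : Fin (p + 1) → (cosetPair hpr hc).S.Y,
      RankGE pr (adjoin D.Φ (hpr.cosetVal ∘ y)) D.Ψ (n + 1))
    (lK : (D.withLeft Θ hΘ).inner 𝔾 ≤ D.inner 𝔾) (lK' : (D.withLeft Θ hΘ).outer 𝔾 ≤ D.outer 𝔾)
    {z : ((D.withLeft Θ hΘ).pair 𝔾).relComplex.X n}
    (hz : z ∈ ((D.withLeft Θ hΘ).pair 𝔾).relComplex.cycles n) :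
    hpr.MoveClosed Θ (((cosetPair hpr hc).power (p + 2)).weightsInto
      ((D.withLeft Θ hΘ).inner_le_outer 𝔾) lK lK' z
      (((cosetPair hpr hc).face (p + 2)).relMap.homologyRange n)) where
  boundary_mem y hy := GroupPair.boundary_mem_weightsInto _ lK lK' hz
    (inner_le_stabilizer hpr hc hΘ hΦ hy) (outer_le_stabilizer hpr hc hΘ hΦ hy)
  smul_sub_mem u η hu hη hΘη g hg y hy := by
    obtain ⟨u', hu', hu'η⟩ := hΘη
    have hηE : η ∉ D.Ψ ⊔ annihR pr Θ := by
      intro h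
      obtain ⟨b, hb, b', hb', rfl⟩ := Submodule.mem_sup.1 h
      have hb0 := mem_annihL.1 hu'.2 b (Submodule.mem_sup_left hb)
      exact hu'η (by rw [map_add, hb0, mem_annihR.1 hb' u' hu'.1, add_zero])
    have hgy (i) : hpr.cosetVal ((g • y) i) ∈ Θ := by
      rw [show hpr.cosetVal ((g • y) i) = _ from hg _]
      exact Submodule.add_mem _ (hy i) (Submodule.smul_mem _ _ hu.1)
    exact GroupPair.smul_sub_mem_weightsInto (P := (cosetPair hpr hc).power (p + 2))
      (w := of y) _ lK lK' _ _ _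
      (hright (D.withLeft Θ hΘ) η (mem_annihR_sup_span.1 hη).2 hηE hrankΘ hz)
      (((cosetPair hpr hc).face (p + 2)).relMap.boundaries_le_homologyRange) g
      (fun h hh => hpr.conj_eq_of_transvection hg hh hu.1
        (Submodule.mem_sup_right (Submodule.mem_span_singleton_self _)))
      (inner_le_stabilizer hpr hc hΘ hΦ hy) (outer_le_stabilizer hpr hc hΘ hΦ hy)
      (inner_le_stabilizer hpr hc hΘ hΦ hgy) (outer_le_stabilizer hpr hc hΘ hΦ hgy)
  degenerate_mem y hy i hi := by
    refine GroupPair.mem_weightsInto_of_relVanishes (P := (cosetPair hpr hc).power (p + 2))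
      _ lK lK' _ (fixer_mono (sup_le_sup_right (adjoin_le.2 ⟨hΦ, hy⟩) _) le_rfl)
      (fixer_mono (adjoin_le.2 ⟨hΦ, hy⟩) le_rfl) hz
      (((cosetPair hpr hc).face (p + 2)).relMap.boundaries_le_homologyRange)
      (stabilizer_eq_inner hpr hc y).ge (stabilizer_eq_outer hpr hc y).ge
      (hvan (adjoinTuple hpr hc y) ?_)
    change RankGE pr (adjoin D.Φ (hpr.cosetVal ∘ y)) D.Ψ _
    rw [← adjoin_cosetVal_comp_succAbove hpr hc hi]
    exact hrank _

end HyperbolicDatum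

end CosetTuples

section CosetFaces

variable {F A B 𝔾 : Type u} [Field F] [AddCommGroup A] [Module F A] [AddCommGroup B] [Module F B]
  [Group 𝔾] [DistribMulAction 𝔾 A] [DistribMulAction 𝔾 B] {pr : A →ₗ[F] B →ₗ[F] F}
  [SMulCommClass 𝔾 F A]

namespace HyperbolicDatum

variable {D : HyperbolicDatum pr} {c : A} {n p q : ℕ} (hpr : IsTransvectionPairing 𝔾 pr)
  (hc : pr c D.ε = 0) {t : F}

lemma relMap_insertWeight_mem_homologyRange_face (ht₀ : t ≠ 0) (ht₁ : t ≠ 1)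
    (hvan : StabilizerVanishing 𝔾 pr q) (hright : RightSurjective 𝔾 pr q)
    (hrank : ∀ v ∈ cosetOutside pr D.Φ D.Ψ c, RankGE pr (D.Φ ⊔ F ∙ v) D.Ψ n) (hpq : p + q + 1 = n)
    {y : Fin (p + 2) → (cosetPair hpr hc).S.Y} {K K' : Subgroup 𝔾} (k : K ≤ K')
    (hK : K = (adjoinTuple hpr hc y).inner 𝔾) (hK' : K' = (adjoinTuple hpr hc y).outer 𝔾)
    (hS : K ≤ ((cosetPair hpr hc).power (p + 2)).S.stabilizer (of y))
    (hT : K' ≤ ((cosetPair hpr hc).power (p + 2)).T.stabilizer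
      (map ((cosetPair hpr hc).ι ∘ ·) (of y)))
    {z : (GroupPair.point k).relComplex.X q} (hz : z ∈ (GroupPair.point k).relComplex.cycles q) :
    (((cosetPair hpr hc).power (p + 2)).insertWeight k (of y) hS hT).relMap.f q z ∈
      ((cosetPair hpr hc).face (p + 2)).relMap.homologyRange q := by
  subst hK hK'
  have hmem {l : ℕ} (x : Fin l → (cosetPair hpr hc).S.Y) (i) :
      (hpr.cosetVal ∘ x) i ∈ cosetOutside pr D.Φ D.Ψ c :=
    ((mem_cosetOutside_inner_iff hc).1 (hpr.cosetVal_mem (x i))).1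
  have hmove := moveClosed_weightsInto hpr hc hvan hright (ε_mem_annihR_adjoin hpr hc y)
    (le_adjoin D.Φ _) ((RankGE.adjoin (l := p + 1) hrank (hmem y)).mono (by omega))
    (fun x => (RankGE.adjoin (l := p) hrank (hmem x)).mono (by omega))
    (fixer_mono (sup_le_sup_right (le_adjoin _ _) _) le_rfl) (fixer_mono (le_adjoin _ _) le_rfl) hz
  obtain ⟨_, _, h⟩ := GroupPair.mem_weightsInto.1
    (hmove.of_mem ht₀ ht₁ y (mem_adjoin D.Φ (hpr.cosetVal ∘ y)))
  exact h

lemma cycles_le_homologyRange_face_of_pos (ht₀ : t ≠ 0) (ht₁ : t ≠ 1)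
    (hvan : StabilizerVanishing 𝔾 pr q) (hright : RightSurjective 𝔾 pr q)
    (hrank : ∀ v ∈ cosetOutside pr D.Φ D.Ψ c, RankGE pr (D.Φ ⊔ F ∙ v) D.Ψ n) (hpq : p + q + 1 = n)
    (hq : 0 < q) : ((cosetPair hpr hc).power (p + 2)).relComplex.cycles q ≤
      ((cosetPair hpr hc).face (p + 2)).relMap.homologyRange q := by
  have hP : Function.Bijective ((cosetPair hpr hc).power (p + 2)).orbitMap :=
    bijective_orbitMap_cosetPair_power hpr hc fun x =>
      ((RankGE.adjoin hrank (fun i => hpr.cosetVal_mem (x i))).mono (by omega)).not_annihL_le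
  refine fun z hz => (AddSubgroup.closure_le _).2 ?_ (GroupPair.mem_closure_insertWeight hP hz)
  rintro _ ⟨y, w, hw, rfl⟩
  exact relMap_insertWeight_mem_homologyRange_face hpr hc ht₀ ht₁ hvan hright hrank hpq _
    (stabilizer_eq_inner hpr hc y) (stabilizer_eq_outer hpr hc y) _ _ hw

end HyperbolicDatum

namespace GroupPair

variable {G : Type u} [Group G] {P : GroupPair G} {R : AddSubgroup (P.relComplex.X 0)}
  {t : Fin 1 → G}

/-- The weights which, put on the tuple `t`, give a relative chain of degree zero in `R`. -/
def weightsAt (P : GroupPair G) (t : Fin 1 → G) (R : AddSubgroup (P.relComplex.X 0)) :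
    AddSubgroup (FreeAbelianGroup P.T.Y) :=
  AddSubgroup.comap (P.T.tensor (of t)) R

lemma mem_weightsAt {w : FreeAbelianGroup P.T.Y} :
    w ∈ P.weightsAt t R ↔ coneMk₀ P.hom.chainMap (P.T.tensor (of t) w) ∈ R := Iff.rfl

lemma smul_sub_mem_weightsAt (hR : P.relComplex.boundaries 0 ≤ R) (h : P.T.H)
    (w : FreeAbelianGroup P.T.Y) : map (h • ·) w - w ∈ P.weightsAt t R := by
  have htensor : P.T.tensor (of t) (map (h • ·) w) = P.T.tensor (of (h⁻¹ • t)) w := by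
    rw [← P.T.tensor_smul h⁻¹, map_map_apply, map_eq_self fun y => inv_smul_smul h y]
    rfl
  refine mem_weightsAt.2 (hR ⟨coneMk P.hom.chainMap
    (P.T.tensor (of (vecCons (t 0) (h⁻¹ • t))) w) 0, ?_⟩)
  rw [mappingCone_d_zero, map_zero, sub_zero, map_sub, htensor, ← AddMonoidHom.sub_apply, ← map_sub]
  refine congrArg _ ((P.T.differential_tensor _ w).trans ?_)
  have hvec : vecCons (t 0) ![] = t := funext (Fin.forall_fin_one.2 rfl)
  rw [boundary_succ, boundary_zero, consChain, FreeAbelianGroup.map_of_apply, hvec]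

lemma map_ι_mem_weightsAt (hR : P.relComplex.boundaries 0 ≤ R) (w : FreeAbelianGroup P.S.Y) :
    map P.ι w ∈ P.weightsAt t R := by
  refine mem_weightsAt.2 (hR ⟨coneMk P.hom.chainMap 0 (-P.S.tensor (of t) w), ?_⟩)
  rw [mappingCone_d_zero, map_zero, map_neg, zero_sub, neg_neg]
  refine congrArg _ ((P.hom.chainMap_tensor _ w).trans ?_)
  rw [GroupSetHom.map_one_smul]

lemma of_smul_sub_mem_weightsAt {p : ℕ} {R : AddSubgroup ((P.power p).relComplex.X 0)}
    (hR : (P.power p).relComplex.boundaries 0 ≤ R) (h : P.T.H) (y : Fin p → P.T.Y) :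
    of (h • y) - of y ∈ (P.power p).weightsAt t R :=
  smul_sub_mem_weightsAt hR h (of y)

lemma of_smul_ι_comp_mem_weightsAt {p : ℕ} {R : AddSubgroup ((P.power p).relComplex.X 0)}
    (hR : (P.power p).relComplex.boundaries 0 ≤ R) (h : P.T.H) (y : Fin p → P.S.Y) :
    of (h • (P.ι ∘ y)) ∈ (P.power p).weightsAt t R := by
  rw [← sub_add_cancel (of (h • (P.ι ∘ y))) (of (P.ι ∘ y))]
  exact add_mem (of_smul_sub_mem_weightsAt hR h _) (map_ι_mem_weightsAt hR (of y))

lemma boundary_mem_weightsAt (p : ℕ) (w : FreeAbelianGroup (Fin (p + 1) → P.T.Y)) :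
    boundary p w ∈ (P.power p).weightsAt t ((P.face p).relMap.homologyRange 0) := by
  have face_tensor : (P.face p).relMap.f 0 (coneMk₀ _ ((P.power (p + 1)).T.tensor (of t) w)) =
    coneMk₀ _ ((P.power p).T.tensor (of t) (boundary p w)) := P.T.face_tensor p _ _
  exact mem_weightsAt.2 (face_tensor ▸ ChainMap.map_mem_homologyRange _ (ChainCx.mem_cycles_zero _))

end GroupPair

namespace HyperbolicDatum

variable {D : HyperbolicDatum pr} {c : A} {n p q : ℕ} (hpr : IsTransvectionPairing 𝔾 pr)
  (hc : pr c D.ε = 0) {t : F}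

lemma moveClosed_weightsAt (s : Fin 1 → 𝔾)
    (hrank : ∀ y : Fin (p + 1) → (cosetPair hpr hc).T.Y,
      RankGE pr (adjoin D.Φ (hpr.cosetVal ∘ y)) D.Ψ 1) :
    hpr.MoveClosed (Φ := D.Φ) (Ψ := D.Ψ) (c := c) ⊤
      (((cosetPair hpr hc).power (p + 2)).weightsAt s
        (((cosetPair hpr hc).face (p + 2)).relMap.homologyRange 0)) where
  boundary_mem y _ :=
    GroupPair.boundary_mem_weightsAt (P := cosetPair hpr hc) (p + 2) (of y)
  smul_sub_mem _ _ _ _ _ g _ y _ := GroupPair.of_smul_sub_mem_weightsAt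
    (((cosetPair hpr hc).face (p + 2)).relMap.boundaries_le_homologyRange) g y
  degenerate_mem y _ i hi := by
    have hy : ¬ annihL pr D.Ψ ≤ adjoin D.Φ (hpr.cosetVal ∘ y) :=
      adjoin_comp_succAbove (a := hpr.cosetVal ∘ y) hi ▸ (hrank (y ∘ i.succAbove)).not_annihL_le
    obtain ⟨g, x, rfl⟩ := exists_smul_ι_comp_eq hpr hc y hy
    exact GroupPair.of_smul_ι_comp_mem_weightsAt
      (((cosetPair hpr hc).face (p + 2)).relMap.boundaries_le_homologyRange) g x

lemma cycles_zero_le_homologyRange_face (ht₀ : t ≠ 0) (ht₁ : t ≠ 1)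
    (hrank : ∀ v ∈ cosetOutside pr D.Φ D.Ψ c, RankGE pr (D.Φ ⊔ F ∙ v) D.Ψ (p + 1)) :
    ((cosetPair hpr hc).power (p + 2)).relComplex.cycles 0 ≤
      ((cosetPair hpr hc).face (p + 2)).relMap.homologyRange 0 := by
  rintro z -
  induction z using freeAbelianGroup_sub_induction with
  | zero => exact zero_mem _
  | sub z z' hz hz' => exact sub_mem hz hz'
  | of z =>
  obtain ⟨s, y, rfl⟩ := GroupSet.exists_eq_orbit z
  rw [← GroupSet.tensor_of]
  exact (moveClosed_weightsAt hpr hc s fun x => (RankGE.adjoin hrank fun i =>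
    hpr.cosetVal_mem (x i)).mono (by omega)).of_mem ht₀ ht₁ y fun _ => trivial

lemma cycles_le_homologyRange_face (ht₀ : t ≠ 0) (ht₁ : t ≠ 1)
    (hvan : StabilizerVanishing 𝔾 pr q) (hright : RightSurjective 𝔾 pr q)
    (hrank : ∀ v ∈ cosetOutside pr D.Φ D.Ψ c, RankGE pr (D.Φ ⊔ F ∙ v) D.Ψ (p + q + 1)) :
    ((cosetPair hpr hc).power (p + 2)).relComplex.cycles q ≤
      ((cosetPair hpr hc).face (p + 2)).relMap.homologyRange q := by
  obtain rfl | hq := Nat.eq_zero_or_pos q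
  · exact cycles_zero_le_homologyRange_face hpr hc ht₀ ht₁ hrank
  · exact cycles_le_homologyRange_face_of_pos hpr hc ht₀ ht₁ hvan hright hrank rfl hq

end HyperbolicDatum

end CosetFaces

lemma relVanishes_zero {G : Type u} [Group G] {H H' : Subgroup G} (le : H ≤ H') :
    RelVanishes le 0 := by
  intro z _
  obtain ⟨u, rfl⟩ := (GroupSet.point H').exists_eq_tensor_of (y := PUnit.unit) (fun _ => rfl) z
  refine ⟨coneMk _ 0 (-(GroupSet.point H).tensor u (of PUnit.unit)), ?_⟩
  rw [mappingCone_d_zero, map_zero, map_neg, zero_sub, neg_neg]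
  refine congrArg _ ((GroupSetHom.chainMap_tensor _ _ _).trans ?_)
  rw [GroupSetHom.map_one_smul, FreeAbelianGroup.map_of_apply]

section LeftSurjective

variable {F A B 𝔾 : Type u} [Field F] [AddCommGroup A] [Module F A] [AddCommGroup B] [Module F B]
  [Group 𝔾] [DistribMulAction 𝔾 A] [DistribMulAction 𝔾 B] {pr : A →ₗ[F] B →ₗ[F] F}

namespace HyperbolicDatum

variable {D : HyperbolicDatum pr} {c : A} {n : ℕ}

lemma relMap_toPoint_insertWeight_mem_homologyRange (hpr : IsTransvectionPairing 𝔾 pr)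
    (hc : pr c D.ε = 0) {y : Fin 1 → (cosetPair hpr hc).S.Y}
    {K K' : Subgroup 𝔾} (k : K ≤ K') (hK : K = (adjoinTuple hpr hc y).inner 𝔾)
    (hK' : K' = (adjoinTuple hpr hc y).outer 𝔾)
    (hS : K ≤ ((cosetPair hpr hc).power 1).S.stabilizer (of y))
    (hT : K' ≤ ((cosetPair hpr hc).power 1).T.stabilizer
      (map ((cosetPair hpr hc).power 1).ι (of y)))
    {z : (GroupPair.point k).relComplex.X n} (hz : z ∈ (GroupPair.point k).relComplex.cycles n) :
    ((cosetPair hpr hc).power 1).toPoint.relMap.f n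
        ((((cosetPair hpr hc).power 1).insertWeight k (of y) hS hT).relMap.f n z) ∈
      (D.addLeftHom 𝔾 (hpr.cosetVal (y 0))
        (pr_cosetVal_ε hpr hc (y 0))).relMap.homologyRange n := by
  have hadjoin : adjoin D.Φ (hpr.cosetVal ∘ y) = D.Φ ⊔ F ∙ hpr.cosetVal (y 0) := adjoin_fin_one _ _
  obtain rfl : K = (D.addLeft _ (pr_cosetVal_ε hpr hc (y 0))).inner 𝔾 :=
    hK.trans (congrArg (fun Θ => fixer 𝔾 (Θ ⊔ F ∙ D.e) (D.Ψ ⊔ F ∙ D.ε)) hadjoin)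
  obtain rfl : K' = (D.addLeft _ (pr_cosetVal_ε hpr hc (y 0))).outer 𝔾 :=
    hK'.trans (congrArg (fun Θ => fixer 𝔾 Θ D.Ψ) hadjoin)
  have toPoint_insertWeight := GroupPairHom.relMap_ext (n := n)
    (f := D.addLeftHom 𝔾 _ (pr_cosetVal_ε hpr hc (y 0)))
    (f' := ((cosetPair hpr hc).power 1).toPoint.comp
      (((cosetPair hpr hc).power 1).insertWeight k (of y) hS hT))
    (by simp) (fun _ => by simp) (fun _ => by simp) z
  exact (toPoint_insertWeight.symm.trans (GroupPairHom.relMap_comp _ _ z)) ▸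
    ChainMap.map_mem_homologyRange _ hz

variable [SMulCommClass 𝔾 F A]

lemma mul_mul_inv_mem_outer_addLeft {v : A} {hv : pr v D.ε = 0} {hc : pr c D.ε = 0} {g h : 𝔾}
    (hg : g ∈ D.inner 𝔾) (hgv : g • v = c) (hh : h ∈ (D.addLeft v hv).outer 𝔾) :
    g * h * g⁻¹ ∈ (D.addLeft c hc).outer 𝔾 :=
  hgv ▸ mul_mul_inv_mem_fixer (D.inner_le_outer 𝔾 hg) hh

lemma mul_mul_inv_mem_inner_addLeft {v : A} {hv : pr v D.ε = 0} {hc : pr c D.ε = 0} {g h : 𝔾}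
    (hg : g ∈ D.inner 𝔾) (hgv : g • v = c) (hh : h ∈ (D.addLeft v hv).inner 𝔾) :
    g * h * g⁻¹ ∈ (D.addLeft c hc).inner 𝔾 := by
  rw [inner, sup_right_comm] at hh ⊢
  exact hgv ▸ mul_mul_inv_mem_fixer hg hh

lemma homologyRange_addLeftHom_le (hpr : IsTransvectionPairing 𝔾 pr) {v : A}
    (hv : pr v D.ε = 0) (hc : pr c D.ε = 0) (hvc : v - c ∈ annihL pr D.Ψ)
    (hvD : v ∉ D.Φ) (hcD : c ∉ D.Φ) :
    (D.addLeftHom 𝔾 v hv).relMap.homologyRange n ≤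
      (D.addLeftHom 𝔾 c hc).relMap.homologyRange n := by
  intro z hz
  obtain ⟨x, hx, hxz⟩ := ChainMap.mem_homologyRange.1 hz
  obtain ⟨g, hg, hgv⟩ := hpr.exists_fixer_smul_eq (𝔾 := 𝔾) (notMem_sup_e hvD hv)
    (notMem_sup_e hcD hc) (Ψ := D.Ψ ⊔ F ∙ D.ε)
    (mem_annihL_sup_span.2 ⟨by simpa using Submodule.neg_mem _ hvc, by simp [hv, hc]⟩)
  have conj_eq := GroupPairHom.relMap_congr (n := n) (f := D.addLeftHom 𝔾 v hv)
    (f' := (D.addLeftHom 𝔾 c hc).comp (.conj ((D.addLeft v hv).inner_le_outer 𝔾)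
      ((D.addLeft c hc).inner_le_outer 𝔾) g (fun _ => mul_mul_inv_mem_inner_addLeft hg hgv)
      fun _ => mul_mul_inv_mem_outer_addLeft hg hgv)) ⟨g, hg⟩ (by simp) (fun _ => by simp)
      (fun _ => by simp) x
  rw [← conj_eq, GroupPairHom.relMap_comp] at hxz
  exact ChainMap.mem_homologyRange.2 ⟨_, ChainMap.mem_cycles _ hx, hxz⟩

variable (hpr : IsTransvectionPairing 𝔾 pr) (hc : pr c D.ε = 0)

lemma cycles_le_of_homologyRange_addLeftHom_le (y₀ : (cosetPair hpr hc).S.Y)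
    (horbit : Function.Bijective ((cosetPair hpr hc).power 1).orbitMap)
    (hcycles : ∀ p q, p + q + 1 = n → ((cosetPair hpr hc).power (p + 2)).relComplex.cycles q ≤
      ((cosetPair hpr hc).face (p + 2)).relMap.homologyRange q)
    {R : AddSubgroup ((D.pair 𝔾).relComplex.X n)}
    (hR : ∀ v (hv : pr v D.ε = 0), v ∈ cosetOutside pr D.Φ D.Ψ c →
      (D.addLeftHom 𝔾 v hv).relMap.homologyRange n ≤ R) :
    (D.pair 𝔾).relComplex.cycles n ≤ R := by
  intro z hz
  obtain ⟨w, hw, hwz⟩ := ChainMap.mem_homologyRange.1 <|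
    (cosetPair hpr hc).relSurjective_toPoint y₀ hcycles hz
  have range_le (y : (cosetPair hpr hc).S.Y) :=
    hR _ (pr_cosetVal_ε hpr hc y) ((mem_cosetOutside_inner_iff hc).1 (hpr.cosetVal_mem y)).1
  have toPoint_mem : ((cosetPair hpr hc).power 1).toPoint.relMap.f n w ∈ R := by
    refine (AddSubgroup.closure_le (R.comap _)).2 ?_ (GroupPair.mem_closure_insertWeight horbit hw)
    rintro _ ⟨y, x, hx, rfl⟩
    exact range_le (y 0) <| relMap_toPoint_insertWeight_mem_homologyRange hpr hc _
      (stabilizer_eq_inner hpr hc y) (stabilizer_eq_outer hpr hc y) le_rfl le_rfl hx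
  rw [← sub_add_cancel z]
  exact add_mem (range_le y₀ (ChainMap.boundaries_le_homologyRange _ hwz)) toPoint_mem

end HyperbolicDatum

variable [SMulCommClass 𝔾 F A]

open HyperbolicDatum in
lemma IsTransvectionPairing.leftSurjective (hpr : IsTransvectionPairing 𝔾 pr) {t : F} (ht₀ : t ≠ 0)
    (ht₁ : t ≠ 1) {n : ℕ} (hvan : ∀ q < n, StabilizerVanishing 𝔾 pr q)
    (hright : ∀ q < n, RightSurjective 𝔾 pr q) : LeftSurjective 𝔾 pr n := by
  intro D c hc hcD hrank
  have hcΦ : c ∉ D.Φ := fun h => hcD (Submodule.mem_sup_left h)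
  obtain rfl | hn := Nat.eq_zero_or_pos n
  · exact fun z hz => ChainMap.boundaries_le_homologyRange _ (relVanishes_zero _ hz)
  have hcoset (v) (hv : v ∈ cosetOutside pr D.Φ D.Ψ c) : RankGE pr (D.Φ ⊔ F ∙ v) D.Ψ n :=
    hpr.rankGE_sup_span hrank fun hmem => hcD <| by
      rw [← sub_sub_cancel v c]
      exact Submodule.sub_mem _ hmem (Submodule.mem_sup_right hv.1)
  obtain ⟨y₀, -⟩ := hpr.exists_cosetVal_eq <|
    (mem_cosetOutside_inner_iff hc).2 ⟨⟨by simp [zero_mem], hcΦ⟩, hc⟩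
  have horbit := bijective_orbitMap_cosetPair_power (p := 1) hpr hc fun x =>
    ((RankGE.adjoin hcoset fun i => hpr.cosetVal_mem (x i)).mono (by omega)).not_annihL_le
  exact cycles_le_of_homologyRange_addLeftHom_le hpr hc y₀ horbit
    (fun p q hpq => cycles_le_homologyRange_face hpr hc ht₀ ht₁ (hvan q (by omega))
      (hright q (by omega)) (hpq ▸ hcoset))
    fun v hv hvc => homologyRange_addLeftHom_le hpr hv hc hvc.1 hvc.2 hcΦ

end LeftSurjective

section Commutators

lemma sub_mem_of_mem_commutator {C M : Type*} [Group C] [AddCommGroup M] {S : AddSubgroup M}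
    {X : C → M} (hX : ∀ u w, X (u * w) - X u - (X w - X 1) ∈ S) {τ : C} (hτ : τ ∈ commutator C) :
    X τ - X 1 ∈ S := by
  let δ : C →* Multiplicative (M ⧸ S) :=
    .mk' (fun w => .ofAdd (X w - X 1 : M)) fun u w => by
      rw [← ofAdd_add, ← QuotientAddGroup.mk_add]
      refine congrArg _ (QuotientAddGroup.eq_iff_sub_mem.2 ?_)
      convert hX u w using 1
      abel
  exact (QuotientAddGroup.eq_zero_iff _).1 (Abelianization.commutator_subset_ker δ hτ)

variable {G : Type u} [Group G] {K K' H H' : Subgroup G} {n : ℕ}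

lemma relVanishes_rfl (H : Subgroup G) (n : ℕ) : RelVanishes (le_refl H) n := by
  cases n with
  | zero => exact relVanishes_zero _
  | succ n =>
    intro z hz
    obtain ⟨b, a, rfl⟩ := exists_eq_coneMk z
    have hom_eq (n) (x : (GroupSet.point H).complex.X n) :
        (GroupPair.point (le_refl H)).hom.chainMap.f n x = x :=
      GroupSetHom.chainMap_eq_self rfl (fun _ => by simp) n x
    refine ⟨coneMk _ 0 (-b), (mappingCone_d_succ _ _ _).trans (coneMk_inj.2 ⟨?_, ?_⟩)⟩
    · rw [map_zero, zero_sub, map_neg, neg_neg, hom_eq]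
    · rw [map_neg, neg_neg, (coneMk_mem_cycles _).1 hz |>.1, hom_eq]

/-- The elements of `H'` which commute with `K`. -/
def centralizerIn (K H' : Subgroup G) : Subgroup G := H' ⊓ Subgroup.centralizer (K : Set G)

lemma mem_centralizerIn {g : G} :
    g ∈ centralizerIn K H' ↔ g ∈ H' ∧ ∀ h ∈ K, g * h * g⁻¹ = h := by
  simp only [centralizerIn, Subgroup.mem_inf, Subgroup.mem_centralizer_iff, mul_inv_eq_iff_eq_mul,
    SetLike.mem_coe]
  exact and_congr_right fun _ => forall₂_congr fun _ _ => eq_comm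

variable (k : K ≤ K') (h : H ≤ H') (l : K ≤ H) (l' : K' ≤ H')

/-- Conjugation by an element which commutes with `K`, as a morphism of pairs. -/
abbrev GroupPairHom.conjCentralizer (w : centralizerIn K H') :
    GroupPairHom (.point k) (.point h) :=
  .conj k h w (fun x hx => by rw [(mem_centralizerIn.1 w.2).2 x hx]; exact l hx)
    fun _ hx => mul_mem (mul_mem w.2.1 (l' hx)) (inv_mem w.2.1)

lemma conjCentralizer_conj_eq (u w : centralizerIn K H') (x : G) (hx : x ∈ K) :
    (u : G) * x * (u : G)⁻¹ = w * x * (w : G)⁻¹ := by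
  rw [(mem_centralizerIn.1 u.2).2 x hx, (mem_centralizerIn.1 w.2).2 x hx]

/-- The prism between the conjugations by two elements which commute with `K`. -/
abbrev prismCentralizer (u w : centralizerIn K H') (n : ℕ) :
    (GroupSet.point K).complex.X n →+ (GroupSet.point H).complex.X (n + 1) :=
  GroupSetHom.prism (GroupPairHom.conjCentralizer k h l l' u).a
    (GroupPairHom.conjCentralizer k h l l' w).a (conjCentralizer_conj_eq u w) (n + 1)

lemma hom_prismCentralizer (u w : centralizerIn K H') (x : (GroupSet.point K).complex.X n) :
    (GroupPair.point h).hom.chainMap.f (n + 1) (prismCentralizer k h l l' u (u * w) n x) =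
      (GroupPair.point h).hom.chainMap.f (n + 1) (prismCentralizer k h l l' 1 w n x) := by
  refine GroupSet.apply_eq_of_eq_on_tensor
    (f := ((GroupPair.point h).hom.chainMap.f (n + 1)).comp (prismCentralizer k h l l' u (u * w) n))
    (g := ((GroupPair.point h).hom.chainMap.f (n + 1)).comp (prismCentralizer k h l l' 1 w n))
    (fun t y => ?_) x
  have translate := prism_comp_left (((1 : centralizerIn K H') : G) * ·) ((w : G) * ·)
    ((u : G) * ·) t
  have smul := (GroupSet.point H').tensor_smul ⟨u, u.2.1⟩
    (prism (((1 : centralizerIn K H') : G) * ·) ((w : G) * ·) (n + 1) (of t)) (of y)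
  rw [AddMonoidHom.comp_apply, AddMonoidHom.comp_apply, GroupSetHom.prism_tensor,
    GroupSetHom.prism_tensor, GroupSetHom.chainMap_tensor, GroupSetHom.chainMap_tensor,
    GroupSetHom.map_one_smul, GroupSetHom.map_one_smul]
  refine Eq.trans ?_ smul
  congr 1
  refine Eq.trans ?_ (congrArg _ translate)
  congr 2
  · exact congrArg₂ (prism · · _) (by funext; simp) (by funext; simp [mul_assoc])

/-- The homotopy between the conjugations by two elements which commute with `K`. -/
abbrev homotopyCentralizer (u w : centralizerIn K H') :
    ChainHomotopy (GroupPairHom.conjCentralizer k h l l' u).a.chainMap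
      (GroupPairHom.conjCentralizer k h l l' w).a.chainMap :=
  GroupSetHom.homotopy (conjCentralizer_conj_eq u w) fun _ => rfl

lemma conjCentralizer_b_chainMap (w : centralizerIn K H') (n : ℕ)
    (x : (GroupSet.point K').complex.X n) :
    (GroupPairHom.conjCentralizer k h l l' w).b.chainMap.f n x =
      (GroupPairHom.incl k h l l').b.chainMap.f n x := by
  refine GroupSetHom.chainMap_congr (φ := (GroupPairHom.incl k h l l').b)
    (ψ := (GroupPairHom.conjCentralizer k h l l' w).b) (⟨w, w.2.1⟩ : H') (mul_one _).symm
    (fun y => ?_) x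
  simp only [FreeAbelianGroup.map_of_apply]

lemma relMap_conjCentralizer_sub_sub_mem_boundaries (u w : centralizerIn K H')
    {z : (GroupPair.point k).relComplex.X (n + 1)}
    (hz : z ∈ (GroupPair.point k).relComplex.cycles (n + 1)) :
    (GroupPairHom.conjCentralizer k h l l' (u * w)).relMap.f (n + 1) z
      - (GroupPairHom.conjCentralizer k h l l' u).relMap.f (n + 1) z
      - ((GroupPairHom.conjCentralizer k h l l' w).relMap.f (n + 1) z
      - (GroupPairHom.conjCentralizer k h l l' 1).relMap.f (n + 1) z)
      ∈ (GroupPair.point h).relComplex.boundaries (n + 1) := by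
  obtain ⟨b, a, rfl⟩ := exists_eq_coneMk z
  have ha := ((coneMk_mem_cycles _).1 hz).2
  have homotopic (u w : centralizerIn K H') :
      (GroupPairHom.conjCentralizer k h l l' w).relMap.f (n + 1) (coneMk _ b a)
        - (GroupPairHom.conjCentralizer k h l l' u).relMap.f (n + 1) (coneMk _ b a)
        + coneMk _ ((GroupPair.point h).hom.chainMap.f (n + 1)
          (prismCentralizer k h l l' u w n a)) 0
        ∈ (GroupPair.point h).relComplex.boundaries (n + 1) :=
    coneMap_sub_add_mem_boundaries (GroupPairHom.conjCentralizer k h l l' u).chainMap_comm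
      (GroupPairHom.conjCentralizer k h l l' w).chainMap_comm (homotopyCentralizer k h l l' u w)
      (fun n x => (conjCentralizer_b_chainMap k h l l' u n x).trans
        (conjCentralizer_b_chainMap k h l l' w n x).symm) ha
  have := sub_mem (homotopic u (u * w)) (homotopic 1 w)
  rwa [hom_prismCentralizer, add_sub_add_right_eq_sub] at this

lemma relMap_conjCentralizer_mem_boundaries {τ : centralizerIn K H'}
    (hτ : ∀ x ∈ K', (τ : G) * x * (τ : G)⁻¹ ∈ H) {z : (GroupPair.point k).relComplex.X n}
    (hz : z ∈ (GroupPair.point k).relComplex.cycles n) :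
    (GroupPairHom.conjCentralizer k h l l' τ).relMap.f n z
      ∈ (GroupPair.point h).relComplex.boundaries n := by
  let move : GroupPairHom (.point k) (.point (le_refl H)) :=
    .conj k (le_refl H) τ (fun x hx => hτ x (k hx)) hτ
  have factor := (GroupPairHom.relMap_ext
      (f := (GroupPairHom.incl (le_refl H) h le_rfl h).comp move)
    (f' := GroupPairHom.conjCentralizer k h l l' τ) (n := n) (by simp [move])
    (fun _ => by simp [move]) (fun _ => by simp [move]) z).trans (GroupPairHom.relMap_comp _ _ z)
  rw [factor]
  exact ChainMap.mem_boundaries _ (relVanishes_rfl H n (ChainMap.mem_cycles _ hz))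

lemma relMap_incl_mem_boundaries_of_mem_commutator {τ : G}
    (hτ : τ ∈ ⁅centralizerIn K H', centralizerIn K H'⁆) (hτK : ∀ x ∈ K', τ * x * τ⁻¹ ∈ H)
    {z : (GroupPair.point k).relComplex.X n}
    (hz : z ∈ (GroupPair.point k).relComplex.cycles n) :
    (GroupPairHom.incl k h l l').relMap.f n z ∈ (GroupPair.point h).relComplex.boundaries n := by
  rw [← Subgroup.map_subtype_commutator] at hτ
  obtain ⟨τ, hτ, rfl⟩ := hτ
  cases n with
  | zero => exact relVanishes_zero h (ChainCx.mem_cycles_zero _)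
  | succ n =>
    have moved := relMap_conjCentralizer_mem_boundaries k h l l' hτK hz
    have := sub_mem moved (sub_mem_of_mem_commutator (fun u w =>
      relMap_conjCentralizer_sub_sub_mem_boundaries k h l l' u w hz) hτ)
    rwa [sub_sub_cancel] at this

end Commutators

section Vanishing

variable {F A B 𝔾 : Type u} [Field F] [AddCommGroup A] [Module F A] [AddCommGroup B] [Module F B]
  [Group 𝔾] [DistribMulAction 𝔾 A] [DistribMulAction 𝔾 B] {pr : A →ₗ[F] B →ₗ[F] F} {n : ℕ}

section Transvections

variable {Φ Φ' : Submodule F A} {Ψ Ψ' : Submodule F B} {u : A} {ξ ξ₀ : B} {g : 𝔾}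

omit [DistribMulAction 𝔾 B] in
lemma inv_smul_of_transvection (hg : ∀ a : A, g • a = a + pr a ξ • u) (h : pr u ξ = 0) (a : A) :
    g⁻¹ • a = a - pr a ξ • u := by
  rw [inv_smul_eq_iff, hg]
  simp [h]

namespace IsTransvectionPairing

variable [SMulCommClass 𝔾 F A] (hpr : IsTransvectionPairing 𝔾 pr)

include hpr

lemma exists_transvection_mem_centralizerIn (hu : u ∈ annihL pr Ψ) (hu' : u ∈ Φ')
    (hξ : ξ ∈ annihR pr Φ) (hξ' : ξ ∈ Ψ') (h : 1 + pr u ξ ≠ 0) :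
    ∃ g ∈ centralizerIn (fixer 𝔾 Φ' Ψ') (fixer 𝔾 Φ Ψ), ∀ a : A, g • a = a + pr a ξ • u := by
  obtain ⟨g, hg, hga⟩ := hpr.exists_transvection_mem_fixer hu hξ h
  exact ⟨g, mem_centralizerIn.2 ⟨hg, fun _ hk => hpr.conj_eq_of_transvection hga hk hu' hξ'⟩, hga⟩

/- The commutator of the dilation `u ↦ t u` with the transvection `a ↦ a + s (pr a ξ) u` is the
transvection `a ↦ a + (t - 1) s (pr a ξ) u`. -/
lemma exists_transvection_mem_commutator {t : F} (ht₀ : t ≠ 0) (ht₁ : t ≠ 1)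
    (hu : u ∈ annihL pr Ψ) (hu' : u ∈ Φ') (hξ : ξ ∈ annihR pr Φ) (hξ' : ξ ∈ Ψ')
    (hξ₀ : ξ₀ ∈ annihR pr Φ) (hξ₀' : ξ₀ ∈ Ψ') (h : pr u ξ = 0) (h₀ : pr u ξ₀ = 1) :
    ∃ g ∈ ⁅centralizerIn (fixer 𝔾 Φ' Ψ') (fixer 𝔾 Φ Ψ),
        centralizerIn (fixer 𝔾 Φ' Ψ') (fixer 𝔾 Φ Ψ)⁆, ∀ a : A, g • a = a + pr a ξ • u := by
  have ht : t - 1 ≠ 0 := sub_ne_zero.2 ht₁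
  have mul_inv_eq : t * (t - 1)⁻¹ = 1 + (t - 1)⁻¹ := by
    field_simp
    ring
  obtain ⟨d, hd, hda⟩ := hpr.exists_transvection_mem_centralizerIn
    (Submodule.smul_mem _ (t - 1) hu) (Submodule.smul_mem _ _ hu') hξ₀ hξ₀'
    (by simpa [h₀] using ht₀)
  obtain ⟨x, hx, hxa⟩ := hpr.exists_transvection_mem_centralizerIn
    (Submodule.smul_mem _ (t - 1)⁻¹ hu) (Submodule.smul_mem _ _ hu') hξ hξ' (by simp [h])
  have pr_d_inv (a : A) : pr (d⁻¹ • a) ξ = pr a ξ := by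
    conv_rhs => rw [← smul_inv_smul d a, hda]
    simp [h]
  have conj_smul (a : A) : d • x • d⁻¹ • a = a + (t * (t - 1)⁻¹ * pr a ξ) • u := by
    rw [hxa, smul_add, smul_inv_smul, pr_d_inv, hda]
    simp only [map_smul, LinearMap.smul_apply, h₀, smul_eq_mul]
    module
  refine ⟨_, Subgroup.commutator_mem_commutator hd hx, fun a => ?_⟩
  rw [commutatorElement_def, mul_smul, mul_smul, mul_smul, conj_smul,
    inv_smul_of_transvection hxa (by simp [h])]
  simp only [map_sub, map_smul, LinearMap.sub_apply, LinearMap.smul_apply, h, smul_eq_mul]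
  rw [mul_inv_eq]
  module

end IsTransvectionPairing

end Transvections

namespace HyperbolicDatum

variable [SMulCommClass 𝔾 F A] {D : HyperbolicDatum pr} {v : A} {η : B}

lemma exists_swap_mem_commutator (hpr : IsTransvectionPairing 𝔾 pr) {t : F} (ht₀ : t ≠ 0)
    (ht₁ : t ≠ 1) (hv : v ∈ annihL pr D.Ψ) (hη : η ∈ annihR pr D.Φ) (hvε : pr v D.ε = 0)
    (heη : pr D.e η = 0) (hvη : pr v η = 1) :
    ∃ τ ∈ ⁅centralizerIn (fixer 𝔾 (D.Φ ⊔ F ∙ v ⊔ F ∙ D.e) (D.Ψ ⊔ F ∙ η ⊔ F ∙ D.ε)) (D.outer 𝔾),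
        centralizerIn (fixer 𝔾 (D.Φ ⊔ F ∙ v ⊔ F ∙ D.e) (D.Ψ ⊔ F ∙ η ⊔ F ∙ D.ε)) (D.outer 𝔾)⁆,
      τ • v = -D.e ∧ τ • η = -D.ε := by
  have v_mem : v ∈ D.Φ ⊔ F ∙ v ⊔ F ∙ D.e :=
    Submodule.mem_sup_left (Submodule.mem_sup_right (Submodule.mem_span_singleton_self v))
  have e_mem : D.e ∈ D.Φ ⊔ F ∙ v ⊔ F ∙ D.e :=
    Submodule.mem_sup_right (Submodule.mem_span_singleton_self D.e)
  have η_mem : η ∈ D.Ψ ⊔ F ∙ η ⊔ F ∙ D.ε :=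
    Submodule.mem_sup_left (Submodule.mem_sup_right (Submodule.mem_span_singleton_self η))
  have ε_mem : D.ε ∈ D.Ψ ⊔ F ∙ η ⊔ F ∙ D.ε :=
    Submodule.mem_sup_right (Submodule.mem_span_singleton_self D.ε)
  obtain ⟨x, hx, hxa⟩ := hpr.exists_transvection_mem_commutator ht₀ ht₁ hv v_mem D.ε_mem ε_mem hη
    η_mem hvε hvη
  obtain ⟨y, hy, hya⟩ := hpr.exists_transvection_mem_commutator ht₀ ht₁ D.e_mem e_mem hη η_mem
    D.ε_mem ε_mem heη D.pr_eq_one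
  have swap_smul (a : A) : (x * y⁻¹ * x) • a =
      a + (pr a D.ε - pr a η) • v - (pr a η + pr a D.ε) • D.e := by
    rw [mul_smul, mul_smul, hxa a, inv_smul_of_transvection hya heη, hxa]
    simp only [map_add, map_sub, map_smul, LinearMap.add_apply, LinearMap.sub_apply,
      LinearMap.smul_apply, hvε, hvη, D.pr_eq_one, smul_eq_mul]
    module
  refine ⟨x * y⁻¹ * x, mul_mem (mul_mem hx (inv_mem hy)) hx, ?_, ?_⟩
  · simp [swap_smul, hvε, hvη]
  · rw [← eq_inv_smul_iff]
    refine hpr.ext_right fun a => ?_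
    rw [hpr.pr_smul_right, inv_inv, swap_smul]
    simp [hvε, D.pr_eq_one]

variable [SMulCommClass 𝔾 F B]

lemma mem_fixer_sup_span_sup_span {Φ : Submodule F A} {Ψ : Submodule F B} {g : 𝔾} :
    g ∈ fixer 𝔾 (Φ ⊔ F ∙ v) (Ψ ⊔ F ∙ η) ↔ g ∈ fixer 𝔾 Φ Ψ ∧ g • v = v ∧ g • η = η := by
  rw [mem_fixer_sup_span, ← fixer_flip, mem_fixer_sup_span, fixer_flip, and_assoc,
    and_comm (a := g • η = η)]

lemma mul_mul_inv_mem_inner {g h : 𝔾} (hg : g ∈ D.outer 𝔾) (hgv : g • v = -D.e)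
    (hgη : g • η = -D.ε) (hh : h ∈ fixer 𝔾 (D.Φ ⊔ F ∙ v) (D.Ψ ⊔ F ∙ η)) :
    g * h * g⁻¹ ∈ D.inner 𝔾 := by
  obtain ⟨hh, hhv, hhη⟩ := mem_fixer_sup_span_sup_span.1 hh
  refine mem_fixer_sup_span_sup_span.2 ⟨mul_mem (mul_mem hg hh) (inv_mem hg), ?_, ?_⟩
  · rw [← neg_eq_iff_eq_neg.2 hgv, smul_neg, mul_smul, inv_smul_smul, mul_smul, hhv]
  · rw [← neg_eq_iff_eq_neg.2 hgη, smul_neg, mul_smul, inv_smul_smul, mul_smul, hhη]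

/- The swap of `(v, η)` with the hyperbolic pair is a product of commutators, so it kills the
classes which come from the datum with `v` and `η` added. -/
lemma homologyRange_addLeftHom_le_boundaries (hpr : IsTransvectionPairing 𝔾 pr) {t : F}
    (ht₀ : t ≠ 0) (ht₁ : t ≠ 1) (hright : RightSurjective 𝔾 pr n) (hv : v ∈ annihL pr D.Ψ)
    (hvΦ : v ∉ D.Φ) (hvε : pr v D.ε = 0) (hrank : RankGE pr (D.Φ ⊔ F ∙ v) D.Ψ n) :
    (D.addLeftHom 𝔾 v hvε).relMap.homologyRange n ≤ (D.pair 𝔾).relComplex.boundaries n := by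
  obtain ⟨η, hη, hvη⟩ := hpr.exists_annihR_eq_one (notMem_sup_e hvΦ hvε)
  obtain ⟨hηΦ, heη⟩ := mem_annihR_sup_span.1 hη
  have hηD : η ∉ D.Ψ ⊔ annihR pr (D.Φ ⊔ F ∙ v) := by
    intro h
    obtain ⟨b, hb, b', hb', rfl⟩ := Submodule.mem_sup.1 h
    simp [mem_annihL.1 hv b hb, (mem_annihR_sup_span.1 hb').2] at hvη
  obtain ⟨τ, hτ, hτv, hτη⟩ := exists_swap_mem_commutator hpr ht₀ ht₁ hv hηΦ hvε heη hvη
  have hτD : τ ∈ D.outer 𝔾 := (Subgroup.commutator_le_self _ hτ).1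
  intro z hz
  obtain ⟨x, hx, hxz⟩ := ChainMap.mem_homologyRange.1 hz
  obtain ⟨w, hw, hwx⟩ := ChainMap.mem_homologyRange.1 <|
    hright (D.addLeft v hvε) η heη hηD hrank hx
  have swap_eq_zero := relMap_incl_mem_boundaries_of_mem_commutator
    (((D.addLeft v hvε).addRight η heη).inner_le_outer 𝔾) (D.inner_le_outer 𝔾)
    (fixer_mono (sup_le_sup_right le_sup_left _) (sup_le_sup_right le_sup_left _))
    (fixer_mono le_sup_left le_sup_left) hτ (fun _ => mul_mul_inv_mem_inner hτD hτv hτη) hw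
  have incl_eq_comp := GroupPairHom.relMap_ext (n := n)
    (f := (D.addLeftHom 𝔾 v hvε).comp ((D.addLeft v hvε).addRightHom 𝔾 η heη))
    (f' := .incl (((D.addLeft v hvε).addRight η heη).inner_le_outer 𝔾) (D.inner_le_outer 𝔾)
      (fixer_mono (sup_le_sup_right le_sup_left _) (sup_le_sup_right le_sup_left _))
      (fixer_mono le_sup_left le_sup_left))
    (by simp) (fun _ => by simp) (fun _ => by simp) w
  rw [incl_eq_comp, GroupPairHom.relMap_comp] at swap_eq_zero
  have hwx' := ChainMap.mem_boundaries (D.addLeftHom 𝔾 v hvε).relMap hwx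
  rw [map_sub] at hwx'
  have hxD := add_mem hwx' swap_eq_zero
  rw [sub_add_cancel] at hxD
  rw [← sub_add_cancel z]
  exact add_mem hxz hxD

end HyperbolicDatum

namespace IsTransvectionPairing

variable [SMulCommClass 𝔾 F A] [SMulCommClass 𝔾 F B] {t : F}

open HyperbolicDatum in
lemma stabilizerVanishing (hpr : IsTransvectionPairing 𝔾 pr) (ht₀ : t ≠ 0) (ht₁ : t ≠ 1)
    (hvan : ∀ q < n, StabilizerVanishing 𝔾 pr q) (hright : ∀ q ≤ n, RightSurjective 𝔾 pr q) :
    StabilizerVanishing 𝔾 pr n := by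
  intro D hrank
  obtain rfl | hn := Nat.eq_zero_or_pos n
  · exact relVanishes_zero _
  have hc : pr 0 D.ε = 0 := by simp
  obtain ⟨v, hv, hvε, hvΦ⟩ := (hrank.mono (m := 2) (by omega)).exists_notMem D.ε
  obtain ⟨y₀, -⟩ := hpr.exists_cosetVal_eq <|
    (mem_cosetOutside_inner_iff hc).2 ⟨⟨by rwa [sub_zero], hvΦ⟩, hvε⟩
  have hcoset (v) (_ : v ∈ cosetOutside pr D.Φ D.Ψ 0) : RankGE pr (D.Φ ⊔ F ∙ v) D.Ψ n :=
    hrank.sup_span v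
  have horbit := bijective_orbitMap_cosetPair_power (p := 1) hpr hc fun x =>
    ((RankGE.adjoin hcoset fun i => hpr.cosetVal_mem (x i)).mono (by omega)).not_annihL_le
  exact cycles_le_of_homologyRange_addLeftHom_le hpr hc y₀ horbit
    (fun p q hpq => cycles_le_homologyRange_face hpr hc ht₀ ht₁ (hvan q (by omega))
      (hright q (by omega)) (hpq ▸ hcoset))
    fun v hvε hv => homologyRange_addLeftHom_le_boundaries hpr ht₀ ht₁ (hright n le_rfl)
      (by simpa using hv.1) hv.2 hvε (hrank.sup_span v)

omit [SMulCommClass 𝔾 F A] [SMulCommClass 𝔾 F B] in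
lemma stabilizerVanishing_and_leftSurjective (ht₀ : t ≠ 0) (ht₁ : t ≠ 1) (n : ℕ) :
    ∀ {A B : Type u} [AddCommGroup A] [Module F A] [AddCommGroup B] [Module F B]
      [DistribMulAction 𝔾 A] [DistribMulAction 𝔾 B] [SMulCommClass 𝔾 F A] [SMulCommClass 𝔾 F B]
      {pr : A →ₗ[F] B →ₗ[F] F}, IsTransvectionPairing 𝔾 pr →
        StabilizerVanishing 𝔾 pr n ∧ LeftSurjective 𝔾 pr n := by
  induction n using Nat.strong_induction_on with
  | _ n ih =>
    have left {A B : Type u} [AddCommGroup A] [Module F A] [AddCommGroup B] [Module F B]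
        [DistribMulAction 𝔾 A] [DistribMulAction 𝔾 B] [SMulCommClass 𝔾 F A] [SMulCommClass 𝔾 F B]
        {pr : A →ₗ[F] B →ₗ[F] F} (hpr : IsTransvectionPairing 𝔾 pr) : LeftSurjective 𝔾 pr n :=
      hpr.leftSurjective ht₀ ht₁ (fun q hq => (ih q hq hpr).1)
        fun q hq => (ih q hq hpr.flip).2.flip
    intro A B _ _ _ _ _ _ _ _ pr hpr
    refine ⟨hpr.stabilizerVanishing ht₀ ht₁ (fun q hq => (ih q hq hpr).1) fun q hq => ?_, left hpr⟩
    obtain hq | rfl := hq.lt_or_eq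
    · exact (ih q hq hpr.flip).2.flip
    · exact (left hpr.flip).flip

end IsTransvectionPairing

end Vanishing

namespace ChainMap

variable {A B A' B' : ChainCx.{u}} {φ : ChainMap A B} {n : ℕ}

/-- Injectivity of the map induced on homology in degree `n`. -/
def HomologyInjective (φ : ChainMap A B) (n : ℕ) : Prop :=
  ∀ x ∈ A.cycles n, φ.f n x ∈ B.boundaries n → x ∈ A.boundaries n

/-- Surjectivity of the map induced on homology in degree `n`. -/
def HomologySurjective (φ : ChainMap A B) (n : ℕ) : Prop := B.cycles n ≤ φ.homologyRange n

lemma homologySurjective_of_mappingCone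
    (h : (mappingCone φ).cycles n ≤ (mappingCone φ).boundaries n) : φ.HomologySurjective n := by
  refine fun b hb => mem_homologyRange.2 ?_
  cases n with
  | zero =>
    obtain ⟨y, hy⟩ := h (ChainCx.mem_cycles_zero (coneMk₀ φ b))
    obtain ⟨b', a, rfl⟩ := exists_eq_coneMk y
    have hb' : B.d 0 b' - φ.f 0 a = b := hy
    refine ⟨-a, ChainCx.mem_cycles_zero _, b', ?_⟩
    rw [← hb', map_neg, sub_neg_eq_add, sub_add_cancel]
  | succ n =>
    obtain ⟨y, hy⟩ := h ((coneMk_mem_cycles φ).2 ⟨hb.trans (map_zero (φ.f n)).symm, zero_mem _⟩)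
    obtain ⟨b', a, rfl⟩ := exists_eq_coneMk y
    rw [mappingCone_d_succ, coneMk_inj] at hy
    refine ⟨-a, ?_, b', ?_⟩
    · rw [ChainCx.mem_cycles_succ, map_neg]
      exact hy.2
    · rw [map_neg, sub_neg_eq_add, ← hy.1, sub_add_cancel]

lemma homologyInjective_of_mappingCone
    (h : (mappingCone φ).cycles (n + 1) ≤ (mappingCone φ).boundaries (n + 1)) :
    φ.HomologyInjective n := by
  rintro a ha ⟨b, hb⟩
  obtain ⟨y, hy⟩ := h ((coneMk_mem_cycles φ).2 ⟨hb, ha⟩)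
  obtain ⟨b', a', rfl⟩ := exists_eq_coneMk y
  rw [mappingCone_d_succ, coneMk_inj] at hy
  exact ⟨-a', by rw [map_neg]; exact hy.2⟩

variable {φ' : ChainMap A' B'} {κ : ChainMap A' A} {κ' : ChainMap B' B}

lemma HomologySurjective.of_comm_square (hφ : φ.HomologySurjective n)
    (comm : ∀ x, κ'.f n (φ'.f n x) = φ.f n (κ.f n x)) (hκ : κ.HomologySurjective n)
    (hκ' : κ'.HomologyInjective n) : φ'.HomologySurjective n := by
  refine fun y hy => mem_homologyRange.2 ?_
  obtain ⟨a, ha, hya⟩ := mem_homologyRange.1 (hφ (κ'.mem_cycles hy))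
  obtain ⟨x, hx, hax⟩ := mem_homologyRange.1 (hκ ha)
  refine ⟨x, hx, hκ' _ (sub_mem hy (φ'.mem_cycles hx)) ?_⟩
  rw [map_sub, comm, ← sub_add_sub_cancel _ (φ.f n a), ← map_sub]
  exact add_mem hya (φ.mem_boundaries hax)

lemma HomologyInjective.of_comm_square (hφ : φ.HomologyInjective n)
    (comm : ∀ x, κ'.f n (φ'.f n x) = φ.f n (κ.f n x)) (hκ : κ.HomologyInjective n) :
    φ'.HomologyInjective n := fun x hx hx' =>
  hκ x hx <| hφ _ (κ.mem_cycles hx) <| comm x ▸ κ'.mem_boundaries hx'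

end ChainMap

section Bar

open GroupHomologyBar (chains chainsMap d_single chainsMap_single)

variable {Γ Γ' : Type} [Group Γ] [Group Γ'] {n : ℕ}

lemma boundary_of {E : Type*} (x : Fin (n + 1) → E) :
    boundary n (of x) = ∑ i : Fin (n + 1), (-1 : ℤ) ^ (i : ℕ) • of (x ∘ i.succAbove) := by
  obtain ⟨e, x, rfl⟩ := exists_eq_vecCons x
  induction n generalizing e with
  | zero => simp [Subsingleton.elim (_ ∘ _) ![]]
  | succ n ih =>
    obtain ⟨e', x, rfl⟩ := exists_eq_vecCons x
    have hface (i : Fin (n + 1)) : vecCons e (vecCons e' x) ∘ i.succ.succAbove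
        = vecCons e (vecCons e' x ∘ i.succAbove) :=
      funext fun k => by cases k using Fin.cases <;> simp
    have hface₀ : vecCons e (vecCons e' x) ∘ Fin.succ = vecCons e' x := rfl
    rw [boundary_succ, ih, Fin.sum_univ_succ (n := n + 1)]
    simp [hface, hface₀, pow_succ, sub_eq_add_neg]

/-- The inhomogeneous coordinates `[t₀⁻¹t₁|…|tₙ₋₁⁻¹tₙ]` of a homogeneous tuple; they are inverted,
up to the choice of `t₀`, by `Fin.partialProd`. -/
def increments (t : Fin (n + 1) → Γ) : Fin n → Γ := fun i => (t i.castSucc)⁻¹ * t i.succ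

lemma increments_smul (γ : Γ) (t : Fin (n + 1) → Γ) : increments (γ • t) = increments t :=
  funext fun i => by simp [increments, mul_assoc]

lemma increments_partialProd (g : Fin n → Γ) : increments (Fin.partialProd g) = g :=
  funext (Fin.partialProd_right_inv g)

lemma smul_partialProd_increments (t : Fin (n + 1) → Γ) :
    t 0 • Fin.partialProd (increments t) = t :=
  Fin.partialProd_left_inv t

lemma increments_comp_succAbove (t : Fin (n + 2) → Γ) (j : Fin (n + 1)) :
    increments (t ∘ j.succ.succAbove) = Fin.contractNth j (· * ·) (increments t) := by
  conv_lhs => rw [← smul_partialProd_increments t]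
  have h := Fin.partialProd_contractNth (increments t) j
  rw [show (t 0 • Fin.partialProd (increments t)) ∘ j.succ.succAbove
    = t 0 • (Fin.partialProd (increments t) ∘ j.succ.succAbove) from rfl, ← h, increments_smul,
    increments_partialProd]

/-- The projection of the homogeneous onto the inhomogeneous bar complex. -/
noncomputable def inhomogeneous (n : ℕ) : FreeAbelianGroup (Fin (n + 1) → Γ) →+ chains Γ ℤ n :=
  lift fun t => Finsupp.single (increments t) 1

@[simp] lemma inhomogeneous_of (t : Fin (n + 1) → Γ) :
    inhomogeneous n (of t) = Finsupp.single (increments t) 1 := by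
  simp [inhomogeneous]

lemma inhomogeneous_surjective (n : ℕ) :
    Function.Surjective (inhomogeneous n : FreeAbelianGroup (Fin (n + 1) → Γ) →+ _) := fun x => by
  induction x using Finsupp.induction_linear with
  | zero => exact ⟨0, map_zero _⟩
  | add x y hx hy =>
    obtain ⟨u, rfl⟩ := hx
    obtain ⟨v, rfl⟩ := hy
    exact ⟨u + v, map_add _ u v⟩
  | single g a =>
    refine ⟨a • of (Fin.partialProd g), ?_⟩
    rw [map_zsmul, inhomogeneous_of, increments_partialProd, Finsupp.smul_single, zsmul_one,
      Int.cast_id]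

lemma inhomogeneous_smul (γ : Γ) (u : FreeAbelianGroup (Fin (n + 1) → Γ)) :
    inhomogeneous n (map (γ • ·) u) = inhomogeneous n u :=
  apply_eq_of_eq_on_of (f := (inhomogeneous n).comp (map (γ • ·)))
    (fun t => by simp [increments_smul]) u

lemma inhomogeneous_boundary (u : FreeAbelianGroup (Fin (n + 2) → Γ)) :
    inhomogeneous n (boundary (n + 1) u) = GroupHomologyBar.d Γ ℤ n (inhomogeneous (n + 1) u) := by
  refine apply_eq_of_eq_on_of (f := (inhomogeneous n).comp (boundary (n + 1)))
    (g := (GroupHomologyBar.d Γ ℤ n).toAddMonoidHom.comp (inhomogeneous (n + 1))) (fun t => ?_) u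
  change inhomogeneous n (boundary (n + 1) (of t)) = GroupHomologyBar.d Γ ℤ n (inhomogeneous _ _)
  rw [boundary_of, map_sum, Fin.sum_univ_succ, inhomogeneous_of, d_single]
  simp only [map_zsmul, inhomogeneous_of, increments_comp_succAbove, Fin.val_succ, Fin.val_zero,
    pow_zero, one_smul]
  rfl

lemma chainsMap_inhomogeneous (ψ : Γ →* Γ') (u : FreeAbelianGroup (Fin (n + 1) → Γ)) :
    chainsMap ℤ ψ n (inhomogeneous n u) = inhomogeneous n (map (ψ ∘ ·) u) := by
  refine apply_eq_of_eq_on_of (f := (chainsMap ℤ ψ n).toAddMonoidHom.comp (inhomogeneous n))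
    (g := (inhomogeneous n).comp (map (ψ ∘ ·))) (fun t => ?_) u
  change chainsMap ℤ ψ n (inhomogeneous n (of t)) = inhomogeneous n (map (ψ ∘ ·) (of t))
  rw [FreeAbelianGroup.map_of_apply, inhomogeneous_of, inhomogeneous_of, chainsMap_single]
  congr 1
  exact funext fun i => by simp [increments]

variable (Γ) in
/-- The inhomogeneous bar complex with integral coefficients. -/
noncomputable def barComplex : ChainCx where
  X := chains Γ ℤ
  d n := (GroupHomologyBar.d Γ ℤ n).toAddMonoidHom
  d_d n x := by
    obtain ⟨u, rfl⟩ := inhomogeneous_surjective _ x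
    change GroupHomologyBar.d Γ ℤ n (GroupHomologyBar.d Γ ℤ (n + 1) (inhomogeneous _ u)) = 0
    rw [← inhomogeneous_boundary, ← inhomogeneous_boundary, boundary_boundary, map_zero]

/-- The map of bar complexes induced by a group homomorphism. -/
noncomputable def barMap (ψ : Γ →* Γ') : ChainMap (barComplex Γ) (barComplex Γ') where
  f n := (chainsMap ℤ ψ n).toAddMonoidHom
  comm n := DFunLike.congr_fun (GroupHomologyBar.d_chainsMap ℤ ψ n)

lemma mem_cycles_barComplex {x : chains Γ ℤ n} :
    x ∈ (barComplex Γ).cycles n ↔ x ∈ GroupHomologyBar.cycles Γ ℤ n := by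
  cases n <;> exact Iff.rfl

lemma mem_boundaries_barComplex {x : chains Γ ℤ n} :
    x ∈ (barComplex Γ).boundaries n ↔ x ∈ LinearMap.range (GroupHomologyBar.d Γ ℤ n) :=
  Iff.rfl

lemma inducedMap_surjective {ψ : Γ →* Γ'} (h : (barMap ψ).HomologySurjective n) :
    Function.Surjective (GroupHomologyBar.inducedMap ℤ ψ n) := by
  intro c
  obtain ⟨⟨y, hy⟩, rfl⟩ := Submodule.Quotient.mk_surjective _ c
  obtain ⟨x, hx, hyx⟩ := ChainMap.mem_homologyRange.1 (h (mem_cycles_barComplex.2 hy))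
  refine ⟨Submodule.Quotient.mk ⟨x, mem_cycles_barComplex.1 hx⟩, Eq.symm ?_⟩
  exact (Submodule.Quotient.eq _).2 (mem_boundaries_barComplex.1 hyx)

lemma inducedMap_injective {ψ : Γ →* Γ'} (h : (barMap ψ).HomologyInjective n) :
    Function.Injective (GroupHomologyBar.inducedMap ℤ ψ n) := by
  refine (injective_iff_map_eq_zero _).2 fun c hc => ?_
  obtain ⟨⟨x, hx⟩, rfl⟩ := Submodule.Quotient.mk_surjective _ c
  refine (Submodule.Quotient.mk_eq_zero _).2 (mem_boundaries_barComplex.1 ?_)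
  refine h x (mem_cycles_barComplex.2 hx) (mem_boundaries_barComplex.2 ?_)
  exact (Submodule.Quotient.mk_eq_zero (GroupHomologyBar.boundaries Γ' ℤ n)).1 hc

end Bar

section BarComparison

open GroupHomologyBar (chains)

variable {Γ Γ' G : Type} [Group Γ] [Group Γ'] [Group G] {n : ℕ} (θ : Γ →* G)

/-- The class of a homogeneous chain in the complex computing the homology of `H`. -/
def pointClass (H : Subgroup G) (n : ℕ) :
    FreeAbelianGroup (Fin n → G) →+ FreeAbelianGroup ((GroupSet.point H).Orbits n) :=
  (GroupSet.point H).tensor.flip (of PUnit.unit)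

lemma pointClass_of (H : Subgroup G) (t : Fin n → G) :
    pointClass H n (of t) = of ((GroupSet.point H).orbit t PUnit.unit) :=
  GroupSet.tensor_of t _

lemma pointClass_smul (H : Subgroup G) (h : H) (u : FreeAbelianGroup (Fin n → G)) :
    pointClass H n (map (h • ·) u) = pointClass H n u := by
  simpa [pointClass] using (GroupSet.point H).tensor_smul h u (of PUnit.unit)

lemma differential_pointClass (H : Subgroup G) (u : FreeAbelianGroup (Fin (n + 1) → G)) :
    (GroupSet.point H).differential n (pointClass H (n + 1) u) = pointClass H n (boundary n u) :=
  GroupSet.differential_tensor u _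

lemma pointClass_surjective (H : Subgroup G) : Function.Surjective (pointClass H n) := fun x =>
  let ⟨u, hu⟩ := GroupSet.exists_eq_tensor_of (S := .point H) (y := PUnit.unit) (fun _ => rfl) x
  ⟨u, hu.symm⟩

/-- The map sending `[g₁|…|gₙ]` to the class of `(1, g₁, g₁g₂, …, g₁⋯gₙ)`. -/
noncomputable def homogeneous (n : ℕ) :
    chains Γ ℤ n →+ FreeAbelianGroup ((GroupSet.point θ.range).Orbits (n + 1)) :=
  Finsupp.liftAddHom fun g =>
    zmultiplesHom _ (pointClass θ.range (n + 1) (of (θ ∘ Fin.partialProd g)))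

lemma homogeneous_inhomogeneous (u : FreeAbelianGroup (Fin (n + 1) → Γ)) :
    homogeneous θ n (inhomogeneous n u) = pointClass θ.range (n + 1) (map (θ ∘ ·) u) := by
  refine apply_eq_of_eq_on_of (f := (homogeneous θ n).comp (inhomogeneous n))
    (g := (pointClass θ.range (n + 1)).comp (map (θ ∘ ·))) (fun t => ?_) u
  have ht : θ ∘ t = θ.rangeRestrict (t 0) • (θ ∘ Fin.partialProd (increments t)) := by
    conv_lhs => rw [← smul_partialProd_increments t]
    exact comp_smul (fun γ => map_mul θ (t 0) γ) _
  simp only [AddMonoidHom.comp_apply, inhomogeneous_of, FreeAbelianGroup.map_of_apply, ht]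
  rw [← FreeAbelianGroup.map_of_apply, pointClass_smul]
  simp [homogeneous]

/-- The comparison map from the inhomogeneous bar complex of `Γ` to the complex computing the
homology of the image of `Γ` from tuples in the ambient group. -/
noncomputable def barToPoint : ChainMap (barComplex Γ) (GroupSet.point θ.range).complex where
  f := homogeneous θ
  comm n x := by
    obtain ⟨u, rfl⟩ := inhomogeneous_surjective _ x
    change (GroupSet.point θ.range).differential (n + 1) (homogeneous θ (n + 1) (inhomogeneous _ u))
      = homogeneous θ n (GroupHomologyBar.d Γ ℤ n (inhomogeneous _ u))
    rw [← inhomogeneous_boundary, homogeneous_inhomogeneous, homogeneous_inhomogeneous,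
      differential_pointClass, boundary_map]

variable {θ} in
lemma barToPoint_naturality {θ' : Γ' →* G} {ψ : Γ →* Γ'} (hψ : ∀ γ, θ' (ψ γ) = θ γ)
    (le : θ.range ≤ θ'.range) (x : (barComplex Γ).X n) :
    (GroupPair.point le).hom.chainMap.f n ((barToPoint θ).f n x)
      = (barToPoint θ').f n ((barMap ψ).f n x) := by
  obtain ⟨u, rfl⟩ := inhomogeneous_surjective _ x
  change (GroupPair.point le).hom.chainMap.f n (homogeneous θ n (inhomogeneous n u))
    = homogeneous θ' n (GroupHomologyBar.chainsMap ℤ ψ n (inhomogeneous n u))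
  rw [chainsMap_inhomogeneous, homogeneous_inhomogeneous, homogeneous_inhomogeneous,
    map_map_apply]
  refine ((GroupPair.point le).hom.chainMap_tensor _ _).trans ?_
  rw [GroupSetHom.map_one_smul, show (fun t : Fin (n + 1) → Γ => θ' ∘ (ψ ∘ t)) = (θ ∘ ·) from
    funext fun t => funext fun i => hψ (t i)]
  exact congrArg _ (FreeAbelianGroup.map_of_apply _)

section Retraction

variable {θ} {r : G → Γ} (hr : ∀ γ s, r (θ γ * s) = γ * r s)

/-- The map on coinvariants induced by an equivariant map from the ambient group to `Γ`. -/
noncomputable def pointInhomogeneous (n : ℕ) :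
    FreeAbelianGroup ((GroupSet.point θ.range).Orbits (n + 1)) →+ chains Γ ℤ n :=
  (GroupSet.point θ.range).descend (fun t _ => inhomogeneous n (of (r ∘ t))) (by
    rintro ⟨_, γ, rfl⟩ t _
    rw [show r ∘ ((⟨θ γ, γ, rfl⟩ : θ.range) • t) = γ • (r ∘ t) from comp_smul (fun s => hr γ s) t,
      ← FreeAbelianGroup.map_of_apply, inhomogeneous_smul])

lemma pointInhomogeneous_pointClass (u : FreeAbelianGroup (Fin (n + 1) → G)) :
    pointInhomogeneous hr n (pointClass θ.range (n + 1) u) = inhomogeneous n (map (r ∘ ·) u) := by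
  refine apply_eq_of_eq_on_of (f := (pointInhomogeneous hr n).comp (pointClass θ.range (n + 1)))
    (g := (inhomogeneous n).comp (map (r ∘ ·))) (fun t => ?_) u
  change pointInhomogeneous hr n (pointClass _ _ (of t)) = inhomogeneous n (map (r ∘ ·) (of t))
  rw [pointClass_of, FreeAbelianGroup.map_of_apply]
  exact GroupSet.descend_of _ _ t _

/-- The comparison map back to the inhomogeneous bar complex. -/
noncomputable def pointToBar : ChainMap (GroupSet.point θ.range).complex (barComplex Γ) where
  f := pointInhomogeneous hr
  comm n x := by
    obtain ⟨u, rfl⟩ := pointClass_surjective _ x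
    change GroupHomologyBar.d Γ ℤ n (pointInhomogeneous hr (n + 1) (pointClass _ _ u))
      = pointInhomogeneous hr n ((GroupSet.point θ.range).differential (n + 1) (pointClass _ _ u))
    rw [differential_pointClass, pointInhomogeneous_pointClass, pointInhomogeneous_pointClass,
      ← inhomogeneous_boundary, boundary_map]

lemma pointToBar_barToPoint (hθ : ∀ γ, r (θ γ) = γ) (x : (barComplex Γ).X n) :
    (pointToBar hr).f n ((barToPoint θ).f n x) = x := by
  obtain ⟨u, rfl⟩ := inhomogeneous_surjective _ x
  change pointInhomogeneous hr n (homogeneous θ n (inhomogeneous n u)) = inhomogeneous n u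
  have hrθ (t : Fin (n + 1) → Γ) : r ∘ (θ ∘ t) = t := funext fun i => hθ (t i)
  rw [homogeneous_inhomogeneous, pointInhomogeneous_pointClass, map_map_apply, map_eq_self hrθ]

lemma barToPoint_pointToBar (u : FreeAbelianGroup (Fin (n + 1) → G)) :
    (barToPoint θ).f n ((pointToBar hr).f n (pointClass θ.range (n + 1) u))
      = pointClass θ.range (n + 1) (map ((θ ∘ r) ∘ ·) u) := by
  change homogeneous θ n (pointInhomogeneous hr n (pointClass θ.range (n + 1) u)) = _
  rw [pointInhomogeneous_pointClass, homogeneous_inhomogeneous, map_map_apply]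
  rfl

include hr in
lemma prism_smul_of_range (h : θ.range) (t : Fin n → G) :
    prism id (θ ∘ r) n (of (h • t)) = map (h • ·) (prism id (θ ∘ r) n (of t)) := by
  have hθr (s : G) : (θ ∘ r) (h • s) = h • (θ ∘ r) s := by
    obtain ⟨_, γ, rfl⟩ := h
    exact (congrArg θ (hr γ s)).trans (map_mul θ γ (r s))
  exact prism_smul (f := id) (fun _ => rfl) hθr t

/-- The prism operator from the identity to an equivariant map, on coinvariants. -/
noncomputable def retractionPrism (n : ℕ) :
    FreeAbelianGroup ((GroupSet.point θ.range).Orbits n) →+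
      FreeAbelianGroup ((GroupSet.point θ.range).Orbits (n + 1)) :=
  (GroupSet.point θ.range).tensorMap (T := .point θ.range) id (prism id (θ ∘ r) n)
    (AddMonoidHom.id _) (prism_smul_of_range hr) (fun _ _ => rfl)

lemma retractionPrism_pointClass (u : FreeAbelianGroup (Fin n → G)) :
    retractionPrism hr n (pointClass θ.range n u)
      = pointClass θ.range (n + 1) (prism id (θ ∘ r) n u) :=
  GroupSet.tensorMap_tensor _ _ _ _ _ _ _

lemma pointClass_boundary_prism (u : FreeAbelianGroup (Fin (n + 1) → G)) :
    pointClass θ.range (n + 1) (boundary (n + 1) (prism id (θ ∘ r) (n + 1) u))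
        + pointClass θ.range (n + 1) (prism id (θ ∘ r) n (boundary n u))
      = (barToPoint θ).f n ((pointToBar hr).f n (pointClass θ.range (n + 1) u))
        - pointClass θ.range (n + 1) u := by
  rw [barToPoint_pointToBar, ← map_add, boundary_prism, map_sub,
    map_eq_self fun t => Function.id_comp t]

/-- The comparison map to the inhomogeneous bar complex and back is homotopic to the identity. -/
noncomputable def retractionHomotopy :
    ChainHomotopy (.id _) ((barToPoint θ).comp (pointToBar hr)) where
  h n := retractionPrism hr (n + 1)
  d_h_zero x := by
    obtain ⟨u, rfl⟩ := pointClass_surjective _ x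
    change (GroupSet.point θ.range).differential 1 (retractionPrism hr 1 (pointClass _ 1 u))
      = (barToPoint θ).f 0 ((pointToBar hr).f 0 (pointClass _ 1 u)) - pointClass _ 1 u
    rw [← pointClass_boundary_prism hr u, prism_zero, map_zero, add_zero,
      retractionPrism_pointClass, differential_pointClass]
  d_h_succ n x := by
    obtain ⟨u, rfl⟩ := pointClass_surjective _ x
    change (GroupSet.point θ.range).differential (n + 2)
          (retractionPrism hr (n + 2) (pointClass _ (n + 2) u))
        + retractionPrism hr (n + 1)
          ((GroupSet.point θ.range).differential (n + 1) (pointClass _ (n + 2) u))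
      = (barToPoint θ).f (n + 1) ((pointToBar hr).f (n + 1) (pointClass _ (n + 2) u))
        - pointClass _ (n + 2) u
    rw [← pointClass_boundary_prism hr u, retractionPrism_pointClass, differential_pointClass,
      differential_pointClass, retractionPrism_pointClass]

end Retraction

variable {θ}

lemma exists_equivariant_leftInverse (hθ : Function.Injective θ) :
    ∃ r : G → Γ, (∀ γ s, r (θ γ * s) = γ * r s) ∧ ∀ γ, r (θ γ) = γ := by
  obtain ⟨ρ, hρ, hρ'⟩ := exists_equivariant_retraction θ.range
  let e := MonoidHom.ofInjective hθ
  refine ⟨fun s => e.symm (ρ s), fun γ s => ?_, fun γ => ?_⟩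
  · change e.symm (ρ (e γ * s)) = γ * e.symm (ρ s)
    rw [hρ, map_mul, e.symm_apply_apply]
  · change e.symm (ρ (e γ)) = γ
    rw [hρ', e.symm_apply_apply]

lemma barToPoint_homologyInjective (hθ : Function.Injective θ) (n : ℕ) :
    (barToPoint θ).HomologyInjective n := fun x _ hx => by
  obtain ⟨r, hr, hr'⟩ := exists_equivariant_leftInverse hθ
  exact pointToBar_barToPoint hr hr' x ▸ (pointToBar hr).mem_boundaries hx

lemma barToPoint_homologySurjective (hθ : Function.Injective θ) (n : ℕ) :
    (barToPoint θ).HomologySurjective n := fun y hy => by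
  obtain ⟨r, hr, -⟩ := exists_equivariant_leftInverse hθ
  refine ChainMap.mem_homologyRange.2 ⟨(pointToBar hr).f n y, (pointToBar hr).mem_cycles hy, ?_⟩
  rw [← neg_sub]
  exact neg_mem ⟨_, ((retractionHomotopy hr).sub_eq_d hy).symm⟩

variable {θ' : Γ' →* G} {ψ : Γ →* Γ'} {H H' : Subgroup G} {le : H ≤ H'}

lemma inducedMap_surjective_of_relVanishes (hθ : Function.Injective θ)
    (hθ' : Function.Injective θ') (hψ : ∀ γ, θ' (ψ γ) = θ γ) (hH : θ.range = H)
    (hH' : θ'.range = H') (h : RelVanishes le n) :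
    Function.Surjective (GroupHomologyBar.inducedMap ℤ ψ n) := by
  subst hH hH'
  exact inducedMap_surjective <| (ChainMap.homologySurjective_of_mappingCone h).of_comm_square
    (fun x => (barToPoint_naturality hψ le x).symm) (barToPoint_homologySurjective hθ n)
    (barToPoint_homologyInjective hθ' n)

lemma inducedMap_injective_of_relVanishes (hθ : Function.Injective θ) (hψ : ∀ γ, θ' (ψ γ) = θ γ)
    (hH : θ.range = H) (hH' : θ'.range = H') (h : RelVanishes le (n + 1)) :
    Function.Injective (GroupHomologyBar.inducedMap ℤ ψ n) := by
  subst hH hH'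
  exact inducedMap_injective <| (ChainMap.homologyInjective_of_mappingCone h).of_comm_square
    (fun x => (barToPoint_naturality hψ le x).symm) (barToPoint_homologyInjective hθ n)

end BarComparison

section Dual

variable {F W : Type u} [Field F] [AddCommGroup W] [Module F W]

/-- The contragredient action of `GL(W)` on the dual space. -/
instance contragredientAction : DistribMulAction (W ≃ₗ[F] W) (Module.Dual F W) where
  smul g b := g.symm.dualMap b
  one_smul _ := rfl
  mul_smul _ _ _ := rfl
  smul_zero g := map_zero g.symm.dualMap
  smul_add g := map_add g.symm.dualMap

lemma contragredient_smul_eq_iff {g : W ≃ₗ[F] W} {b : Module.Dual F W} :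
    g • b = b ↔ ∀ w, b (g w) = b w := by
  have hsmul (w : W) : (g • b) w = b (g.symm w) := rfl
  rw [LinearMap.ext_iff, g.surjective.forall]
  simp_rw [hsmul, g.symm_apply_apply, eq_comm]

instance : SMulCommClass (W ≃ₗ[F] W) F (Module.Dual F W) :=
  ⟨fun _ _ _ => rfl⟩

lemma isTransvectionPairing_eval [FiniteDimensional F W] :
    IsTransvectionPairing (W ≃ₗ[F] W) (Module.Dual.eval F W) where
  pr_smul_smul g a b := congrArg b (g.symm_apply_apply a)
  exists_annihR_ne_zero Φ v hv := by
    obtain ⟨b, hbv, hb⟩ := Submodule.exists_le_ker_of_notMem hv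
    exact ⟨b, mem_annihR.2 hb, hbv⟩
  exists_annihL_ne_zero Ψ w hw := by
    obtain ⟨b, hbw, hb⟩ := Submodule.exists_le_ker_of_notMem hw
    obtain ⟨a, rfl⟩ := (Module.evalEquiv F W).surjective b
    exact ⟨a, mem_annihL.2 hb, hbw⟩
  exists_transvection u ξ h :=
    ⟨LinearEquiv.dilatransvection (IsUnit.mk0 (1 + ξ u) h), fun _ =>
      LinearEquiv.dilatransvection.apply⟩
  eq_one_of_smul_eq _ hg := LinearEquiv.ext hg

lemma rankGE_eval (Φ : Submodule F W) [FiniteDimensional F (W ⧸ Φ)] :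
    RankGE (Module.Dual.eval F W) Φ ⊥ (Module.finrank F (W ⧸ Φ)) := by
  let b := Module.finBasis F (W ⧸ Φ)
  choose f hf using fun i => Φ.mkQ_surjective (b i)
  refine ⟨f, fun i => (b.coord i).comp Φ.mkQ, fun i => mem_annihL.2 ?_,
    fun i => mem_annihR.2 fun a ha => ?_, fun i j => ?_⟩
  · rintro _ rfl
    exact map_zero _
  · change b.coord i (Φ.mkQ a) = 0
    rw [Submodule.mkQ_apply, (Submodule.Quotient.mk_eq_zero Φ).2 ha, map_zero]
  · change b.coord j (Φ.mkQ (f i)) = _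
    rw [hf, Module.Basis.coord_apply, Module.Basis.repr_self, Finsupp.single_apply]

end Dual

section Stabilization

variable {F V : Type} [Field F] [AddCommGroup V] [Module F V] (V₀ : Submodule F V)

/-- The hyperbolic datum on `V ⊕ F` whose stabilizers are `A(V ⊕ F, V₀)` and the image of
`A(V, V₀)`. -/
def stabilizationDatum : HyperbolicDatum (Module.Dual.eval F (V × F)) where
  Φ := V₀.map (LinearMap.inl F V F)
  Ψ := ⊥
  e := (0, 1)
  ε := LinearMap.snd F V F
  e_mem := mem_annihL.2 <| by rintro _ rfl; rfl
  ε_mem := mem_annihR.2 <| by rintro _ ⟨v, -, rfl⟩; rfl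
  pr_eq_one := rfl

lemma finrank_prod_quotient_map_inl [FiniteDimensional F V] :
    Module.finrank F ((V × F) ⧸ V₀.map (LinearMap.inl F V F))
      = Module.finrank F V - Module.finrank F V₀ + 1 := by
  have hquot := Submodule.finrank_quotient_add_finrank (V₀.map (LinearMap.inl F V F))
  have hmap : Module.finrank F (V₀.map (LinearMap.inl F V F)) = Module.finrank F V₀ :=
    (Submodule.equivMapOfInjective _ LinearMap.inl_injective V₀).symm.finrank_eq
  have hle := Submodule.finrank_le V₀
  rw [hmap, Module.finrank_prod, Module.finrank_self] at hquot
  omega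

lemma fixStab_injective : Function.Injective (fixStab F V V₀) := fun _ _ h =>
  Subtype.ext <| LinearEquiv.ext fun v => congrArg (fun g => (g.1 (v, 0)).1) h

lemma mem_outer_stabilizationDatum {g : (V × F) ≃ₗ[F] (V × F)} :
    g ∈ (stabilizationDatum V₀).outer _ ↔ g ∈ fixSubgroupProd F V V₀ := by
  refine mem_fixer.trans ⟨fun h v hv => h.1 _ ⟨v, hv, rfl⟩, fun h => ⟨?_, ?_⟩⟩
  · rintro _ ⟨v, hv, rfl⟩
    exact h v hv
  · rintro _ rfl
    exact smul_zero g

lemma range_subtype_eq_outer :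
    (fixSubgroupProd F V V₀).subtype.range = (stabilizationDatum V₀).outer _ := by
  ext g
  rw [Subgroup.range_subtype, mem_outer_stabilizationDatum]

lemma exists_prodCongr_eq {g : (V × F) ≃ₗ[F] (V × F)} (hsnd : ∀ x, (g x).2 = x.2)
    (he : g (0, 1) = (0, 1)) : ∃ k : V ≃ₗ[F] V, k.prodCongr (LinearEquiv.refl F F) = g := by
  have hsnd_symm (x : V × F) : (g.symm x).2 = x.2 := by
    rw [← hsnd, g.apply_symm_apply]
  have hinl (v : V) : ((g (v, 0)).1, (0 : F)) = g (v, 0) := Prod.ext rfl (hsnd (v, 0)).symm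
  have hinl_symm (v : V) : ((g.symm (v, 0)).1, (0 : F)) = g.symm (v, 0) :=
    Prod.ext rfl (hsnd_symm (v, 0)).symm
  let k : V ≃ₗ[F] V := LinearEquiv.ofLinearMap
    (LinearMap.fst F V F ∘ₗ g.toLinearMap ∘ₗ LinearMap.inl F V F)
    (LinearMap.fst F V F ∘ₗ g.symm.toLinearMap ∘ₗ LinearMap.inl F V F)
    (LinearMap.ext fun v => by simp [hinl_symm]) (LinearMap.ext fun v => by simp [hinl])
  refine ⟨k, LinearEquiv.ext fun ⟨v, c⟩ => ?_⟩
  have hvc : ((v, c) : V × F) = (v, 0) + c • (0, 1) := by simp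
  rw [hvc, map_add g, map_smul g, he, ← hinl v]
  simp [k]

lemma range_comp_fixStab_eq_inner :
    ((fixSubgroupProd F V V₀).subtype.comp (fixStab F V V₀)).range
      = (stabilizationDatum V₀).inner _ := by
  ext g
  refine Iff.trans ⟨?_, fun ⟨hV₀, he, hsnd⟩ => ?_⟩
    HyperbolicDatum.mem_fixer_sup_span_sup_span.symm
  · rintro ⟨γ, rfl⟩
    exact ⟨(mem_outer_stabilizationDatum V₀).2 (fixStab F V V₀ γ).2,
      Prod.ext (map_zero (γ : V ≃ₗ[F] V)) rfl, contragredient_smul_eq_iff.2 fun _ => rfl⟩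
  · obtain ⟨k, rfl⟩ := exists_prodCongr_eq (contragredient_smul_eq_iff.1 hsnd) he
    have hk : k ∈ fixSubgroup F V V₀ := fun v hv =>
      congrArg Prod.fst ((mem_outer_stabilizationDatum V₀).1 hV₀ v hv)
    exact ⟨⟨k, hk⟩, rfl⟩

lemma relVanishes_stabilizationDatum [FiniteDimensional F V] {t : F} (ht₀ : t ≠ 0) (ht₁ : t ≠ 1)
    {n : ℕ} (hn : n ≤ Module.finrank F V - Module.finrank F V₀) :
    RelVanishes ((stabilizationDatum V₀).inner_le_outer ((V × F) ≃ₗ[F] (V × F))) n := by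
  refine (IsTransvectionPairing.stabilizerVanishing_and_leftSurjective ht₀ ht₁ n
    isTransvectionPairing_eval).1 _ ((rankGE_eval (V₀.map (LinearMap.inl F V F))).mono ?_)
  rw [finrank_prod_quotient_map_inl]
  exact Nat.succ_le_succ hn

end Stabilization

end HomologyStability

open GroupHomologyBar in
/-- Homological stability for the groups `A(V, V₀)` of automorphisms fixing a subspace
`V₀ ≤ V` pointwise, over a field other than `𝔽₂`: the stabilization map
`A(V, V₀) → A(V ⊕ F, V₀)` induces an isomorphism on integral group homology `H_d` for
`d ≤ dim V - dim V₀ - 1` and a surjection for `d = dim V - dim V₀`. -/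
theorem fix_subgroup_homology_stability (F : Type) [Field F] (hF : ∃ x : F, x ≠ 0 ∧ x ≠ 1)
    (V : Type) [AddCommGroup V] [Module F V] [FiniteDimensional F V] (V₀ : Submodule F V) :
    (∀ d : ℕ, d + 1 + Module.finrank F V₀ ≤ Module.finrank F V →
      Function.Bijective (inducedMap ℤ (fixStab F V V₀) d)) ∧
    Function.Surjective
      (inducedMap ℤ (fixStab F V V₀) (Module.finrank F V - Module.finrank F V₀)) := by
  obtain ⟨t, ht₀, ht₁⟩ := hF
  let ι' := (fixSubgroupProd F V V₀).subtype
  let ι := ι'.comp (fixStab F V V₀)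
  have hι' : Function.Injective ι' := Subtype.val_injective
  have hι : Function.Injective ι := hι'.comp (HomologyStability.fixStab_injective V₀)
  have hrange := HomologyStability.range_comp_fixStab_eq_inner V₀
  have hrange' := HomologyStability.range_subtype_eq_outer V₀
  have vanishing {n : ℕ} := HomologyStability.relVanishes_stabilizationDatum V₀ ht₀ ht₁ (n := n)
  have surjective {n : ℕ} (hn : n ≤ Module.finrank F V - Module.finrank F V₀) :
      Function.Surjective (inducedMap ℤ (fixStab F V V₀) n) :=
    HomologyStability.inducedMap_surjective_of_relVanishes hι hι' (fun _ => rfl) hrange hrange'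
      (vanishing hn)
  have injective {n : ℕ} (hn : n + 1 ≤ Module.finrank F V - Module.finrank F V₀) :
      Function.Injective (inducedMap ℤ (fixStab F V V₀) n) :=
    HomologyStability.inducedMap_injective_of_relVanishes hι (fun _ => rfl) hrange hrange'
      (vanishing hn)
  exact ⟨fun d hd => ⟨injective (by omega), surjective (by omega)⟩, surjective le_rfl⟩
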